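/- arXiv:2208.08756 — 9 statements merged into one kernel-verified Lean document; each statement's English description precedes it below -/
import Mathlib

section
/- Let f >= 2 be an integer and q = 2^f. Then the normal covering number and the weak normal covering number of Sp_4(q) both equal 2: there exist two proper subgroups H and K of Sp_4(q) such that every element of Sp_4(q) is conjugate in Sp_4(q) to an element of H or of K, and there is no proper subgroup L of Sp_4(q) such that every element of Sp_4(q) is mapped into L by some automorphism of Sp_4(q). -/
/-- The symplectic group `Sp_{2m}(F)` of `2m × 2m` matrices over `F` preserving a fixed
nondegenerate alternating bilinear form. -/
abbrev Sp (m : ℕ) (F : Type*) [Field F] : Type _ :=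
  ↥(Matrix.symplecticGroup (Fin m) F)

/-!
Let `q` be even, `V = 𝔽_q⁴` and `ω` the symplectic form.

*Two subgroups suffice.* The quadratic forms polarizing to `ω` are a torsor under the squares of
linear forms, and an element `g` of the symplectic group changes such a form by `ω(·, a)²` with `a`
orthogonal to the fixed vectors of `g`. Hence `a = g⁻¹ w - w` for some `w`, and `g` fixes a
quadratic form (Dye). Since `c ↦ c² + c` has image of index two in `𝔽_q`, these forms fall into at
most two classes under transvections, so the stabilizers of two forms cover the group up to
conjugacy.

*One subgroup does not.* Suppose that every element has an automorphic image in `L`. After applying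
an automorphism, `L` contains a transvection, an element `c` of order `q² + 1`, and an element `z`
of `r`-power order with abelian centralizer, where `r` is a prime divisor of `q + 1`. Identify `V`
with `𝔽_{q⁴}` so that `c` is multiplication by an element of norm one over `𝔽_{q²}`; then
`ω(x, y) = lam (Tr (x^{q²} y))` for a linear form `lam`.
* If `L` contains the transvection along some `a` with `lam (N a) ≠ 1`, each `L`-orbit of nonzero
  vectors has so many norms in `𝔽_{q²}` that it is stable under `𝔽_q`-scalars, and then that it is
  the only one. Thus `L` contains every transvection, so it is the whole group.
* Otherwise `L` preserves the quadratic form `lam ∘ N`, whose `(q² + 1) (q - 1)` nonzero singular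
  vectors are not a multiple of `r` in number, so `z` fixes a nonzero vector `x`. Let `n` be the
  order of `z` and `y = ∑ zⁱ w`, `i < n`, with `ω(x, w) = 1`. The transvections along `x` and `y`
  centralize `z`, hence commute, which forces `0 = ω(x, y) = n`, although `n` is odd.
-/

open Matrix Polynomial

namespace SymplecticCovering

/-! ### Symplectic transvections -/

section Form

variable {l R : Type*} [Fintype l] [DecidableEq l] [CommRing R]

/-- The alternating form on `R^{2l}` preserved by `Matrix.symplecticGroup l R`. -/
noncomputable def symplecticForm : LinearMap.BilinForm R (l ⊕ l → R) :=
  Matrix.toBilin' (J l R)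

local notation "ω" => symplecticForm

lemma symplecticForm_apply (x y : l ⊕ l → R) :
    ω x y = ∑ i, (x (Sum.inr i) * y (Sum.inl i) - x (Sum.inl i) * y (Sum.inr i)) := by
  simp [symplecticForm, Matrix.toBilin'_apply', J, dotProduct, mulVec, fromBlocks,
    Matrix.one_apply, sub_eq_neg_add, Finset.sum_add_distrib]

@[simp]
lemma symplecticForm_self (x : l ⊕ l → R) : ω x x = 0 := by
  simp [symplecticForm_apply, mul_comm]

lemma symplecticForm_swap (x y : l ⊕ l → R) : ω y x = -ω x y := by
  simp [symplecticForm_apply, mul_comm]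

lemma symplecticForm_single_inl (x : l ⊕ l → R) (i : l) :
    ω x (Pi.single (Sum.inl i) 1) = x (Sum.inr i) := by
  simp [symplecticForm_apply, Pi.single_apply]

lemma symplecticForm_single_inr (x : l ⊕ l → R) (i : l) :
    ω x (Pi.single (Sum.inr i) 1) = -x (Sum.inl i) := by
  simp [symplecticForm_apply, Pi.single_apply]

lemma eq_zero_of_symplecticForm_eq_zero {x : l ⊕ l → R} (h : ∀ y, ω x y = 0) : x = 0 := by
  ext (i | i)
  · simpa [symplecticForm_single_inr] using h (Pi.single (Sum.inr i) 1)
  · simpa [symplecticForm_single_inl] using h (Pi.single (Sum.inl i) 1)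

lemma symplecticForm_mulVec (A : Matrix (l ⊕ l) (l ⊕ l) R) (x y : l ⊕ l → R) :
    ω (A *ᵥ x) (A *ᵥ y) = Matrix.toBilin' (Aᵀ * J l R * A) x y := by
  rw [← Matrix.toBilin'_comp]
  rfl

lemma mem_symplecticGroup_iff_forall {A : Matrix (l ⊕ l) (l ⊕ l) R} :
    A ∈ symplecticGroup l R ↔ ∀ x y, ω (A *ᵥ x) (A *ᵥ y) = ω x y := by
  simp_rw [SymplecticGroup.mem_iff', symplecticForm_mulVec, symplecticForm, ← LinearMap.ext_iff₂,
    EmbeddingLike.apply_eq_iff_eq]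

@[simp]
lemma symplecticForm_smul_smul (g : symplecticGroup l R) (x y : l ⊕ l → R) :
    ω (g • x) (g • y) = ω x y :=
  mem_symplecticGroup_iff_forall.mp g.2 x y

lemma symplecticForm_smul_left (g : symplecticGroup l R) (x y : l ⊕ l → R) :
    ω (g • x) y = ω x (g⁻¹ • y) := by
  rw [← symplecticForm_smul_smul g x, smul_inv_smul]

lemma symplecticGroup_ext {g h : symplecticGroup l R} (H : ∀ x : l ⊕ l → R, g • x = h • x) :
    g = h :=
  Subtype.ext (Matrix.ext_iff_smul.mpr H)

/-- The symplectic transvection `x ↦ x + c ω(x, v) v`. -/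
noncomputable def transvection (c : R) (v : l ⊕ l → R) : symplecticGroup l R :=
  ⟨LinearMap.toMatrix' (LinearMap.transvection (c • LinearMap.flip symplecticForm v) v),
    mem_symplecticGroup_iff_forall.mpr fun x y ↦ by
      simp only [LinearMap.toMatrix'_mulVec, LinearMap.transvection.apply, map_add, map_smul,
        LinearMap.add_apply, LinearMap.smul_apply, LinearMap.flip_apply, smul_eq_mul,
        symplecticForm_self, symplecticForm_swap v y]
      ring⟩

@[simp]
lemma transvection_smul (c : R) (v x : l ⊕ l → R) :
    transvection c v • x = x + (c * ω x v) • v := by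
  change LinearMap.toMatrix' _ *ᵥ x = _
  simp [LinearMap.transvection.apply]

lemma conj_transvection (g : symplecticGroup l R) (c : R) (v : l ⊕ l → R) :
    g * transvection c v * g⁻¹ = transvection c (g • v) := by
  refine symplecticGroup_ext fun x ↦ ?_
  rw [mul_smul, mul_smul, transvection_smul, transvection_smul, smul_add, smul_inv_smul,
    symplecticForm_smul_left, inv_inv, smul_comm g]

end Form

section Generation

variable {l F : Type*} [Fintype l] [DecidableEq l] [Field F]

local notation "ω" => symplecticForm

lemma exists_symplecticForm_eq_one {x : l ⊕ l → F} (hx : x ≠ 0) : ∃ y, ω x y = 1 := by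
  obtain ⟨y, hy⟩ : ∃ y, ω x y ≠ 0 := by
    by_contra! h
    exact hx (eq_zero_of_symplecticForm_eq_zero h)
  exact ⟨(ω x y)⁻¹ • y, by simp [hy]⟩

lemma transvection_smul_eq {u w : l ⊕ l → F} (h : ω u w ≠ 0) :
    transvection (ω u w)⁻¹ (w - u) • u = w := by
  simp [h]

lemma transvection_smul_eq_self {u w y : l ⊕ l → F} (c : F) (h : ω y u = ω y w) :
    transvection c (w - u) • y = y := by
  simp [h]

variable {L : Subgroup (symplecticGroup l F)}

lemma exists_mem_smul_eq_of_two_steps (hL : ∀ c v, transvection c v ∈ L) {u x w : l ⊕ l → F}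
    (hux : ω u x ≠ 0) (hxw : ω x w ≠ 0) :
    ∃ t ∈ L, t • u = w ∧ ∀ y, ω y u = ω y x → ω y x = ω y w → t • y = y := by
  refine ⟨transvection (ω x w)⁻¹ (w - x) * transvection (ω u x)⁻¹ (x - u),
    mul_mem (hL _ _) (hL _ _), ?_, fun y hu hw ↦ ?_⟩
  · rw [mul_smul, transvection_smul_eq hux, transvection_smul_eq hxw]
  · rw [mul_smul, transvection_smul_eq_self _ hu, transvection_smul_eq_self _ hw]

lemma exists_mem_smul_eq_of_eq_one (hL : ∀ c v, transvection c v ∈ L) {u v u' v' : l ⊕ l → F}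
    (h : ω u v = 1) (h' : ω u' v' = 1) :
    ∃ t ∈ L, t • u = u' ∧
      ∀ y, ω y u = 0 → ω y v = 0 → ω y u' = 0 → ω y v' = 0 → t • y = y := by
  suffices ∃ x, ω u x ≠ 0 ∧ ω x u' ≠ 0 ∧ ∀ y, ω y v = 0 → ω y v' = 0 → ω y x = 0 by
    obtain ⟨x, hux, hxu', hx⟩ := this
    obtain ⟨t, ht, htu, hty⟩ := exists_mem_smul_eq_of_two_steps hL hux hxu'
    refine ⟨t, ht, htu, fun y hu hv hu' hv' ↦ hty y ?_ ?_⟩ <;> simp [hu, hu', hx y hv hv']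
  by_cases hv : ω u' v = 0
  · by_cases hv' : ω u v' = 0
    · exact ⟨v + v', by simp [h, hv'], by simp [symplecticForm_swap u', hv, h'],
        fun y hy hy' ↦ by simp [hy, hy']⟩
    · exact ⟨v', hv', by simp [symplecticForm_swap u', h'], fun y _ hy' ↦ hy'⟩
  · exact ⟨v, by simp [h], by simp [symplecticForm_swap u', hv], fun y hy _ ↦ hy⟩

lemma exists_mem_smul_eq_fixing (hL : ∀ c v, transvection c v ∈ L) {u v w : l ⊕ l → F}
    (hv : ω u v = 1) (hw : ω u w = 1) :
    ∃ t ∈ L, t • v = w ∧ t • u = u ∧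
      ∀ y, ω y u = 0 → ω y v = 0 → ω y w = 0 → t • y = y := by
  by_cases hvw : ω v w = 0
  · obtain ⟨t, ht, htv, hty⟩ := exists_mem_smul_eq_of_two_steps hL (u := v) (x := v + u) (w := w)
      (by simp [symplecticForm_swap u, hv]) (by simp [hvw, hw])
    exact ⟨t, ht, htv, hty u (by simp) (by simp [hv, hw]),
      fun y hu hv hw ↦ hty y (by simp [hu]) (by simp [hu, hv, hw])⟩
  · exact ⟨_, hL _ _, transvection_smul_eq hvw, transvection_smul_eq_self _ (hv.trans hw.symm),
      fun y _ hv hw ↦ transvection_smul_eq_self _ (hv.trans hw.symm)⟩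

lemma exists_mem_smul_eq_smul_eq (hL : ∀ c v, transvection c v ∈ L) {u v u' v' : l ⊕ l → F}
    (h : ω u v = 1) (h' : ω u' v' = 1) :
    ∃ t ∈ L, t • u = u' ∧ t • v = v' ∧
      ∀ y, ω y u = 0 → ω y v = 0 → ω y u' = 0 → ω y v' = 0 → t • y = y := by
  obtain ⟨s, hs, hsu, hsy⟩ := exists_mem_smul_eq_of_eq_one hL h h'
  obtain ⟨t, ht, htv, htu, hty⟩ := exists_mem_smul_eq_fixing hL (u := u') (v := s • v)
    (by rw [← hsu, symplecticForm_smul_smul, h]) h'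
  refine ⟨t * s, mul_mem ht hs, by rw [mul_smul, hsu, htu], by rw [mul_smul, htv],
    fun y hu hv hu' hv' ↦ ?_⟩
  have hy := hsy y hu hv hu' hv'
  rw [mul_smul, hy, hty y hu' _ hv']
  rw [← hy, symplecticForm_smul_smul, hv]

lemma exists_mem_mul_smul_single_eq (hL : ∀ c v, transvection c v ∈ L)
    (g : symplecticGroup l F) (s : Finset l) :
    ∃ t ∈ L, ∀ i ∈ s, (t * g) • (Pi.single (Sum.inl i) 1 : l ⊕ l → F) = Pi.single (Sum.inl i) 1 ∧
      (t * g) • (Pi.single (Sum.inr i) 1 : l ⊕ l → F) = Pi.single (Sum.inr i) 1 := by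
  induction s using Finset.induction_on with
  | empty => exact ⟨1, L.one_mem, by simp⟩
  | insert j s hj ih =>
    obtain ⟨t, ht, hfix⟩ := ih
    obtain ⟨r, hr, hru, hrv, hry⟩ := exists_mem_smul_eq_smul_eq hL
      (u := (t * g) • Pi.single (Sum.inr j) 1) (v := (t * g) • Pi.single (Sum.inl j) 1)
      (u' := Pi.single (Sum.inr j) 1) (v' := Pi.single (Sum.inl j) 1)
      (by rw [symplecticForm_smul_smul]; simp [symplecticForm_single_inl])
      (by simp [symplecticForm_single_inl])
    have key (y : l ⊕ l → F) (hy : (t * g) • y = y) (hinr : ω y (Pi.single (Sum.inr j) 1) = 0)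
        (hinl : ω y (Pi.single (Sum.inl j) 1) = 0) : (r * (t * g)) • y = y := by
      rw [mul_smul, hy]
      refine hry y ?_ ?_ hinr hinl <;> rw [← hy, symplecticForm_smul_smul] <;> assumption
    refine ⟨r * t, mul_mem hr ht, fun i hi ↦ ?_⟩
    rw [mul_assoc r]
    obtain rfl | hi := Finset.mem_insert.mp hi
    · exact ⟨by rw [mul_smul, hrv], by rw [mul_smul, hru]⟩
    · have hij : i ≠ j := ne_of_mem_of_not_mem hi hj
      constructor
      · apply key _ (hfix i hi).1 <;>
          simp [symplecticForm_single_inl, symplecticForm_single_inr, hij.symm]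
      · apply key _ (hfix i hi).2 <;>
          simp [symplecticForm_single_inl, symplecticForm_single_inr, hij.symm]

theorem eq_top_of_transvection_mem (hL : ∀ c v, transvection c v ∈ L) : L = ⊤ := by
  refine eq_top_iff.mpr fun g _ ↦ ?_
  obtain ⟨t, ht, hfix⟩ := exists_mem_mul_smul_single_eq hL g Finset.univ
  suffices t * g = 1 by
    rw [eq_inv_of_mul_eq_one_right this]
    exact inv_mem ht
  refine Subtype.ext (Matrix.ext_of_mulVec_single fun i ↦ ?_)
  obtain i | i := i
  · exact (hfix i (Finset.mem_univ i)).1.trans (one_mulVec _).symm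
  · exact (hfix i (Finset.mem_univ i)).2.trans (one_mulVec _).symm

end Generation

/-! ### Quadratic forms polarizing to the symplectic form -/

section QuadraticForms

variable {l R : Type*} [Fintype l] [DecidableEq l] [CommRing R]

local notation "ω" => symplecticForm

lemma exists_symplecticForm_eq (φ : Module.Dual R (l ⊕ l → R)) :
    ∃ a, ∀ x, ω x a = φ x := by
  let a : l ⊕ l → R :=
    Sum.elim (fun i ↦ φ (Pi.single (Sum.inr i) 1)) (fun i ↦ -φ (Pi.single (Sum.inl i) 1))
  suffices LinearMap.flip symplecticForm a = φ from ⟨a, LinearMap.congr_fun this⟩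
  refine (Pi.basisFun R (l ⊕ l)).ext fun i ↦ ?_
  rw [LinearMap.flip_apply, symplecticForm_swap]
  obtain i | i := i <;> simp [symplecticForm_single_inl, symplecticForm_single_inr, a]

/-- The quadratic form `∑ xᵢ yᵢ + ω(·, w)²`. In characteristic two these are, over a perfect field,
exactly the quadratic forms that polarize to the symplectic form. -/
noncomputable def polarizedForm (w : l ⊕ l → R) : QuadraticForm R (l ⊕ l → R) :=
  ∑ i, QuadraticMap.proj (Sum.inl i) (Sum.inr i) +
    QuadraticMap.sq.comp (LinearMap.flip symplecticForm w)

lemma polarizedForm_apply (w x : l ⊕ l → R) :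
    polarizedForm w x = ∑ i, x (Sum.inl i) * x (Sum.inr i) + ω x w ^ 2 := by
  simp [polarizedForm, sq]

lemma exists_polarizedForm_eq [Nonempty l] (c : R) :
    ∃ x : l ⊕ l → R, polarizedForm 0 x = c := by
  obtain ⟨i⟩ := ‹Nonempty l›
  refine ⟨Sum.elim (Pi.single i c) (Pi.single i 1), ?_⟩
  simp [polarizedForm_apply, Pi.single_apply]

/-- The subgroup of the symplectic group preserving a given quadratic form. -/
def quadraticStabilizer (Q : QuadraticForm R (l ⊕ l → R)) : Subgroup (symplecticGroup l R) where
  carrier := {g | ∀ x : l ⊕ l → R, Q (g • x) = Q x}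
  mul_mem' ha hb x := by rw [mul_smul, ha, hb]
  one_mem' x := by rw [one_smul]
  inv_mem' {g} hg x := by rw [← hg, smul_inv_smul]

lemma conj_mem_quadraticStabilizer {Q Q' : QuadraticForm R (l ⊕ l → R)}
    {g h : symplecticGroup l R} (hg : g ∈ quadraticStabilizer Q)
    (hh : ∀ x : l ⊕ l → R, Q' (h • x) = Q x) :
    h * g * h⁻¹ ∈ quadraticStabilizer Q' := fun x ↦ by
  rw [mul_smul, mul_smul, hh, hg, ← hh, smul_inv_smul]

variable {Q : QuadraticForm R (l ⊕ l → R)}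

lemma map_transvection_smul (hQ : ∀ x y, QuadraticMap.polar Q x y = ω x y) (c : R)
    (v x : l ⊕ l → R) :
    Q (transvection c v • x) = Q x + (c + c ^ 2 * Q v) * ω x v ^ 2 := by
  rw [transvection_smul, QuadraticMap.map_add Q, hQ, QuadraticMap.map_smul, map_smul, smul_eq_mul]
  ring

variable [CharP R 2]

lemma polar_polarizedForm (w x y : l ⊕ l → R) :
    QuadraticMap.polar (polarizedForm w) x y = ω x y := by
  have key : ∑ i, (x + y) (Sum.inl i) * (x + y) (Sum.inr i) = ∑ i, x (Sum.inl i) * x (Sum.inr i) +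
      ∑ i, y (Sum.inl i) * y (Sum.inr i) + ω x y := by
    simp only [symplecticForm_apply, ← Finset.sum_add_distrib, Pi.add_apply, CharTwo.sub_eq_add]
    exact Finset.sum_congr rfl fun i _ ↦ by ring
  simp only [QuadraticMap.polar, polarizedForm_apply, key, map_add, LinearMap.add_apply,
    CharTwo.add_sq]
  ring

lemma polarizedForm_add (w u x : l ⊕ l → R) :
    polarizedForm (w + u) x = polarizedForm w x + ω x u ^ 2 := by
  simp only [polarizedForm_apply, map_add, CharTwo.add_sq, add_assoc]

end QuadraticForms

section FixedForm

variable {l F : Type*} [Fintype l] [DecidableEq l] [Field F]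

local notation "ω" => symplecticForm

variable {Q : QuadraticForm F (l ⊕ l → F)}

lemma mul_eq_neg_one_of_transvection_mem (hQ : ∀ x y, QuadraticMap.polar Q x y = ω x y)
    {c : F} (hc : c ≠ 0) {v : l ⊕ l → F} (hv : v ≠ 0)
    (h : transvection c v ∈ quadraticStabilizer Q) :
    c * Q v = -1 := by
  obtain ⟨y, hy⟩ := exists_symplecticForm_eq_one hv
  have key := h y
  rw [map_transvection_smul hQ, symplecticForm_swap v y, hy] at key
  apply mul_left_cancel₀ hc
  linear_combination key

lemma quadraticStabilizer_ne_top [Nonempty l] (hF : ∃ c : F, c ≠ 0 ∧ c ≠ 1)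
    (hQ : ∀ x y, QuadraticMap.polar Q x y = ω x y) : quadraticStabilizer Q ≠ ⊤ := by
  intro h
  obtain ⟨c, hc, hc1⟩ := hF
  obtain ⟨v, hv⟩ := exists_ne (0 : l ⊕ l → F)
  have key (d : F) (hd : d ≠ 0) : d * Q v = -1 :=
    mul_eq_neg_one_of_transvection_mem hQ hd hv (h ▸ Subgroup.mem_top _)
  have hQv : Q v = -1 := by simpa using key 1 one_ne_zero
  have := key c hc
  rw [hQv] at this
  exact hc1 (by linear_combination -this)

variable [CharP F 2]

lemma exists_symplecticForm_sq_eq [PerfectRing F 2] (d : (l ⊕ l → F) →ₛₗ[frobenius F 2] F) :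
    ∃ a, ∀ x, ω x a ^ 2 = d x := by
  obtain ⟨a, ha⟩ := exists_symplecticForm_eq
    { toFun x := (frobeniusEquiv F 2).symm (d x)
      map_add' x y := by simp
      map_smul' c x := by simp }
  exact ⟨a, fun x ↦ by simp [ha]⟩

variable [PerfectRing F 2]

/-- Dye's theorem: `g` moves `polarizedForm 0` by the square of `ω(·, a)` for some `a`; this `a` is
orthogonal to the fixed vectors of `g`, hence of the shape `g⁻¹ w - w`. -/
theorem exists_mem_quadraticStabilizer_polarizedForm (g : symplecticGroup l F) :
    ∃ w, g ∈ quadraticStabilizer (polarizedForm w) := by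
  obtain ⟨a, ha⟩ := exists_symplecticForm_sq_eq (F := F) (l := l)
    { toFun x := polarizedForm 0 (g • x) + polarizedForm 0 x
      map_add' x y := by
        simp only [smul_add, QuadraticMap.map_add (polarizedForm _), polar_polarizedForm,
          symplecticForm_smul_smul]
        linear_combination (ω x y) * (CharTwo.two_eq_zero (R := F))
      map_smul' c x := by
        simp only [smul_comm g, QuadraticMap.map_smul, smul_eq_mul, frobenius_def]
        ring }
  replace ha (x : l ⊕ l → F) : ω x a ^ 2 = polarizedForm 0 (g • x) + polarizedForm 0 x := ha x
  obtain ⟨w, hw⟩ : a ∈ LinearMap.range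
      (DistribSMul.toLinearMap F (l ⊕ l → F) g⁻¹ - LinearMap.id) := by
    by_contra hc
    obtain ⟨φ, hφa, hφ⟩ := Submodule.exists_le_ker_of_notMem hc
    obtain ⟨x, hx⟩ := exists_symplecticForm_eq φ
    have hgx : g • x = x := by
      refine sub_eq_zero.mp (eq_zero_of_symplecticForm_eq_zero fun v ↦ ?_)
      have : ω (g⁻¹ • v - v) x = 0 := (hx _).trans (hφ ⟨v, rfl⟩)
      rwa [map_sub, LinearMap.sub_apply, symplecticForm_smul_left, inv_inv, ← map_sub,
        symplecticForm_swap, neg_eq_zero] at this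
    have hxa : ω x a = 0 := by simpa [hgx, CharTwo.add_self_eq_zero] using ha x
    exact hφa (by rw [← hx, symplecticForm_swap, hxa, neg_zero])
  refine ⟨w, fun x ↦ ?_⟩
  have key : (ω (g • x) w - ω x w) ^ 2 = polarizedForm 0 (g • x) + polarizedForm 0 x := by
    rw [← ha, ← hw, symplecticForm_smul_left, ← map_sub]
    rfl
  rw [← zero_add w, polarizedForm_add, polarizedForm_add]
  linear_combination key + (polarizedForm 0 (g • x) - ω x w ^ 2 + ω (g • x) w * ω x w) *
    (CharTwo.two_eq_zero (R := F))

end FixedForm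

section Cover

variable {l F : Type*} [Fintype l] [DecidableEq l] [Field F] [CharP F 2]

local notation "ω" => symplecticForm

variable (F) in
/-- The Artin–Schreier map `c ↦ c² + c`. -/
def artinSchreier : F →+ F :=
  (frobenius F 2 : F →+ F) + AddMonoidHom.id F

lemma artinSchreier_apply (c : F) : artinSchreier F c = c ^ 2 + c :=
  rfl

lemma index_range_artinSchreier [Finite F] : (artinSchreier F).range.index = 2 := by
  have : ((artinSchreier F).ker : Set F) = {0, 1} := by
    ext c
    have : artinSchreier F c = c * (c - 1) := by
      rw [artinSchreier_apply, CharTwo.sub_eq_add]; ring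
    simp [AddMonoidHom.mem_ker, this, sub_eq_zero]
  rw [AddSubgroup.index_range, ← SetLike.coe_sort_coe, this, Nat.card_coe_set_eq,
    Set.ncard_pair zero_ne_one]

lemma exists_polarizedForm_smul_eq {w u : l ⊕ l → F}
    (h : polarizedForm w u ∈ (artinSchreier F).range) :
    ∃ g : symplecticGroup l F, ∀ x : l ⊕ l → F,
      polarizedForm w (g • x) = polarizedForm (w + u) x := by
  obtain ⟨d, hd, hdu⟩ : ∃ d : F, d ≠ 0 ∧ d ^ 2 + d = polarizedForm w u := by
    obtain ⟨d, hd⟩ := h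
    obtain rfl | hd0 := eq_or_ne d 0
    · exact ⟨1, one_ne_zero, by rw [← hd, map_zero, one_pow, CharTwo.add_self_eq_zero]⟩
    · exact ⟨d, hd0, hd⟩
  refine ⟨transvection d⁻¹ u, fun x ↦ ?_⟩
  rw [map_transvection_smul (polar_polarizedForm w), polarizedForm_add, ← hdu]
  field_simp
  linear_combination ω x u ^ 2 * (CharTwo.two_eq_zero (R := F))

lemma polarizedForm_apply_sub (w u : l ⊕ l → F) :
    polarizedForm u (w - u) =
      polarizedForm 0 w + polarizedForm 0 u + artinSchreier F (ω w u) := by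
  obtain ⟨x, rfl⟩ : ∃ x, w = x + u := ⟨w - u, (sub_add_cancel w u).symm⟩
  rw [add_sub_cancel_right, QuadraticMap.map_add (polarizedForm _), polar_polarizedForm, map_add,
    LinearMap.add_apply, symplecticForm_self, add_zero, artinSchreier_apply]
  nth_rw 1 [← zero_add u]
  rw [polarizedForm_add]
  linear_combination (-polarizedForm 0 u - ω x u) * (CharTwo.two_eq_zero (R := F))

theorem exists_two_subgroups_conj_cover [Nonempty l] [Fintype F] (hF : 2 < Fintype.card F) :
    ∃ H K : Subgroup (symplecticGroup l F), H ≠ ⊤ ∧ K ≠ ⊤ ∧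
      ∀ g : symplecticGroup l F, ∃ x : symplecticGroup l F, x * g * x⁻¹ ∈ H ∨ x * g * x⁻¹ ∈ K := by
  obtain ⟨c, hc⟩ : ∃ c, c ∉ (artinSchreier F).range := by
    by_contra! h
    simpa [(AddSubgroup.eq_top_iff' _).mpr h] using index_range_artinSchreier (F := F)
  obtain ⟨u, rfl⟩ := exists_polarizedForm_eq (l := l) c
  have h01 : ∃ c : F, c ≠ 0 ∧ c ≠ 1 := by
    refine ENat.exists_ne_ne_of_three_le ?_ 0 1
    rw [ENat.card_eq_coe_fintype_card]
    exact_mod_cast hF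
  refine ⟨_, _, quadraticStabilizer_ne_top h01 (polar_polarizedForm 0),
    quadraticStabilizer_ne_top h01 (polar_polarizedForm u), fun g ↦ ?_⟩
  obtain ⟨w, hw⟩ := exists_mem_quadraticStabilizer_polarizedForm g
  by_cases h : polarizedForm 0 w ∈ (artinSchreier F).range
  · obtain ⟨x, hx⟩ := exists_polarizedForm_smul_eq h
    rw [zero_add] at hx
    exact ⟨x, Or.inl (conj_mem_quadraticStabilizer hw hx)⟩
  · have hwu : polarizedForm u (w - u) ∈ (artinSchreier F).range := by
      rw [polarizedForm_apply_sub]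
      refine add_mem ((AddSubgroup.add_mem_iff_of_index_two index_range_artinSchreier).mpr ?_)
        ⟨_, rfl⟩
      exact iff_of_false h hc
    obtain ⟨x, hx⟩ := exists_polarizedForm_smul_eq hwu
    rw [add_sub_cancel] at hx
    exact ⟨x, Or.inr (conj_mem_quadraticStabilizer hw hx)⟩

end Cover

/-! ### Elements with palindromic characteristic polynomial -/

section CyclicVector

variable {F V E : Type*} [Field F] [AddCommGroup V] [Ring E] [Algebra F E] [Module E V]
  [FaithfulSMul E V] {a b : E} {v : V}

lemma eq_of_commute_of_smul_eq (hv : ∀ x : V, ∃ p : F[X], aeval a p • v = x) {c : E}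
    (hb : Commute a b) (hc : Commute a c) (h : b • v = c • v) : b = c := by
  refine eq_of_smul_eq_smul (α := V) fun x ↦ ?_
  obtain ⟨p, rfl⟩ := hv x
  have key {d : E} (hd : Commute a d) : d * aeval a p = aeval a p * d :=
    Algebra.commute_of_mem_adjoin_singleton_of_commute (aeval_mem_adjoin_singleton F a) hd.symm
  rw [← mul_smul, ← mul_smul, key hb, key hc, mul_smul, mul_smul, h]

lemma exists_aeval_eq_of_commute (hv : ∀ x : V, ∃ p : F[X], aeval a p • v = x)
    (hb : Commute a b) : ∃ p : F[X], aeval a p = b := by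
  obtain ⟨p, hp⟩ := hv (b • v)
  have hcomm : Commute a (aeval a p) :=
    Algebra.commute_of_mem_adjoin_self (aeval_mem_adjoin_singleton F a)
  exact ⟨p, eq_of_commute_of_smul_eq hv hcomm hb hp⟩

end CyclicVector

section Palindromic

instance {n R : Type*} [Fintype n] [DecidableEq n] [CommSemiring R] :
    FaithfulSMul (Matrix n n R) (n → R) :=
  ⟨Matrix.ext_iff_smul.mpr⟩

variable {F : Type*} [Field F]

/-- A matrix cycling the first basis vector through `e₁ ↦ e₂ ↦ f₁ ↦ f₂ + t f₁`, where `f₁, f₂`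
is the basis dual to `e₁, e₂`; in characteristic two its minimal polynomial is the palindromic
quartic `palindromicPolynomial t n`. -/
def palindromicMatrix (t n : F) : Matrix (Fin 2 ⊕ Fin 2) (Fin 2 ⊕ Fin 2) F :=
  fromBlocks !![0, 0; 1, 0] !![0, 1; 0, t] !![0, 1; 0, 0] !![t, n; 1, 0]

/-- The self-reciprocal quartic `X⁴ + t X³ + n X² + t X + 1`. -/
noncomputable def palindromicPolynomial (t n : F) : F[X] :=
  X ^ 4 + C t * X ^ 3 + C n * X ^ 2 + C t * X + 1

lemma natDegree_palindromicPolynomial (t n : F) : (palindromicPolynomial t n).natDegree = 4 := by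
  unfold palindromicPolynomial
  compute_degree!

lemma palindromicPolynomial_monic (t n : F) : (palindromicPolynomial t n).Monic := by
  unfold palindromicPolynomial
  monicity!

lemma palindromicMatrix_mulVec (t n a b c d : F) :
    palindromicMatrix t n *ᵥ Sum.elim ![a, b] ![c, d] =
      Sum.elim ![d, a + t * d] ![b + t * c + n * d, c] := by
  ext (i | i) <;> fin_cases i <;> simp [palindromicMatrix, mulVec, dotProduct, add_assoc]

lemma aeval_palindromicMatrix_smul (t n a b c d : F) :
    aeval (palindromicMatrix t n) (C a + C b * X + C c * X ^ 2 + C d * X ^ 3) •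
      (Sum.elim ![1, 0] ![0, 0] : Fin 2 ⊕ Fin 2 → F) = Sum.elim ![a, b] ![c + t * d, d] := by
  simp only [map_add, map_mul, aeval_C, aeval_X, ← Algebra.smul_def, add_smul, smul_assoc,
    pow_succ, pow_zero, one_mul, mul_smul, algebraMap_smul, smul_eq_mulVec,
    palindromicMatrix_mulVec]
  ext (i | i) <;> fin_cases i <;> simp [mul_comm]

lemma palindromicMatrix_cyclic (t n : F) (x : Fin 2 ⊕ Fin 2 → F) :
    ∃ p : F[X], aeval (palindromicMatrix t n) p •
      (Sum.elim ![1, 0] ![0, 0] : Fin 2 ⊕ Fin 2 → F) = x := by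
  refine ⟨_, (aeval_palindromicMatrix_smul t n (x (.inl 0)) (x (.inl 1))
    (x (.inr 0) - t * x (.inr 1)) (x (.inr 1))).trans ?_⟩
  ext (i | i) <;> fin_cases i <;> simp

variable [CharP F 2]

/-- The element of `Sp₄(F)` given by `palindromicMatrix`. -/
def palindromicElement (t n : F) : symplecticGroup (Fin 2) F :=
  ⟨palindromicMatrix t n, by
    rw [palindromicMatrix, SymplecticGroup.fromBlocks_mem_iff]
    refine ⟨?_, ?_, ?_⟩ <;> ext i j <;> fin_cases i <;> fin_cases j <;>
      simp [mul_apply, CharTwo.neg_eq, CharTwo.add_self_eq_zero]⟩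

lemma commute_of_commute_palindromicElement {t n : F} {g h : symplecticGroup (Fin 2) F}
    (hg : Commute (palindromicElement t n) g) (hh : Commute (palindromicElement t n) h) :
    Commute g h := by
  have val {k : symplecticGroup (Fin 2) F} (hk : Commute (palindromicElement t n) k) :
      Commute (palindromicMatrix t n) k.1 := congrArg Subtype.val hk
  obtain ⟨p, hp⟩ := exists_aeval_eq_of_commute (palindromicMatrix_cyclic t n) (val hg)
  refine Subtype.ext (?_ : g.1 * h.1 = h.1 * g.1)
  rw [← hp]
  exact (Algebra.commute_of_mem_adjoin_singleton_of_commute (aeval_mem_adjoin_singleton F _)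
    (val hh).symm).symm

lemma aeval_palindromicPolynomial (t n : F) :
    aeval (palindromicMatrix t n) (palindromicPolynomial t n) = 0 := by
  refine eq_of_commute_of_smul_eq (palindromicMatrix_cyclic t n) (Algebra.commute_of_mem_adjoin_self
    (aeval_mem_adjoin_singleton F _)) (Commute.zero_right _) ?_
  simp only [palindromicPolynomial, map_add, map_mul, map_one, aeval_C, aeval_X,
    ← Algebra.smul_def, add_smul, smul_assoc, pow_succ, pow_zero, one_mul, one_smul, mul_smul,
    smul_eq_mulVec, palindromicMatrix_mulVec, zero_smul]
  have h2 := CharTwo.two_eq_zero (R := F)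
  ext (i | i) <;> fin_cases i <;> simp
  · linear_combination h2
  · linear_combination t * h2
  · linear_combination (t ^ 2 + n) * h2
  · linear_combination t * h2

lemma minpoly_palindromicMatrix (t n : F) :
    minpoly F (palindromicMatrix t n) = palindromicPolynomial t n := by
  refine (minpoly.unique' F _ (palindromicPolynomial_monic t n)
    (aeval_palindromicPolynomial t n) fun p hp ↦ ?_).symm
  by_contra! ⟨hp0, h⟩
  have hp4 : p.natDegree < 4 :=
    natDegree_palindromicPolynomial t n ▸ natDegree_lt_natDegree hp0 hp
  have hsum : p = C (p.coeff 0) + C (p.coeff 1) * X + C (p.coeff 2) * X ^ 2 +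
      C (p.coeff 3) * X ^ 3 := by
    conv_lhs => rw [p.as_sum_range' 4 hp4]
    simp [Finset.sum_range_succ, ← C_mul_X_pow_eq_monomial]
  have hv := aeval_palindromicMatrix_smul t n (p.coeff 0) (p.coeff 1) (p.coeff 2) (p.coeff 3)
  rw [← hsum, h, zero_smul] at hv
  have h0 : 0 = p.coeff 0 := congrFun hv (.inl 0)
  have h1 : 0 = p.coeff 1 := congrFun hv (.inl 1)
  have h2 : 0 = p.coeff 2 + t * p.coeff 3 := congrFun hv (.inr 0)
  have h3 : 0 = p.coeff 3 := congrFun hv (.inr 1)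
  rw [← h3, mul_zero, add_zero] at h2
  exact hp0 (by rw [hsum, ← h0, ← h1, ← h2, ← h3]; simp)

end Palindromic

section ElementOrders

variable {F K : Type*} [Field F] [Field K] [Algebra F K]

variable (F) in
lemma add_pow_card [Fintype F] (x y : K) :
    (x + y) ^ Fintype.card F = x ^ Fintype.card F + y ^ Fintype.card F :=
  map_add (FiniteField.frobeniusAlgHom F K) x y

lemma mem_range_algebraMap_of_pow_card_eq [Fintype F] {x : K} (hx : x ^ Fintype.card F = x) :
    x ∈ (algebraMap F K).range := by
  have hdeg : 1 < Fintype.card F := Fintype.one_lt_card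
  have haeval : aeval x (X ^ Fintype.card F - X : F[X]) = 0 := by simp [hx]
  have hne : (X ^ Fintype.card F - X : F[X]) ≠ 0 := FiniteField.X_pow_card_sub_X_ne_zero F hdeg
  have hsplits : (X ^ Fintype.card F - X : F[X]).Splits := by
    rw [splits_iff_card_roots, FiniteField.roots_X_pow_card_sub_X,
      FiniteField.X_pow_card_sub_X_natDegree_eq F hdeg]
    rfl
  have hint : IsIntegral F x :=
    ⟨_, monic_X_pow_sub (degree_X.trans_lt (by exact_mod_cast hdeg)), haeval⟩
  refine hint.mem_range_algebraMap_of_minpoly_splits ?_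
  rw [Algebra.algebraMap_self, Polynomial.map_id]
  exact hsplits.of_dvd hne (minpoly.dvd F x haeval)

variable [CharP F 2]

lemma map_palindromicPolynomial {t n : F} {a b : K} (ha : a ≠ 0) (hb : b ≠ 0)
    (ht : algebraMap F K t = a + a⁻¹ + (b + b⁻¹))
    (hn : algebraMap F K n = (a + a⁻¹) * (b + b⁻¹)) :
    (palindromicPolynomial t n).map (algebraMap F K) =
      (Multiset.map (fun x ↦ X - C x) {a, a⁻¹, b, b⁻¹}).prod := by
  have : CharP K 2 := charP_of_injective_algebraMap (algebraMap F K).injective 2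
  have quad {c : K} (hc : c ≠ 0) : (X - C c) * (X - C c⁻¹) = X ^ 2 + C (c + c⁻¹) * X + 1 := by
    have h : (C c * C c⁻¹ : K[X]) = 1 := by rw [← C_mul, mul_inv_cancel₀ hc, C_1]
    rw [CharTwo.sub_eq_add, CharTwo.sub_eq_add, C_add]
    linear_combination h
  simp only [palindromicPolynomial, Polynomial.map_add, Polynomial.map_mul, Polynomial.map_pow,
    map_X, map_C, Polynomial.map_one, Multiset.insert_eq_cons, Multiset.map_cons,
    Multiset.map_singleton, Multiset.prod_cons, Multiset.prod_singleton, ht, hn]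
  rw [← mul_assoc, quad ha, quad hb, C_add, C_mul]
  linear_combination -X ^ 2 * CharTwo.two_eq_zero (R := K[X])

lemma palindromicMatrix_pow_eq_one_iff {t n : F} {a b : K} (ha : a ≠ 0) (hb : b ≠ 0)
    (hab : ({a, a⁻¹, b, b⁻¹} : Multiset K).Nodup)
    (ht : algebraMap F K t = a + a⁻¹ + (b + b⁻¹))
    (hn : algebraMap F K n = (a + a⁻¹) * (b + b⁻¹)) {k : ℕ} (hk : k ≠ 0) :
    palindromicMatrix t n ^ k = 1 ↔ a ^ k = 1 ∧ b ^ k = 1 := by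
  have hne : (X ^ k - 1 : K[X]) ≠ 0 := X_pow_sub_C_ne_zero (by lia) 1
  calc palindromicMatrix t n ^ k = 1
      ↔ palindromicPolynomial t n ∣ X ^ k - 1 := by
        rw [← minpoly_palindromicMatrix, minpoly.dvd_iff]
        simp [sub_eq_zero]
    _ ↔ (Multiset.map (fun x ↦ X - C x) {a, a⁻¹, b, b⁻¹}).prod ∣ (X ^ k - 1 : K[X]) := by
        rw [← Polynomial.map_dvd_map' (algebraMap F K), map_palindromicPolynomial ha hb ht hn]
        simp
    _ ↔ a ^ k = 1 ∧ b ^ k = 1 := by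
        rw [Multiset.prod_X_sub_C_dvd_iff_le_roots hne, Multiset.le_iff_subset hab]
        simp [Multiset.cons_subset, hne, sub_eq_zero]

lemma orderOf_palindromicElement {t n : F} {a : K} {N m : ℕ} (ha : IsPrimitiveRoot a N)
    (hm : 2 ≤ m) (hN : 2 * m < N) (ht : algebraMap F K t = a + a⁻¹ + (a ^ m + (a ^ m)⁻¹))
    (hn : algebraMap F K n = (a + a⁻¹) * (a ^ m + (a ^ m)⁻¹)) :
    orderOf (palindromicElement t n) = N := by
  have ha0 : a ≠ 0 := ha.ne_zero (by lia)
  have hnodup : ({a, a⁻¹, a ^ m, (a ^ m)⁻¹} : Multiset K).Nodup := by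
    have inv_pow_eq {k : ℕ} (hk : k ≤ N) : (a ^ k)⁻¹ = a ^ (N - k) :=
      inv_eq_of_mul_eq_one_right (by rw [← pow_add, Nat.add_sub_cancel' hk, ha.pow_eq_one])
    have inj {i j : ℕ} (hi : i < N) (hj : j < N) : a ^ i = a ^ j ↔ i = j :=
      ⟨ha.pow_inj hi hj, congrArg _⟩
    have hinv : a⁻¹ = a ^ (N - 1) := by simpa using inv_pow_eq (k := 1) (by lia)
    rw [hinv, inv_pow_eq (by lia)]
    nth_rw 1 [← pow_one a]
    simp only [Multiset.insert_eq_cons, Multiset.nodup_cons, Multiset.mem_cons,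
      Multiset.mem_singleton, Multiset.nodup_singleton, and_true, not_or]
    refine ⟨⟨?_, ?_, ?_⟩, ⟨?_, ?_⟩, ?_⟩ <;> rw [inj (by lia) (by lia)] <;> lia
  rw [ha.eq_orderOf]
  refine orderOf_eq_orderOf_iff.mpr fun k ↦ ?_
  rcases eq_or_ne k 0 with rfl | hk
  · simp
  · rw [Subtype.ext_iff]
    refine (palindromicMatrix_pow_eq_one_iff ha0 (pow_ne_zero m ha0) hnodup ht hn hk).trans ?_
    exact ⟨And.left, fun h ↦ ⟨h, by rw [pow_right_comm, h, one_pow]⟩⟩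

variable (F)

lemma exists_primitiveRoot_algebraicClosure {N : ℕ} (hN : Odd N) :
    ∃ a : AlgebraicClosure F, IsPrimitiveRoot a N := by
  have : CharP (AlgebraicClosure F) 2 := charP_of_injective_algebraMap (algebraMap F _).injective 2
  have : NeZero (N : AlgebraicClosure F) :=
    ⟨by rwa [Ne, CharP.cast_eq_zero_iff _ 2, ← even_iff_two_dvd, Nat.not_even_iff_odd]⟩
  exact HasEnoughRootsOfUnity.exists_primitiveRoot _ N

variable [Fintype F]

lemma even_card : Even (Fintype.card F) :=
  Nat.even_iff.mpr (FiniteField.even_card_of_char_two (ringChar.eq F 2))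

lemma exists_orderOf_palindromicElement {a : K} {N m : ℕ} (ha : IsPrimitiveRoot a N)
    (hm : 2 ≤ m) (hN : 2 * m < N)
    (ht : (a + a⁻¹ + (a ^ m + (a ^ m)⁻¹)) ^ Fintype.card F = a + a⁻¹ + (a ^ m + (a ^ m)⁻¹))
    (hn : ((a + a⁻¹) * (a ^ m + (a ^ m)⁻¹)) ^ Fintype.card F =
      (a + a⁻¹) * (a ^ m + (a ^ m)⁻¹)) :
    ∃ t n : F, orderOf (palindromicElement t n) = N := by
  obtain ⟨t, ht⟩ := mem_range_algebraMap_of_pow_card_eq ht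
  obtain ⟨n, hn⟩ := mem_range_algebraMap_of_pow_card_eq hn
  exact ⟨t, n, orderOf_palindromicElement ha hm hN ht hn⟩

theorem exists_orderOf_palindromicElement_eq_sq_add_one :
    ∃ t n : F, orderOf (palindromicElement t n) = Fintype.card F ^ 2 + 1 := by
  obtain ⟨a, ha⟩ := exists_primitiveRoot_algebraicClosure F
    ((even_card F).pow_of_ne_zero two_ne_zero).add_one
  have hadd := add_pow_card F (K := AlgebraicClosure F)
  have hq1 : 1 < Fintype.card F := Fintype.one_lt_card
  set q := Fintype.card F
  have hinv : (a ^ q) ^ q = a⁻¹ := by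
    rw [← pow_mul, ← sq]
    exact eq_inv_of_mul_eq_one_left (by rw [← pow_succ, ha.pow_eq_one])
  have hβ : (a + a⁻¹) ^ q = a ^ q + (a ^ q)⁻¹ := by rw [hadd, inv_pow]
  have hδ : (a ^ q + (a ^ q)⁻¹) ^ q = a + a⁻¹ := by rw [hadd, inv_pow, hinv, inv_inv, add_comm]
  refine exists_orderOf_palindromicElement F ha hq1 (by nlinarith) ?_ ?_
  · rw [hadd, hβ, hδ, add_comm]
  · rw [mul_pow, hβ, hδ, mul_comm]

theorem exists_orderOf_palindromicElement_eq_of_dvd {N : ℕ} (hN : N ∣ Fintype.card F + 1)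
    (h5 : 5 ≤ N) : ∃ t n : F, orderOf (palindromicElement t n) = N := by
  obtain ⟨a, ha⟩ := exists_primitiveRoot_algebraicClosure F ((even_card F).add_one.of_dvd_nat hN)
  have hadd := add_pow_card F (K := AlgebraicClosure F)
  set q := Fintype.card F
  have hinv : a ^ q = a⁻¹ :=
    eq_inv_of_mul_eq_one_left (by rw [← pow_succ, (ha.pow_eq_one_iff_dvd _).mpr hN])
  have hβ : (a + a⁻¹) ^ q = a + a⁻¹ := by rw [hadd, inv_pow, hinv, inv_inv, add_comm]
  have hδ : (a ^ 2 + (a ^ 2)⁻¹) ^ q = a ^ 2 + (a ^ 2)⁻¹ := by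
    rw [hadd, inv_pow, pow_right_comm, hinv, inv_pow, inv_inv, add_comm]
  refine exists_orderOf_palindromicElement F ha le_rfl (by lia) ?_ ?_
  · rw [hadd, hβ, hδ]
  · rw [mul_pow, hβ, hδ]

end ElementOrders

lemma exists_prime_pow_dvd_add_one {q : ℕ} (hq : Even q) (h4 : 4 ≤ q) :
    ∃ r k : ℕ, r.Prime ∧ k ≠ 0 ∧ r ^ k ∣ q + 1 ∧ 5 ≤ r ^ k := by
  by_cases h : ∃ r : ℕ, r.Prime ∧ r ∣ q + 1 ∧ 5 ≤ r
  · obtain ⟨r, hr, hd, h5⟩ := h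
    exact ⟨r, 1, hr, one_ne_zero, by simpa using hd, by simpa using h5⟩
  · push Not at h
    have eq_three {d : ℕ} (hd : d.Prime) (hdq : d ∣ q + 1) : d = 3 := by
      have hodd : Odd d := hq.add_one.of_dvd_nat hdq
      have hd5 := h d hd hdq
      have hd2 := hd.two_le
      interval_cases d <;> simp_all +decide
    have hpow := Nat.eq_prime_pow_of_unique_prime_dvd q.succ_ne_zero eq_three
    refine ⟨3, _, Nat.prime_three, fun h0 ↦ ?_, hpow.symm.dvd, by rw [← hpow]; lia⟩
    rw [Nat.succ_eq_add_one, h0] at hpow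
    lia

/-! ### Norm and trace from `𝔽_{q⁴}` to `𝔽_{q²}` -/

section SumFree

lemma two_mul_card_le_of_sumFree {A : Type*} [AddGroup A] [Fintype A] (Y : Finset A)
    (hY : ∀ x ∈ Y, ∀ y ∈ Y, x + y ∉ Y) : 2 * Y.card ≤ Fintype.card A := by
  classical
  rcases Y.eq_empty_or_nonempty with rfl | ⟨x, hx⟩
  · simp
  have hdisj : Disjoint Y (Y.map (addLeftEmbedding x)) := by
    simp only [Finset.disjoint_left, Finset.mem_map, addLeftEmbedding_apply]
    rintro _ hy ⟨y, hy', rfl⟩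
    exact hY x hx y hy' hy
  calc 2 * Y.card = (Y ∪ Y.map (addLeftEmbedding x)).card := by
        rw [Finset.card_union_of_disjoint hdisj, Finset.card_map, two_mul]
    _ ≤ Fintype.card A := Finset.card_le_univ _

variable {K : Type*} [Field K] [CharP K 2]

/-- If `X` has norm `M` and trace `e`, then `y = X / e` has trace `1` and `y² + y = M e⁻²`. The
sum `Y` of three such `y` with `e₃⁻¹ = e₁⁻¹ + e₂⁻¹` would satisfy `Y² + Y = 0`, so `Y` would be
`0` or `1` and have trace `0 ≠ 3`. -/
lemma inv_trace_ne_add_of_norm_eq {τ : K →+* K} (hτ : Function.Involutive τ) {x y z M : K}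
    (hx : x * τ x = M) (hy : y * τ y = M) (hz : z * τ z = M)
    (hx0 : x + τ x ≠ 0) (hy0 : y + τ y ≠ 0) (hz0 : z + τ z ≠ 0) :
    (x + τ x)⁻¹ + (y + τ y)⁻¹ ≠ (z + τ z)⁻¹ := by
  intro h
  have h2 := CharTwo.two_eq_zero (R := K)
  have quad {x : K} (hM : x * τ x = M) (h0 : x + τ x ≠ 0) :
      (x / (x + τ x)) ^ 2 + x / (x + τ x) = M * (x + τ x)⁻¹ ^ 2 := by
    rw [← hM]
    field_simp
    linear_combination x ^ 2 * h2
  have trace {x : K} (h0 : x + τ x ≠ 0) : x / (x + τ x) + τ (x / (x + τ x)) = 1 := by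
    rw [map_div₀, map_add, hτ, add_comm (τ x), ← add_div, div_self h0]
  set Y := x / (x + τ x) + y / (y + τ y) + z / (z + τ z) with hY
  have hYtrace : Y + τ Y = 1 := by
    rw [hY, map_add, map_add]
    linear_combination trace hx0 + trace hy0 + trace hz0 + h2
  have hYquad : Y * (Y + 1) = 0 := by
    have hquad := quad hz hz0
    rw [← h] at hquad
    linear_combination quad hx hx0 + quad hy hy0 + hquad
      + (x / (x + τ x) * (y / (y + τ y)) + x / (x + τ x) * (z / (z + τ z))
        + y / (y + τ y) * (z / (z + τ z))
        + M * ((x + τ x)⁻¹ ^ 2 + (y + τ y)⁻¹ ^ 2 + (x + τ x)⁻¹ * (y + τ y)⁻¹)) * h2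
  rcases mul_eq_zero.mp hYquad with h | h
  · simp [h] at hYtrace
  · simp [CharTwo.add_eq_zero.mp h, CharTwo.add_self_eq_zero] at hYtrace

end SumFree

section Hermitian

lemma card_filter_pow_eq {K : Type*} [Field K] [Fintype K] [DecidableEq K] {n m : ℕ}
    (h : n * m = Fintype.card K - 1) {y : K} (hy : y ^ m = 1) :
    (Finset.univ.filter fun x : K ↦ x ^ n = y).card = n := by
  obtain ⟨ζ, hζ⟩ := IsCyclic.exists_ofOrder_eq_natCard (α := Kˣ)
  have hpos : 0 < n * m := h ▸ Nat.sub_pos_of_lt Fintype.one_lt_card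
  have hn : 0 < n := Nat.pos_of_mul_pos_right hpos
  have hm : 0 < m := Nat.pos_of_mul_pos_left hpos
  have hprim : IsPrimitiveRoot (ζ : K) (n * m) := by
    rw [h, ← Fintype.card_units, ← Nat.card_eq_fintype_card, ← hζ, ← orderOf_units]
    exact .orderOf _
  have : NeZero m := ⟨hm.ne'⟩
  obtain ⟨i, -, hi⟩ := (hprim.pow hpos rfl).eq_pow_of_pow_eq_one hy
  have hprim' := hprim.pow hpos (mul_comm n m)
  have hy0 : y ≠ 0 := by rintro rfl; simp [hm.ne'] at hy
  calc (Finset.univ.filter fun x : K ↦ x ^ n = y).card = (nthRoots n y).toFinset.card := by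
        congr 1; ext x; simp [mem_nthRoots hn]
    _ = n := by
        rw [Multiset.toFinset_card_of_nodup (hprim'.nthRoots_nodup hy0), hprim'.card_nthRoots,
          if_pos ⟨(ζ : K) ^ i, by rw [← hi, pow_right_comm]⟩]

variable (F K : Type*) [Field F] [Fintype F] [Field K] [Algebra F K]

/-- The automorphism `x ↦ x ^ q²` of an extension of `F = 𝔽_q`; for an extension of degree `4` it
is the involution with fixed field `𝔽_{q²}`. -/
def conj : K →ₐ[F] K := FiniteField.frobeniusAlgHom F K ^ 2

/-- The norm `x ↦ x ^ (q² + 1)` from `𝔽_{q⁴}` to `𝔽_{q²}`, with values in `K = 𝔽_{q⁴}`. -/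
def relNorm : K →*₀ K :=
  MonoidWithZeroHom.id K * (conj F K).toRingHom.toMonoidWithZeroHom

/-- The trace from `𝔽_{q⁴}` to `𝔽_{q²}`, with values in `K = 𝔽_{q⁴}`. -/
def relTrace : K →ₗ[F] K := LinearMap.id + (conj F K).toLinearMap

/-- The fixed field `𝔽_{q²}` of `conj F K`, as a subspace of `K`. -/
def conjFixed : Submodule F K := LinearMap.eqLocus (conj F K).toLinearMap LinearMap.id

variable {K}

local notation "q" => Fintype.card F
local notation "σ" => conj F K
local notation "N" => relNorm F K
local notation "T" => relTrace F K

lemma conj_apply (x : K) : σ x = x ^ q ^ 2 := by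
  simp [conj, pow_two, AlgHom.mul_apply, pow_mul]

lemma relNorm_apply (x : K) : N x = x * σ x := rfl

lemma relTrace_apply (x : K) : T x = x + σ x := rfl

lemma mem_conjFixed {x : K} : x ∈ conjFixed F K ↔ σ x = x := Iff.rfl

lemma relNorm_eq_pow (x : K) : N x = x ^ (q ^ 2 + 1) := by
  rw [relNorm_apply, conj_apply, pow_succ' x]

lemma relNorm_ne_zero {x : K} (hx : x ≠ 0) : N x ≠ 0 := by
  rw [relNorm_eq_pow]; exact pow_ne_zero _ hx

variable (hK : Module.finrank F K = 4)

include hK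

omit [Fintype F] in
lemma finite_of_finrank_eq_four [Finite F] : Finite K :=
  have := Module.finite_of_finrank_eq_succ hK
  Module.finite_of_finite F

lemma conj_involutive : Function.Involutive σ := by
  have := finite_of_finrank_eq_four F hK
  have h : σ ^ 2 = 1 := by
    rw [conj, ← pow_mul, show 2 * 2 = Module.finrank F K from hK.symm,
      ← FiniteField.orderOf_frobeniusAlgHom, pow_orderOf_eq_one]
  intro x
  rw [← AlgHom.mul_apply, ← pow_two, h, AlgHom.one_apply]

lemma conj_relNorm (x : K) : σ (N x) = N x := by
  rw [relNorm_apply, map_mul, conj_involutive F hK, mul_comm]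

lemma conj_relTrace (x : K) : σ (T x) = T x := by
  rw [relTrace_apply, map_add, conj_involutive F hK, add_comm]

lemma relNorm_add_smul (b a : K) (c : F) :
    N (b + c • a) = N b + c • T (σ b * a) + c ^ 2 • N a := by
  simp only [relNorm_apply, relTrace_apply, map_add, map_mul, conj_involutive F hK _,
    Algebra.smul_def, map_pow, AlgHom.commutes]
  ring

lemma card_eq_pow_four [Fintype K] : Fintype.card K = q ^ 4 := by
  rw [Module.card_eq_pow_finrank (K := F), hK]

lemma card_filter_relNorm_eq [Fintype K] [DecidableEq K] {M : K} (hM : M ∈ conjFixed F K)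
    (hM0 : M ≠ 0) :
    (Finset.univ.filter fun x : K ↦ N x = M).card = q ^ 2 + 1 := by
  simp_rw [relNorm_eq_pow]
  refine card_filter_pow_eq (m := q ^ 2 - 1) ?_ (mul_right_cancel₀ hM0 ?_)
  · rw [card_eq_pow_four F hK, ← Nat.sq_sub_sq, ← pow_mul, one_pow]
  · rw [← pow_succ, Nat.sub_add_cancel (Nat.pow_pos Fintype.card_pos), one_mul,
      ← conj_apply, (mem_conjFixed F).mp hM]

lemma finrank_conjFixed : Module.finrank F (conjFixed F K) = 2 := by
  classical
  have := finite_of_finrank_eq_four F hK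
  have := Fintype.ofFinite K
  have hq : 1 ≤ q ^ 2 := Nat.pow_pos Fintype.card_pos
  have hq' : 1 < q ^ 2 := Nat.one_lt_pow two_ne_zero Fintype.one_lt_card
  have hset : (conjFixed F K : Set K) =
      ↑(insert 0 (Finset.univ.filter fun x : K ↦ x ^ (q ^ 2 - 1) = 1)) := by
    ext x
    by_cases hx : x = 0
    · simp [hx, zero_mem]
    · rw [SetLike.mem_coe, mem_conjFixed, conj_apply, ← Nat.sub_add_cancel hq, pow_succ]
      simp [hx]
  have hmul : (q ^ 2 - 1) * (q ^ 2 + 1) = Fintype.card K - 1 := by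
    rw [card_eq_pow_four F hK, mul_comm, ← Nat.sq_sub_sq, ← pow_mul, one_pow]
  have hcard : Nat.card (conjFixed F K) = q ^ 2 := by
    rw [← SetLike.coe_sort_coe, Nat.card_coe_set_eq, hset, Set.ncard_coe_finset,
      Finset.card_insert_of_notMem (by simp [(Nat.sub_pos_of_lt hq').ne']),
      card_filter_pow_eq hmul (one_pow _), Nat.sub_add_cancel hq]
  rw [Module.natCard_eq_pow_finrank (K := F), Nat.card_eq_fintype_card] at hcard
  exact Nat.pow_right_injective Fintype.one_lt_card hcard

variable {lam : Module.Dual F K} (hlam : ∃ e ∈ conjFixed F K, lam e ≠ 0)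

include hlam

lemma finrank_conjFixed_inf_ker :
    Module.finrank F (conjFixed F K ⊓ LinearMap.ker lam : Submodule F K) = 1 := by
  have := Module.finite_of_finrank_eq_succ hK
  have hne : lam.domRestrict (conjFixed F K) ≠ 0 := by
    obtain ⟨e, he, hlam⟩ := hlam
    exact fun h ↦ hlam (LinearMap.congr_fun h ⟨e, he⟩)
  have := Module.Dual.finrank_ker_add_one_of_ne_zero hne
  rw [finrank_conjFixed F hK, LinearMap.ker_domRestrict, ← Submodule.finrank_map_subtype_eq,
    Submodule.map_comap_subtype] at this
  exact Nat.succ_injective this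

lemma exists_forall_mem_conjFixed_eq_smul :
    ∃ d ∈ conjFixed F K, ∀ e ∈ conjFixed F K, lam e = 0 → ∃ c : F, c • d = e := by
  obtain ⟨⟨d, hd⟩, -, h⟩ := finrank_eq_one_iff'.mp (finrank_conjFixed_inf_ker F hK hlam)
  exact ⟨d, hd.1, fun e he he0 ↦ (h ⟨e, he, he0⟩).imp fun c ↦ congrArg Subtype.val⟩

lemma card_filter_ne_zero_and_relNorm_eq_zero [Fintype K] [DecidableEq K] [DecidableEq F] :
    (Finset.univ.filter fun x : K ↦ x ≠ 0 ∧ lam (N x) = 0).card = (q ^ 2 + 1) * (q - 1) := by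
  let S := Finset.univ.filter fun e : K ↦ e ≠ 0 ∧ σ e = e ∧ lam e = 0
  have hS : S.card = q - 1 := by
    have hset : insert 0 S = ((conjFixed F K ⊓ LinearMap.ker lam : Submodule F K) : Set K) := by
      ext e
      by_cases he : e = 0 <;> simp [S, he, mem_conjFixed]
    have hcard := Set.ncard_coe_finset (insert 0 S)
    rw [hset, Finset.card_insert_of_notMem (by simp [S]), ← Nat.card_coe_set_eq,
      SetLike.coe_sort_coe, Module.natCard_eq_pow_finrank (K := F),
      finrank_conjFixed_inf_ker F hK hlam, pow_one, Nat.card_eq_fintype_card] at hcard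
    omega
  rw [Finset.card_eq_sum_card_fiberwise (f := N) (t := S), Finset.sum_const_nat (m := q ^ 2 + 1),
    hS, mul_comm]
  · intro e he
    obtain ⟨he0, heσ, he⟩ := (Finset.mem_filter_univ e).mp he
    rw [← card_filter_relNorm_eq F hK heσ he0, Finset.filter_filter]
    refine congrArg Finset.card (Finset.filter_congr fun x _ ↦ and_iff_right_of_imp ?_)
    rintro rfl
    exact ⟨by rintro rfl; simp [relNorm_apply] at he0, he⟩
  · intro x hx
    obtain ⟨hx0, hx⟩ := (Finset.mem_filter_univ x).mp hx
    simpa [S] using ⟨hx0, conj_relNorm F hK x, hx⟩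

variable [CharP K 2]

lemma two_mul_card_filter_relTrace_le [Fintype K] [DecidableEq K] [DecidableEq F] (M : K) :
    2 * (Finset.univ.filter fun e : K ↦ e ≠ 0 ∧ lam e = 0 ∧ ∃ x, N x = M ∧ T x = e).card ≤ q := by
  obtain ⟨d, -, hd⟩ := exists_forall_mem_conjFixed_eq_smul F hK hlam
  let Y := Finset.univ.filter fun c : F ↦ c ≠ 0 ∧ ∃ x, N x = M ∧ T x = c⁻¹ • d ∧ T x ≠ 0
  refine le_trans (Nat.mul_le_mul_left 2 ?_) (two_mul_card_le_of_sumFree Y ?_)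
  · refine (Finset.card_le_card ?_).trans (Y.card_image_le (f := fun c ↦ c⁻¹ • d))
    intro e he
    obtain ⟨he0, he, x, hx, rfl⟩ := (Finset.mem_filter_univ e).mp he
    obtain ⟨c, hc⟩ := hd _ (conj_relTrace F hK x) he
    have hc0 : c ≠ 0 := by rintro rfl; exact he0 (by rw [← hc, zero_smul])
    simp only [Finset.mem_image, Y, Finset.mem_filter_univ]
    exact ⟨c⁻¹, ⟨inv_ne_zero hc0, x, hx, by rw [inv_inv, hc], he0⟩, by rw [inv_inv, hc]⟩
  · simp only [Y, Finset.mem_filter_univ]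
    rintro c ⟨-, x, hx, hxc, hx0⟩ c' ⟨-, y, hy, hyc, hy0⟩ ⟨-, z, hz, hzc, hz0⟩
    refine inv_trace_ne_add_of_norm_eq (τ := (conj F K : K →+* K)) (conj_involutive F hK)
      hx hy hz hx0 hy0 hz0 ?_
    have hinv {c : F} {x : K} (h : T x = c⁻¹ • d) : (T x)⁻¹ = c • d⁻¹ := by
      rw [h, Algebra.smul_def, Algebra.smul_def, mul_inv, map_inv₀, inv_inv]
    exact (congrArg₂ _ (hinv hxc) (hinv hyc)).trans ((add_smul _ _ _).symm.trans (hinv hzc).symm)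

end Hermitian

/-! ### Transitivity by counting norms -/

section Orbits

lemma ncard_setOf_pow_eq_le {K : Type*} [Field K] {n : ℕ} (hn : 0 < n) (c : K) :
    {x : K | x ^ n = c}.ncard ≤ n := by
  classical
  have hset : {x : K | x ^ n = c} = (nthRoots n c).toFinset := by
    ext x; simp [mem_nthRoots hn]
  rw [hset, Set.ncard_coe_finset]
  exact (Multiset.toFinset_card_le _).trans (card_nthRoots n c)

variable (F : Type*) {K : Type*} [Field F] [Fintype F] [Field K] [Algebra F K]

local notation "q" => Fintype.card F
local notation "N" => relNorm F K

variable (G : Type*) [Group G] [DistribMulAction G K]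

/-- The set of norms of the elements of the orbit of `b` under `G`. -/
def orbitNorms (b : K) : Set K := N '' MulAction.orbit G b

lemma ne_zero_of_mem_orbit {b x : K} (hb : b ≠ 0) (hx : x ∈ MulAction.orbit G b) : x ≠ 0 := by
  obtain ⟨g, rfl⟩ := hx
  exact (smul_ne_zero_iff_ne g).mpr hb

variable {G} (hu : ∀ u : K, relNorm F K u = 1 → ∃ g : G, ∀ x : K, g • x = u * x)

include hu

lemma mem_orbit_of_relNorm_eq {x y : K} (hx : x ≠ 0) (h : N y = N x) :
    y ∈ MulAction.orbit G x := by
  obtain ⟨g, hg⟩ := hu (y / x) (by rw [map_div₀, h, div_self (relNorm_ne_zero F hx)])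
  exact ⟨g, (hg x).trans (div_mul_cancel₀ _ hx)⟩

lemma disjoint_orbitNorms {b c : K} (hb : b ≠ 0) (h : c ∉ MulAction.orbit G b) :
    Disjoint (orbitNorms F G b) (orbitNorms F G c) := by
  rw [Set.disjoint_left]
  rintro _ ⟨x, hx, rfl⟩ ⟨y, hy, hxy⟩
  have hy' := mem_orbit_of_relNorm_eq F hu (ne_zero_of_mem_orbit G hb hx) hxy
  rw [MulAction.orbit_eq_iff.mpr hx] at hy'
  exact h (MulAction.orbit_eq_iff.mp ((MulAction.orbit_eq_iff.mpr hy).symm.trans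
    (MulAction.orbit_eq_iff.mpr hy')))

end Orbits

section Transitivity

lemma dual_apply_add_smul_add_sq_smul {R V : Type*} [CommRing R] [AddCommGroup V] [Module R V]
    (lam : Module.Dual R V) (u m e : V) :
    lam (u + lam e • e + lam e ^ 2 • m) = lam u + lam e ^ 2 * (1 + lam m) := by
  simp only [map_add, map_smul, smul_eq_mul]
  ring

lemma injOn_add_smul_add_sq_smul {F V : Type*} [Field F] [CharP F 2] [AddCommGroup V] [Module F V]
    {lam : Module.Dual F V} {m : V} (hm : 1 + lam m ≠ 0) (u : V) :
    Set.InjOn (fun e ↦ u + lam e • e + lam e ^ 2 • m) {e | lam e ≠ 0} := by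
  intro e _ e' he' h
  have hlam : lam e = lam e' := by
    have h := congrArg lam h
    simp only [dual_apply_add_smul_add_sq_smul] at h
    exact CharTwo.sq_injective (mul_right_cancel₀ hm (add_left_cancel h))
  simp only [hlam, add_left_inj, add_right_inj] at h
  exact smul_right_injective V he' h

variable (F : Type*) {K : Type*} [Field F] [Fintype F] [Field K] [Algebra F K]

local notation "q" => Fintype.card F
local notation "σ" => conj F K
local notation "N" => relNorm F K
local notation "T" => relTrace F K

variable (hK : Module.finrank F K = 4)

include hK

lemma relNorm_pow_eq_one {x : K} (hx : x ≠ 0) : N x ^ (q ^ 2 - 1) = 1 := by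
  refine mul_right_cancel₀ (relNorm_ne_zero F hx) ?_
  rw [← pow_succ, Nat.sub_add_cancel (Nat.pow_pos Fintype.card_pos), ← conj_apply,
    conj_relNorm F hK, one_mul]

lemma orbitNorms_subset (G : Type*) [Group G] [DistribMulAction G K] {b : K} (hb : b ≠ 0) :
    orbitNorms F G b ⊆ {e | e ^ (q ^ 2 - 1) = 1} := by
  rintro _ ⟨x, hx, rfl⟩
  exact relNorm_pow_eq_one F hK (ne_zero_of_mem_orbit G hb hx)

lemma le_two_mul_card_image_relTrace [Fintype K] [DecidableEq K] {M : K}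
    (hM : M ∈ conjFixed F K) (hM0 : M ≠ 0) :
    q ^ 2 + 1 ≤ 2 * ((Finset.univ.filter fun x : K ↦ N x = M).image T).card := by
  rw [← card_filter_relNorm_eq F hK hM hM0]
  refine Finset.card_le_mul_card_image _ 2 fun e he ↦ ?_
  obtain ⟨y, hy, rfl⟩ := Finset.mem_image.mp he
  refine (Finset.card_le_card (t := {y, σ y}) fun x hx ↦ ?_).trans Finset.card_le_two
  simp only [Finset.mem_filter, Finset.mem_univ, true_and] at hx hy
  simp only [relNorm_apply, relTrace_apply] at hx hy
  have hroots : (x - y) * (x - σ y) = 0 := by linear_combination x * hx.2 - hx.1 + hy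
  simpa [sub_eq_zero] using hroots

variable [CharP K 2] {lam : Module.Dual F K} (hlam : ∃ e ∈ conjFixed F K, lam e ≠ 0)

include hlam

lemma le_two_mul_card_filter_image_relTrace [Fintype K] [DecidableEq K] [DecidableEq F] {M : K}
    (hM : M ∈ conjFixed F K) (hM0 : M ≠ 0) :
    q ^ 2 + 1 ≤ 2 * (((Finset.univ.filter fun x : K ↦ N x = M).image T).filter
      fun e ↦ lam e ≠ 0).card + q + 2 := by
  have hcard := le_two_mul_card_image_relTrace F hK hM hM0
  set S := (Finset.univ.filter fun x : K ↦ N x = M).image T with hS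
  have hker := two_mul_card_filter_relTrace_le F hK hlam M
  have hsub : S.filter (fun e ↦ lam e = 0) ⊆
      insert 0 (Finset.univ.filter fun e : K ↦ e ≠ 0 ∧ lam e = 0 ∧ ∃ x, N x = M ∧ T x = e) := by
    intro e he
    have he : (∃ x, N x = M ∧ T x = e) ∧ lam e = 0 := by simpa [hS] using he
    by_cases he0 : e = 0 <;> simp [he0, he]
  have hle := (Finset.card_le_card hsub).trans (Finset.card_insert_le _ _)
  have hsplit := Finset.card_filter_add_card_filter_not (s := S) (fun e ↦ lam e = 0)
  simp only [ne_eq] at *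
  omega

lemma le_two_mul_card_of_relNorm_add_mem [Finite K] {a b : K} (ha : a ≠ 0)
    (hlama : lam (N a) ≠ 1) (hb : b ≠ 0) (I : Set K) (hbI : N b ∈ I)
    (hI : ∀ x, N x = N b * N a → N b + lam (T x) • T x + lam (T x) ^ 2 • N a ∈ I) :
    q ^ 2 + 1 ≤ 2 * I.ncard + q := by
  classical
  have := Fintype.ofFinite K
  have : CharP F 2 := (Algebra.charP_iff F K 2).mpr inferInstance
  set S := ((Finset.univ.filter fun x : K ↦ N x = N b * N a).image T).filter
    fun e ↦ lam e ≠ 0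
  have hcard : q ^ 2 + 1 ≤ 2 * S.card + q + 2 :=
    le_two_mul_card_filter_image_relTrace F hK hlam
      (by rw [mem_conjFixed, ← map_mul, conj_relNorm F hK])
      (mul_ne_zero (relNorm_ne_zero F hb) (relNorm_ne_zero F ha))
  let v (e : K) : K := N b + lam e • e + lam e ^ 2 • N a
  have hlama : 1 + lam (N a) ≠ 0 := fun h ↦ hlama (CharTwo.add_eq_zero.mp h).symm
  have hinj : Set.InjOn v S :=
    (injOn_add_smul_add_sq_smul hlama (N b)).mono fun e he ↦ (Finset.mem_filter.mp he).2
  have hsub : ↑(insert (N b) (S.image v)) ⊆ I := by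
    rw [Finset.coe_insert, Finset.coe_image, Set.insert_subset_iff, Set.image_subset_iff]
    refine ⟨hbI, ?_⟩
    intro e he
    obtain ⟨x, hx, rfl⟩ := Finset.mem_image.mp (Finset.mem_filter.mp he).1
    exact hI x ((Finset.mem_filter_univ x).mp hx)
  have hbS : N b ∉ S.image v := by
    intro h
    obtain ⟨e, he, h⟩ := Finset.mem_image.mp h
    have h := congrArg lam h
    rw [dual_apply_add_smul_add_sq_smul, add_eq_left] at h
    exact mul_ne_zero (pow_ne_zero 2 (Finset.mem_filter.mp he).2) hlama h
  have hle := Set.ncard_le_ncard hsub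
  rw [Set.ncard_coe_finset, Finset.card_insert_of_notMem hbS,
    Finset.card_image_of_injOn hinj] at hle
  omega

variable {G : Type*} [Group G] [DistribMulAction G K]
  {a : K} (hu : ∀ u : K, relNorm F K u = 1 → ∃ g : G, ∀ x : K, g • x = u * x)
  (ha : a ≠ 0) (hlama : lam (relNorm F K a) ≠ 1)
  (ht : ∃ g : G, ∀ x : K, g • x = x + lam (relTrace F K (conj F K x * a)) • a)

include hu ht

omit hlam hK [CharP K 2] in
lemma exists_smul_eq_add_smul {u : K} (hu1 : N u = 1) :
    ∃ g : G, ∀ x : K, g • x = x + lam (T (σ x * (u * a))) • (u * a) := by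
  obtain ⟨g, hg⟩ := hu u hu1
  obtain ⟨t, ht⟩ := ht
  refine ⟨g * t * g⁻¹, fun x ↦ ?_⟩
  obtain ⟨y, rfl⟩ : ∃ y, g • y = x := MulAction.surjective g x
  rw [mul_smul, mul_smul, inv_smul_smul, ht, hg, hg, mul_add, mul_smul_comm, map_mul (conj F K)]
  rw [relNorm_apply] at hu1
  rw [show σ u * σ y * (u * a) = σ y * a by linear_combination (σ y * a) * hu1]

include hlama ha

/-- The transvections along `u a` with `N u = 1` send `b` to vectors of norm
`N b + lam (T x) • T x + lam (T x) ^ 2 • N a`, where `x = u σ(b) a` runs through the elements of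
norm `N b * N a`. -/
lemma le_two_mul_ncard_orbitNorms {b : K} (hb : b ≠ 0) :
    q ^ 2 + 1 ≤ 2 * (orbitNorms F G b).ncard + q := by
  have := finite_of_finrank_eq_four F hK
  refine le_two_mul_card_of_relNorm_add_mem F hK hlam ha hlama hb _
    ⟨b, MulAction.mem_orbit_self b, rfl⟩ fun x hx ↦ ?_
  have hb' : σ b ≠ 0 := (_root_.map_ne_zero _).mpr hb
  have hu1 : N (x / (σ b * a)) = 1 := by
    have hNb : N (σ b) = N b := by
      rw [relNorm_apply, relNorm_apply, conj_involutive F hK, mul_comm]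
    rw [map_div₀, map_mul, hNb, hx,
      div_self (mul_ne_zero (relNorm_ne_zero F hb) (relNorm_ne_zero F ha))]
  obtain ⟨g, hg⟩ := exists_smul_eq_add_smul F hu ht hu1
  refine ⟨g • b, MulAction.mem_orbit b g, ?_⟩
  have hx' : σ b * (x / (σ b * a) * a) = x := by field_simp
  rw [hg, relNorm_add_smul F hK, hx', map_mul N, hu1, one_mul]

lemma le_two_mul_ncard_image_pow_orbitNorms (hq : Even q) {b : K} (hb : b ≠ 0) :
    q + 2 ≤ 2 * ((· ^ (q - 1)) '' orbitNorms F G b).ncard := by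
  classical
  have := finite_of_finrank_eq_four F hK
  have hq1 : 1 < q := Fintype.one_lt_card
  have hle := le_two_mul_ncard_orbitNorms F hK hlam hu ha hlama ht hb
  have hfib : (orbitNorms F G b).ncard ≤
      (q - 1) * ((· ^ (q - 1)) '' orbitNorms F G b).ncard := by
    obtain ⟨S, hS⟩ := (orbitNorms F G b).toFinite.exists_finset_coe
    rw [← hS, ← Finset.coe_image, Set.ncard_coe_finset, Set.ncard_coe_finset]
    refine Finset.card_le_mul_card_image _ _ fun e _ ↦ le_trans ?_
      (ncard_setOf_pow_eq_le (Nat.sub_pos_of_lt hq1) e)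
    rw [← Set.ncard_coe_finset]
    exact Set.ncard_le_ncard fun x hx ↦ (Finset.mem_filter.mp hx).2
  set j := ((· ^ (q - 1)) '' orbitNorms F G b).ncard
  obtain ⟨k, hk⟩ := hq
  have hqj : q < 2 * j := by
    by_contra! hj
    have hq2 : (q - 1) * q + q = q ^ 2 := by
      rw [← Nat.succ_mul, Nat.succ_eq_add_one, Nat.sub_add_cancel hq1.le, sq]
    have := Nat.mul_le_mul_left (q - 1) hj
    linarith
  omega

variable [SMulCommClass G F K]

/-- Otherwise `b`, `c • b` and `c² • b` would lie in three distinct orbits, with more than `q² - 1`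
norms in total. -/
lemma sq_smul_mem_orbit {b : K} (hb : b ≠ 0) {c : F} (hc : c ≠ 0) :
    c ^ 2 • b ∈ MulAction.orbit G b := by
  have hsmul {x y : K} (d : F) (h : y ∈ MulAction.orbit G x) :
      d • y ∈ MulAction.orbit G (d • x) := by
    obtain ⟨g, rfl⟩ := h
    exact ⟨g, smul_comm g d x⟩
  by_cases h1 : c • b ∈ MulAction.orbit G b
  · rw [← MulAction.orbit_eq_iff.mpr h1, sq, mul_smul]
    exact hsmul c h1
  by_contra h2
  have h3 : c ^ 2 • b ∉ MulAction.orbit G (c • b) := fun h ↦ h1 <| by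
    simpa [sq, mul_smul, inv_smul_smul₀ hc] using hsmul c⁻¹ h
  have hcb := smul_ne_zero hc hb
  have hc2b := smul_ne_zero (pow_ne_zero 2 hc) hb
  have := finite_of_finrank_eq_four F hK
  have hq : 1 < q := Fintype.one_lt_card
  have hle := (Set.ncard_le_ncard (Set.union_subset (Set.union_subset (orbitNorms_subset F hK G hb)
    (orbitNorms_subset F hK G hcb)) (orbitNorms_subset F hK G hc2b))).trans
      (ncard_setOf_pow_eq_le (Nat.sub_pos_of_lt (Nat.one_lt_pow two_ne_zero hq)) 1)
  rw [Set.ncard_union_eq ((disjoint_orbitNorms F hu hb h2).union_left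
    (disjoint_orbitNorms F hu hcb h3)), Set.ncard_union_eq (disjoint_orbitNorms F hu hb h1)] at hle
  have hb' := le_two_mul_ncard_orbitNorms F hK hlam hu ha hlama ht hb
  have hcb' := le_two_mul_ncard_orbitNorms F hK hlam hu ha hlama ht hcb
  have hc2b' := le_two_mul_ncard_orbitNorms F hK hlam hu ha hlama ht hc2b
  have hq2 : 3 * q ≤ q ^ 2 + 2 := by nlinarith
  omega

lemma smul_mem_orbit {b : K} (hb : b ≠ 0) {c : F} (hc : c ≠ 0) :
    c • b ∈ MulAction.orbit G b := by
  have : CharP F 2 := (Algebra.charP_iff F K 2).mpr inferInstance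
  obtain ⟨d, rfl⟩ : ∃ d, d ^ 2 = c := surjective_frobenius F 2 c
  exact sq_smul_mem_orbit F hK hlam hu ha hlama ht hb (by rintro rfl; simp at hc)

lemma disjoint_image_pow_orbitNorms {b c : K} (hb : b ≠ 0) (hc : c ≠ 0)
    (h : c ∉ MulAction.orbit G b) :
    Disjoint ((· ^ (q - 1)) '' orbitNorms F G b) ((· ^ (q - 1)) '' orbitNorms F G c) := by
  have : CharP F 2 := (Algebra.charP_iff F K 2).mpr inferInstance
  rw [Set.disjoint_left]
  rintro _ ⟨_, ⟨x, hx, rfl⟩, rfl⟩ ⟨_, ⟨y, hy, rfl⟩, hxy : N y ^ (q - 1) = N x ^ (q - 1)⟩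
  have hx0 := relNorm_ne_zero F (ne_zero_of_mem_orbit G hb hx)
  have hy0 := ne_zero_of_mem_orbit G hc hy
  obtain ⟨f, hf⟩ : ∃ f : F, algebraMap F K f = N x / N y := by
    refine mem_range_algebraMap_of_pow_card_eq ?_
    rw [← Nat.sub_add_cancel (Fintype.card_pos (α := F)), pow_succ, div_pow, hxy, div_self, one_mul]
    exact pow_ne_zero _ hx0
  obtain ⟨d, rfl⟩ : ∃ d, d ^ 2 = f := surjective_frobenius F 2 f
  have hxd : N x = N (d • y) := by
    rw [eq_div_iff (relNorm_ne_zero F hy0), map_pow] at hf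
    rw [Algebra.smul_def, map_mul, relNorm_apply F (algebraMap F K d), AlgHom.commutes, ← hf, sq]
  have hd : d ≠ 0 := by
    rintro rfl
    simp [hxd] at hx0
  refine Set.disjoint_left.mp (disjoint_orbitNorms F hu hb h) ⟨x, hx, rfl⟩ ⟨d • y, ?_, hxd.symm⟩
  rw [← MulAction.orbit_eq_iff.mpr hy]
  exact smul_mem_orbit F hK hlam hu ha hlama ht hy0 hd

/-- The scalars of `F` preserve the orbits, so distinct orbits have disjoint sets of norms even
modulo `Fˣ`, that is, after raising to the power `q - 1`; each set then contains more than half of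
the `(q + 1)`-th roots of unity. -/
theorem mem_orbit_of_transvection (hq : Even q) {b c : K} (hb : b ≠ 0) (hc : c ≠ 0) :
    c ∈ MulAction.orbit G b := by
  have := finite_of_finrank_eq_four F hK
  by_contra h
  have hsub {b : K} (hb : b ≠ 0) :
      (· ^ (q - 1)) '' orbitNorms F G b ⊆ {e : K | e ^ (q + 1) = 1} := by
    rintro _ ⟨e, he, rfl⟩
    have he := orbitNorms_subset F hK G hb he
    rwa [Set.mem_ofPred_eq, ← one_pow 2, Nat.sq_sub_sq, mul_comm, pow_mul] at he
  have hle := (Set.ncard_le_ncard (Set.union_subset (hsub hb) (hsub hc))).trans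
    (ncard_setOf_pow_eq_le (Nat.succ_pos _) 1)
  rw [Set.ncard_union_eq (disjoint_image_pow_orbitNorms F hK hlam hu ha hlama ht hb hc h)] at hle
  have hb' := le_two_mul_ncard_image_pow_orbitNorms F hK hlam hu ha hlama ht hq hb
  have hc' := le_two_mul_ncard_image_pow_orbitNorms F hK hlam hu ha hlama ht hq hc
  omega

end Transitivity

/-! ### Elements of order `q² + 1` -/

section Model

universe u

section CyclicModule

variable {F K V : Type*} [Field F] [Field K] [Algebra F K] [AddCommGroup V] [Module F V]
  {a : Module.End F V}

lemma exists_linearEquiv_of_aeval_minpoly_eq_zero (pb : PowerBasis F K)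
    (ha : aeval a (minpoly F pb.gen) = 0) (hV : Module.finrank F V = Module.finrank F K) :
    ∃ θ : K ≃ₗ[F] V, ∀ k, a (θ k) = θ (pb.gen * k) := by
  have := pb.finite
  have hpos : 0 < Module.finrank F V := hV ▸ Module.finrank_pos
  have := Module.finite_of_finrank_pos hpos
  have := Module.nontrivial_of_finrank_pos hpos
  obtain ⟨v, hv⟩ := exists_ne (0 : V)
  let ψ : K →ₐ[F] Module.End F V := pb.lift a ha
  let θ : K →ₗ[F] V := LinearMap.applyₗ v ∘ₗ ψ.toLinearMap
  have hθ : Function.Injective θ := by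
    refine (injective_iff_map_eq_zero θ).mpr fun k (hk : ψ k v = 0) ↦ by_contra fun hk0 ↦ hv ?_
    calc v = ψ (k⁻¹ * k) v := by rw [inv_mul_cancel₀ hk0, map_one, Module.End.one_apply]
      _ = 0 := by rw [map_mul, Module.End.mul_apply, hk, map_zero]
  refine ⟨LinearEquiv.ofInjectiveOfFinrankEq θ hθ hV.symm, fun k ↦ ?_⟩
  change a (ψ k v) = ψ (pb.gen * k) v
  rw [map_mul, pb.lift_gen, Module.End.mul_apply]

lemma orderOf_eq_of_apply_eq_mul {θ : K ≃ₗ[F] V} {γ : K} (h : ∀ k, a (θ k) = θ (γ * k)) :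
    orderOf γ = orderOf a := by
  let f : K →* Module.End F V := (θ.conjRingEquiv : Module.End F K →* Module.End F V).comp
    (Algebra.lmul F K : K →* Module.End F K)
  have hf : Function.Injective f := θ.conjRingEquiv.injective.comp Algebra.lmul_injective
  rw [← orderOf_injective f hf, show f γ = a from LinearMap.ext fun x ↦ ?_]
  change θ (γ * θ.symm x) = a x
  rw [← h, θ.apply_symm_apply]

lemma eq_top_of_apply_eq_mul {θ : K ≃ₗ[F] V} {γ : K} (h : ∀ k, a (θ k) = θ (γ * k))
    (hγ : Algebra.adjoin F {γ} = ⊤) {W : Submodule F V} (hW : ∀ x ∈ W, a x ∈ W) (hW0 : W ≠ ⊥) :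
    W = ⊤ := by
  have hmul (k : K) : ∀ x, θ x ∈ W → θ (k * x) ∈ W := by
    induction (hγ ▸ Algebra.mem_top : k ∈ Algebra.adjoin F {γ}) using Algebra.adjoin_induction with
    | mem k hk => obtain rfl := hk; exact fun x hx ↦ h x ▸ hW _ hx
    | algebraMap c =>
      exact fun x hx ↦ by simpa only [← Algebra.smul_def, map_smul] using W.smul_mem c hx
    | add k k' _ _ hk hk' =>
      exact fun x hx ↦ by simpa only [add_mul, map_add] using W.add_mem (hk x hx) (hk' x hx)
    | mul k k' _ _ hk hk' => exact fun x hx ↦ mul_assoc k k' x ▸ hk _ (hk' x hx)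
  obtain ⟨x, hx, hx0⟩ := W.ne_bot_iff.mp hW0
  have hx0 : θ.symm x ≠ 0 := by simpa using hx0
  refine (Submodule.eq_top_iff').mpr fun y ↦ ?_
  simpa [hx0] using hmul (θ.symm y / θ.symm x) (θ.symm x) (by simpa using hx)

lemma aeval_eq_zero_of_dvd_minpoly [FiniteDimensional F V] {p : F[X]} (hp : p ∣ minpoly F a)
    (hdeg : Module.finrank F V ≤ p.natDegree) : aeval a p = 0 := by
  have hle : (minpoly F a).natDegree ≤ p.natDegree := by
    refine le_trans ?_ (a.charpoly_natDegree.trans_le hdeg)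
    exact natDegree_le_of_dvd a.minpoly_dvd_charpoly a.charpoly_monic.ne_zero
  exact minpoly.dvd_iff.mp (associated_of_dvd_of_natDegree_le hp
    (minpoly.ne_zero (Algebra.IsIntegral.isIntegral a)) hle).symm.dvd

end CyclicModule

lemma exists_irreducible_dvd_geomSum {F E : Type*} [Field F] [Ring E] [Algebra F E]
    [Algebra.IsIntegral F E] {a : E} {n : ℕ} (ha : a ^ n = 1) (ha1 : a ≠ 1) :
    ∃ p : F[X], Irreducible p ∧ p ∣ minpoly F a ∧ p ∣ ∑ i ∈ Finset.range n, X ^ i := by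
  have hint : IsIntegral F a := Algebra.IsIntegral.isIntegral a
  by_contra! h
  have hcop : IsCoprime (minpoly F a) (∑ i ∈ Finset.range n, X ^ i) :=
    isCoprime_of_irreducible_dvd (fun h ↦ minpoly.ne_zero hint h.1) h
  have hdvd : minpoly F a ∣ (∑ i ∈ Finset.range n, X ^ i) * (X - 1) := by
    rw [geom_sum_mul, minpoly.dvd_iff]
    simp [ha]
  have := minpoly.dvd_iff.mp (hcop.dvd_of_dvd_mul_left hdvd)
  simp only [map_sub, aeval_X, map_one, sub_eq_zero] at this
  exact ha1 this

variable {F : Type u} [Field F] [Fintype F]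

local notation "q" => Fintype.card F

lemma finrank_eq_four_of_pow_eq_one {K : Type*} [Field K] [Algebra F K] [Finite K] [CharP K 2]
    {γ : K} (hγ : Algebra.adjoin F {γ} = ⊤) (hγq : γ ^ (q ^ 2 + 1) = 1) (hγ1 : γ ≠ 1) :
    Module.finrank F K = 4 := by
  have hinv : conj F K γ = γ⁻¹ := by
    rw [conj_apply]
    exact eq_inv_of_mul_eq_one_left (by rw [← pow_succ, hγq])
  have : Fact (Nat.Prime 2) := ⟨Nat.prime_two⟩
  rw [← FiniteField.orderOf_frobeniusAlgHom]
  refine orderOf_eq_prime_pow (p := 2) (n := 1) (fun h ↦ hγ1 (CharTwo.sq_injective ?_)) ?_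
  · have hγγ : γ⁻¹ = γ := by rw [← hinv, conj, ← pow_one 2, h, AlgHom.one_apply]
    have hγ0 : γ ≠ 0 := by rintro rfl; simp at hγq
    change γ ^ 2 = 1 ^ 2
    rw [one_pow, sq, ← inv_mul_cancel₀ hγ0, hγγ]
  · refine AlgHom.ext_of_adjoin_eq_top hγ ?_
    rintro _ rfl
    rw [pow_succ, pow_one, pow_mul, ← conj, sq, AlgHom.mul_apply, hinv, map_inv₀, hinv, inv_inv,
      AlgHom.one_apply]

theorem exists_linearEquiv_of_orderOf_eq_sq_add_one [CharP F 2] {V : Type*} [AddCommGroup V]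
    [Module F V] (hV : Module.finrank F V = 4) {a : Module.End F V}
    (ha : orderOf a = q ^ 2 + 1) :
    ∃ (K : Type u) (_ : Field K) (_ : Algebra F K) (θ : K ≃ₗ[F] V) (γ : K),
      Algebra.adjoin F {γ} = ⊤ ∧ orderOf γ = q ^ 2 + 1 ∧ ∀ k, a (θ k) = θ (γ * k) := by
  have := Module.finite_of_finrank_eq_succ hV
  have hq : 0 < q ^ 2 := Nat.pow_pos Fintype.card_pos
  obtain ⟨p, hp, hpa, hpg⟩ := exists_irreducible_dvd_geomSum (F := F) (ha ▸ pow_orderOf_eq_one a)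
    (fun h ↦ by rw [h, orderOf_one] at ha; omega)
  have : Fact (Irreducible p) := ⟨hp⟩
  let pb := AdjoinRoot.powerBasis hp.ne_zero
  have := pb.finite
  have : Finite (AdjoinRoot p) := Module.finite_of_finite F
  have : CharP (AdjoinRoot p) 2 := (Algebra.charP_iff F _ 2).mp inferInstance
  have hgeom : ∑ i ∈ Finset.range (q ^ 2 + 1), AdjoinRoot.root p ^ i = 0 := by
    simpa using AdjoinRoot.mk_eq_zero.mpr hpg
  have hK : Module.finrank F (AdjoinRoot p) = 4 := by
    refine finrank_eq_four_of_pow_eq_one AdjoinRoot.adjoinRoot_eq_top ?_ ?_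
    · rw [← sub_eq_zero, ← geom_sum_mul, hgeom, zero_mul]
    · intro h
      have hq : (q : AdjoinRoot p) = 0 := by
        rw [← map_natCast (algebraMap F _), FiniteField.cast_card_eq_zero, map_zero]
      simp [h, hq] at hgeom
  have hpA : aeval a (minpoly F pb.gen) = 0 := by
    rw [AdjoinRoot.powerBasis_gen, AdjoinRoot.minpoly_root hp.ne_zero, map_mul,
      aeval_eq_zero_of_dvd_minpoly hpa ?_, zero_mul]
    rw [hV, ← hK, pb.finrank, AdjoinRoot.powerBasis_dim]
  obtain ⟨θ, hθ⟩ := exists_linearEquiv_of_aeval_minpoly_eq_zero pb hpA (hV.trans hK.symm)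
  exact ⟨_, _, _, θ, pb.gen, pb.adjoin_gen_eq_top, (orderOf_eq_of_apply_eq_mul hθ).trans ha, hθ⟩

end Model

section HermitianForm

variable {F K : Type*} [Field F] [Fintype F] [Field K] [Algebra F K]

local notation "q" => Fintype.card F
local notation "σ" => conj F K
local notation "T" => relTrace F K

lemma apply_mul_left_eq_apply_conj_mul_right {B : LinearMap.BilinForm F K} {γ : K}
    (hγ : Algebra.adjoin F {γ} = ⊤) (hγq : γ ^ (q ^ 2 + 1) = 1)
    (hB : ∀ x y, B (γ * x) (γ * y) = B x y) (k x y : K) : B (k * x) y = B x (σ k * y) := by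
  induction (hγ ▸ Algebra.mem_top : k ∈ Algebra.adjoin F {γ}) using Algebra.adjoin_induction
    generalizing x y with
  | mem k hk =>
    obtain rfl := hk
    rw [← hB x, ← mul_assoc, ← relNorm_apply, relNorm_eq_pow, hγq, one_mul]
  | algebraMap c => simp only [AlgHom.commutes, ← Algebra.smul_def, map_smul, LinearMap.smul_apply]
  | add k k' _ _ hk hk' => simp only [add_mul, map_add, LinearMap.add_apply, hk, hk']
  | mul k k' _ _ hk hk' => rw [mul_assoc, hk, hk', map_mul σ, mul_left_comm, mul_assoc]

variable [CharP K 2]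

theorem exists_eq_apply_relTrace (hK : Module.finrank F K = 4) {B : LinearMap.BilinForm F K}
    (hBalt : B.IsAlt) (hB0 : B ≠ 0) {γ : K} (hγ : Algebra.adjoin F {γ} = ⊤)
    (hγq : γ ^ (q ^ 2 + 1) = 1) (hB : ∀ x y, B (γ * x) (γ * y) = B x y) :
    ∃ lam : Module.Dual F K, (∃ e ∈ conjFixed F K, lam e ≠ 0) ∧
      ∀ x y, B x y = lam (T (σ x * y)) := by
  have := finite_of_finrank_eq_four F hK
  have hB1 (x y : K) : B x y = B 1 (σ x * y) := by
    simpa using apply_mul_left_eq_apply_conj_mul_right hγ hγq hB x 1 y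
  have hker : B 1 ∈ (LinearMap.ker T).dualAnnihilator := by
    refine (Submodule.mem_dualAnnihilator _).mpr fun e he ↦ ?_
    obtain ⟨b, rfl⟩ : ∃ b, b ^ 2 = e := surjective_frobenius K 2 e
    have hb : σ b = b := CharTwo.sq_injective <| by
      simpa using (CharTwo.add_eq_zero.mp he).symm
    rw [sq]
    nth_rw 1 [← hb]
    rw [← hB1, hBalt b]
  obtain ⟨lam, hlam⟩ := (LinearMap.range_dualMap_eq_dualAnnihilator_ker T).ge hker
  have hlam (x : K) : lam (T x) = B 1 x := LinearMap.congr_fun hlam x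
  refine ⟨lam, ?_, fun x y ↦ by rw [hlam, hB1]⟩
  by_contra! h
  refine hB0 (LinearMap.ext₂ fun x y ↦ ?_)
  rw [hB1, ← hlam]
  exact h _ (conj_relTrace F hK _)

end HermitianForm

/-! ### Subgroups containing a transvection -/

section FixedVectors

lemma exists_mem_smul_eq_self_of_pow_eq_one {G X : Type*} [Group G] [MulAction G X] {p k : ℕ}
    [Fact p.Prime] {z : G} (hz : z ^ p ^ k = 1) {s : Set X} (hs : ∀ x, z • x ∈ s ↔ x ∈ s)
    (hp : ¬ p ∣ s.ncard) : ∃ x ∈ s, z • x = x := by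
  have hfin : s.Finite := Set.finite_of_ncard_ne_zero fun h ↦ hp (h ▸ dvd_zero p)
  have := hfin.fintype
  let τ : Equiv.Perm s := (MulAction.toPerm z).subtypePerm hs
  have hτ : τ ^ p ^ k = 1 := by
    ext x
    simp [τ, Equiv.Perm.subtypePerm_pow, ← MulAction.toPermHom_apply, ← map_pow, hz]
  rw [← Nat.card_coe_set_eq, Nat.card_eq_fintype_card] at hp
  obtain ⟨⟨x, hx⟩, h⟩ := Equiv.Perm.exists_fixed_point_of_prime hp hτ
  exact ⟨x, hx, congrArg Subtype.val h⟩

variable {l F : Type*} [Fintype l] [DecidableEq l] [Field F]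

local notation "ω" => symplecticForm

lemma symplecticForm_eq_zero_of_commute {x y : l ⊕ l → F}
    (h : Commute (transvection 1 x) (transvection 1 y)) : ω x y = 0 := by
  have hx := congrArg (· • x) h.eq
  simp only [mul_smul, transvection_smul, map_add, map_smul, LinearMap.add_apply,
    LinearMap.smul_apply, symplecticForm_self, symplecticForm_swap x y, one_mul, zero_smul,
    add_zero, smul_eq_mul, zero_add, add_eq_left, smul_eq_zero] at hx
  obtain h | h | rfl := hx
  · exact h
  · exact neg_eq_zero.mp h
  · simp

lemma eq_zero_of_smul_eq_self {z : symplecticGroup l F} {n : ℕ} (hz : z ^ n = 1) (hn : (n : F) ≠ 0)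
    (hcomm : ∀ ⦃g h⦄, Commute z g → Commute z h → Commute g h) {x : l ⊕ l → F} (hx : z • x = x) :
    x = 0 := by
  have hpow (i : ℕ) : z ^ i • x = x := by
    induction i with
    | zero => rw [pow_zero, one_smul]
    | succ i ih => rw [pow_succ, mul_smul, hx, ih]
  have htrans {y : l ⊕ l → F} (hy : z • y = y) : Commute z (transvection 1 y) := by
    have := conj_transvection z 1 y
    rwa [hy, mul_inv_eq_iff_eq_mul] at this
  by_contra hx0
  obtain ⟨w, hw⟩ := exists_symplecticForm_eq_one hx0
  let y := ∑ i ∈ Finset.range n, z ^ i • w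
  have hy : z • y = y := by
    refine add_right_cancel (b := w) ?_
    calc z • y + w = ∑ i ∈ Finset.range n, z ^ (i + 1) • w + z ^ 0 • w := by
          simp only [y, Finset.smul_sum, ← mul_smul, ← pow_succ', pow_zero, one_smul]
      _ = y + w := by rw [← Finset.sum_range_succ' (z ^ · • w), Finset.sum_range_succ, hz, one_smul]
  have hxy : ω x y = n := by
    have (i : ℕ) : ω x (z ^ i • w) = 1 := by
      rw [← symplecticForm_smul_smul (z ^ i) x w, hpow] at hw
      exact hw
    simp [y, this]
  exact hn (hxy ▸ symplecticForm_eq_zero_of_commute (hcomm (htrans hx) (htrans hy)))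

end FixedVectors

section QuadraticStabilizer

lemma ext_of_polar_eq {R M : Type*} [CommRing R] [AddCommGroup M] [Module R M]
    {Q Q' : QuadraticForm R M}
    (hpolar : ∀ x y, QuadraticMap.polar Q x y = QuadraticMap.polar Q' x y)
    {s : Set M} (hs : Submodule.span R s = ⊤) (h : Set.EqOn Q Q' s) : Q = Q' := by
  ext x
  induction (hs ▸ Submodule.mem_top : x ∈ Submodule.span R s) using Submodule.span_induction with
  | mem x hx => exact h hx
  | zero => rw [QuadraticMap.map_zero, QuadraticMap.map_zero]
  | add x y _ _ hx hy =>
    rw [QuadraticMap.map_add Q, QuadraticMap.map_add Q', hx, hy, hpolar]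
  | smul c x _ hx => rw [QuadraticMap.map_smul, QuadraticMap.map_smul, hx]

lemma le_quadraticStabilizer {l R : Type*} [Fintype l] [DecidableEq l] [CommRing R]
    {Q : QuadraticForm R (l ⊕ l → R)} (hQ : ∀ x y, QuadraticMap.polar Q x y = symplecticForm x y)
    {L : Subgroup (symplecticGroup l R)} {s : Set (l ⊕ l → R)} (hs : Submodule.span R s = ⊤)
    (hL : ∀ g ∈ L, ∀ x ∈ s, Q (g • x) = Q x) : L ≤ quadraticStabilizer Q := by
  intro g hg
  have hcomp : Q.comp (DistribSMul.toLinearMap R _ g) = Q := by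
    refine ext_of_polar_eq (fun x y ↦ ?_) hs (hL g hg)
    rw [hQ, ← symplecticForm_smul_smul g x y, ← hQ]
    simp [QuadraticMap.polar]
  exact QuadraticMap.congr_fun hcomp

end QuadraticStabilizer

lemma eq_top_of_forall_exists_mem_smul_eq {l F : Type*} [Fintype l] [DecidableEq l] [Field F]
    [CharP F 2] [PerfectRing F 2] {L : Subgroup (symplecticGroup l F)}
    (hL : ∀ x y : l ⊕ l → F, x ≠ 0 → y ≠ 0 → ∃ g ∈ L, g • x = y) {v : l ⊕ l → F} (hv : v ≠ 0)
    (hvL : transvection 1 v ∈ L) : L = ⊤ := by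
  refine eq_top_of_transvection_mem fun c w ↦ ?_
  obtain ⟨d, rfl⟩ : ∃ d, d ^ 2 = c := surjective_frobenius F 2 c
  have hd : transvection (d ^ 2) w = transvection 1 (d • w) :=
    symplecticGroup_ext fun x ↦ by
      simp only [transvection_smul, map_smul, smul_smul, smul_eq_mul]
      ring_nf
  by_cases hw : d • w = 0
  · have h1 : transvection 1 (0 : l ⊕ l → F) = 1 := symplecticGroup_ext fun x ↦ by simp
    rw [hd, hw, h1]
    exact L.one_mem
  obtain ⟨g, hg, hgv⟩ := hL v (d • w) hv hw
  rw [hd, ← hgv, ← conj_transvection]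
  exact L.mul_mem (L.mul_mem hg hvL) (L.inv_mem hg)

section NormForm

variable {F K : Type*} [Field F] [Fintype F] [Field K] [Algebra F K]

/-- The quadratic form `x ↦ lam (relNorm F K x)`: the trace form of the hermitian form
`x ↦ x ^ (q² + 1)` of `𝔽_{q⁴}` over `𝔽_{q²}`. -/
noncomputable def normForm (lam : Module.Dual F K) : QuadraticForm F K :=
  LinearMap.BilinMap.toQuadraticMap
    (((LinearMap.mul F K).compl₂ (conj F K).toLinearMap).compr₂ lam)

lemma normForm_apply (lam : Module.Dual F K) (x : K) : normForm lam x = lam (relNorm F K x) :=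
  rfl

lemma polar_normForm (hK : Module.finrank F K = 4) (lam : Module.Dual F K) (x y : K) :
    QuadraticMap.polar (normForm lam) x y = lam (relTrace F K (conj F K x * y)) := by
  rw [normForm, LinearMap.BilinMap.polar_toQuadraticMap]
  simp [relTrace_apply, conj_involutive F hK x, mul_comm, add_comm]

end NormForm

lemma finrank_eq_four_of_linearEquiv {F M : Type*} [Field F] [AddCommGroup M] [Module F M]
    (θ : M ≃ₗ[F] (Fin 2 ⊕ Fin 2 → F)) : Module.finrank F M = 4 :=
  θ.finrank_eq.trans (by simp)

lemma pow_smul_eq_of_smul_eq_mul {G M R : Type*} [Monoid G] [MulAction G M] [Monoid R] {θ : R → M}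
    {c : G} {γ : R} (hc : ∀ k, c • θ k = θ (γ * k)) (i : ℕ) (k : R) :
    c ^ i • θ k = θ (γ ^ i * k) := by
  induction i generalizing k with
  | zero => simp
  | succ i ih => rw [pow_succ, mul_smul, hc, ih, pow_succ, mul_assoc]

section Dichotomy

variable {F K : Type*} [Field F] [Fintype F] [Field K] [Algebra F K]

local notation "q" => Fintype.card F
local notation "σ" => conj F K
local notation "N" => relNorm F K
local notation "T" => relTrace F K
local notation "ω" => symplecticForm

lemma exists_symplecticForm_eq_relTrace [CharP K 2] {θ : K ≃ₗ[F] (Fin 2 ⊕ Fin 2 → F)}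
    {c : symplecticGroup (Fin 2) F} {γ : K} (hγ : Algebra.adjoin F {γ} = ⊤)
    (hγq : γ ^ (q ^ 2 + 1) = 1) (hc : ∀ k, c • θ k = θ (γ * k)) :
    ∃ lam : Module.Dual F K, (∃ e ∈ conjFixed F K, lam e ≠ 0) ∧
      ∀ x y, ω (θ x) (θ y) = lam (T (σ x * y)) := by
  refine exists_eq_apply_relTrace (B := symplecticForm.compl₁₂ θ.toLinearMap θ.toLinearMap)
    (finrank_eq_four_of_linearEquiv θ) (fun x ↦ symplecticForm_self (θ x)) ?_ hγ hγq fun x y ↦ ?_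
  · obtain ⟨y, hy⟩ := exists_symplecticForm_eq_one (θ.map_ne_zero_iff.mpr one_ne_zero)
    intro h
    have := LinearMap.congr_fun₂ h 1 (θ.symm y)
    simp [hy] at this
  · change ω (θ (γ * x)) (θ (γ * y)) = ω (θ x) (θ y)
    rw [← hc, ← hc, symplecticForm_smul_smul]

variable {θ : K ≃ₗ[F] (Fin 2 ⊕ Fin 2 → F)} {γ : K} {c : symplecticGroup (Fin 2) F}
  {L : Subgroup (symplecticGroup (Fin 2) F)} {lam : Module.Dual F K}
  (hc : ∀ k, c • θ k = θ (γ * k)) (hcL : c ∈ L)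
  (hω : ∀ x y, ω (θ x) (θ y) = lam (relTrace F K (conj F K x * y)))

include hc hcL hω

lemma exists_mem_smul_eq_of_relNorm_ne_one [CharP K 2] (hlam : ∃ e ∈ conjFixed F K, lam e ≠ 0)
    (hγ : orderOf γ = q ^ 2 + 1) (hq : Even q) {a : K} (ha : a ≠ 0)
    (haL : transvection 1 (θ a) ∈ L) (hlama : lam (N a) ≠ 1) {x y : Fin 2 ⊕ Fin 2 → F}
    (hx : x ≠ 0) (hy : y ≠ 0) : ∃ g ∈ L, g • x = y := by
  let : SMul L K := ⟨fun g k ↦ θ.symm (g • θ k)⟩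
  have hsmul (g : L) (k : K) : θ (g • k) = g • θ k := θ.apply_symm_apply _
  let : DistribMulAction L K :=
    Function.Injective.distribMulAction (θ : K →+ (Fin 2 ⊕ Fin 2 → F)) θ.injective hsmul
  have : SMulCommClass L F K := ⟨fun g d k ↦ θ.injective <| by
    rw [hsmul, map_smul, map_smul, hsmul]; exact smul_comm g.1 d (θ k)⟩
  have hu (u : K) (hu : N u = 1) : ∃ g : L, ∀ k, g • k = u * k := by
    rw [relNorm_eq_pow] at hu
    obtain ⟨i, -, rfl⟩ := (hγ ▸ IsPrimitiveRoot.orderOf γ).eq_pow_of_pow_eq_one hu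
    exact ⟨⟨c, hcL⟩ ^ i, fun k ↦
      θ.injective ((hsmul _ k).trans (pow_smul_eq_of_smul_eq_mul hc i k))⟩
  have ht : ∃ g : L, ∀ k : K, g • k = k + lam (T (σ k * a)) • a :=
    ⟨⟨_, haL⟩, fun k ↦ θ.injective <| by
      rw [hsmul, map_add, map_smul, ← hω, ← one_mul (ω _ _)]
      exact transvection_smul 1 (θ a) (θ k)⟩
  obtain ⟨g, hg⟩ := mem_orbit_of_transvection F (finrank_eq_four_of_linearEquiv θ) hlam hu ha hlama
    ht hq (θ.symm.map_ne_zero_iff.mpr hx) (θ.symm.map_ne_zero_iff.mpr hy)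
  refine ⟨g, g.2, ?_⟩
  rw [← θ.apply_symm_apply x, ← θ.apply_symm_apply y, ← hg]
  exact (hsmul g _).symm

lemma le_quadraticStabilizer_normForm (hγ : Algebra.adjoin F {γ} = ⊤)
    {v : Fin 2 ⊕ Fin 2 → F} (hv : v ≠ 0) (hvL : transvection 1 v ∈ L)
    (hL : ∀ a, a ≠ 0 → transvection 1 (θ a) ∈ L → lam (N a) = 1) :
    L ≤ quadraticStabilizer ((normForm lam).comp θ.symm.toLinearMap) := by
  let S : Set (Fin 2 ⊕ Fin 2 → F) := {w | w ≠ 0 ∧ transvection 1 w ∈ L}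
  have hS {g} (hg : g ∈ L) {w} (hw : w ∈ S) : g • w ∈ S :=
    ⟨(smul_ne_zero_iff_ne g).mpr hw.1, by
      rw [← conj_transvection]
      exact L.mul_mem (L.mul_mem hg hw.2) (L.inv_mem hg)⟩
  have hone {w} (hw : w ∈ S) : normForm lam (θ.symm w) = 1 :=
    hL _ (θ.symm.map_ne_zero_iff.mpr hw.1) ((θ.apply_symm_apply w).symm ▸ hw.2)
  have hspan : Submodule.span F S = ⊤ := by
    refine eq_top_of_apply_eq_mul (a := DistribSMul.toLinearMap F _ c) hc hγ (fun x hx ↦ ?_)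
      (Submodule.ne_bot_iff _ |>.mpr ⟨v, Submodule.subset_span ⟨hv, hvL⟩, hv⟩)
    have := Submodule.mem_map_of_mem (f := DistribSMul.toLinearMap F _ c) hx
    rw [Submodule.map_span] at this
    exact Submodule.span_mono (Set.image_subset_iff.mpr fun w ↦ hS hcL) this
  refine le_quadraticStabilizer (fun x y ↦ ?_) hspan fun g hg w hw ↦ ?_
  · rw [← θ.apply_symm_apply x, ← θ.apply_symm_apply y, hω,
      ← polar_normForm (finrank_eq_four_of_linearEquiv θ)]
    simp [QuadraticMap.polar]
  · exact (hone (hS hg hw)).trans (hone hw).symm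

end Dichotomy

section Covering

variable {F : Type*} [Field F] [Fintype F]

local notation "q" => Fintype.card F

lemma ncard_setOf_normForm_eq_zero {K : Type*} [Field K] [Algebra F K]
    (θ : K ≃ₗ[F] (Fin 2 ⊕ Fin 2 → F)) {lam : Module.Dual F K}
    (hlam : ∃ e ∈ conjFixed F K, lam e ≠ 0) :
    {x | x ≠ 0 ∧ normForm lam (θ.symm x) = 0}.ncard = (q ^ 2 + 1) * (q - 1) := by
  classical
  have := finite_of_finrank_eq_four F (finrank_eq_four_of_linearEquiv θ)
  have := Fintype.ofFinite K
  rw [← card_filter_ne_zero_and_relNorm_eq_zero F (finrank_eq_four_of_linearEquiv θ) hlam,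
    ← Set.ncard_coe_finset, ← Set.ncard_image_of_injective _ θ.symm.injective,
    LinearEquiv.image_symm_eq_preimage]
  congr 1
  ext k
  simp [normForm_apply]

lemma not_dvd_sq_add_one_mul_sub_one {r n : ℕ} (hr : r.Prime) (hn : Even n) (hn0 : n ≠ 0)
    (h : r ∣ n + 1) : ¬ r ∣ (n ^ 2 + 1) * (n - 1) := by
  have hr2 : ¬ r ∣ 2 := fun h2 ↦ by
    obtain rfl := (Nat.prime_dvd_prime_iff_eq hr Nat.prime_two).mp h2
    exact hn.add_one.not_two_dvd_nat h
  obtain ⟨m, rfl⟩ := Nat.exists_eq_add_one_of_ne_zero hn0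
  rw [hr.dvd_mul, Nat.add_sub_cancel]
  rintro (h' | h')
  · refine hr2 ((Nat.dvd_add_right (h.mul_right m)).mp ?_)
    convert h' using 1
    ring
  · exact hr2 ((Nat.dvd_add_right h').mp h)

variable [CharP F 2]

theorem eq_top_of_orderOf_eq_sq_add_one {L : Subgroup (symplecticGroup (Fin 2) F)}
    {c z : symplecticGroup (Fin 2) F} {v : Fin 2 ⊕ Fin 2 → F} {r k : ℕ} (hcL : c ∈ L)
    (hc : orderOf c = q ^ 2 + 1) (hv : v ≠ 0) (hvL : transvection 1 v ∈ L) (hzL : z ∈ L)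
    (hr : r.Prime) (hrq : r ∣ q + 1) (hz : z ^ r ^ k = 1)
    (hcomm : ∀ ⦃g h⦄, Commute z g → Commute z h → Commute g h) : L = ⊤ := by
  have hq : Even q := even_card F
  let a : Module.End F (Fin 2 ⊕ Fin 2 → F) := DistribSMul.toLinearMap F _ c
  have ha : orderOf a = q ^ 2 + 1 := by
    rw [← hc]
    refine orderOf_injective (DistribMulAction.toModuleEnd F _) (fun g h hgh ↦ ?_) c
    exact symplecticGroup_ext (LinearMap.congr_fun hgh)
  obtain ⟨K, _, _, θ, γ, hγ, hγo, hθ⟩ :=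
    exists_linearEquiv_of_orderOf_eq_sq_add_one (by simp) ha
  have : CharP K 2 := (Algebra.charP_iff F K 2).mp inferInstance
  obtain ⟨lam, hlam, hω⟩ :=
    exists_symplecticForm_eq_relTrace hγ (hγo ▸ pow_orderOf_eq_one γ) hθ
  by_cases hL : ∀ a, a ≠ 0 → transvection 1 (θ a) ∈ L → lam (relNorm F K a) = 1
  · have hle := le_quadraticStabilizer_normForm hθ hcL hω hγ hv hvL hL
    have := Fact.mk hr
    obtain ⟨x, ⟨hx0, -⟩, hx⟩ := exists_mem_smul_eq_self_of_pow_eq_one hz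
      (s := {x | x ≠ 0 ∧ normForm lam (θ.symm x) = 0})
      (fun x ↦ and_congr (smul_ne_zero_iff_ne z) (Eq.congr_left (hle hzL x)))
      (ncard_setOf_normForm_eq_zero θ hlam ▸
        not_dvd_sq_add_one_mul_sub_one hr hq Fintype.card_ne_zero hrq)
    refine absurd (eq_zero_of_smul_eq_self hz ?_ hcomm hx) hx0
    rw [Ne, CharP.cast_eq_zero_iff F 2]
    exact (hq.add_one.of_dvd_nat hrq).pow.not_two_dvd_nat
  · push Not at hL
    obtain ⟨a, ha, haL, hlama⟩ := hL
    exact eq_top_of_forall_exists_mem_smul_eq (fun x y ↦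
      exists_mem_smul_eq_of_relNorm_ne_one hθ hcL hω hlam hγo hq ha haL hlama) hv hvL

theorem exists_forall_mulEquiv_notMem (hF : 4 ≤ q) {L : Subgroup (symplecticGroup (Fin 2) F)}
    (hL : L ≠ ⊤) :
    ∃ g, ∀ φ : symplecticGroup (Fin 2) F ≃* symplecticGroup (Fin 2) F, φ g ∉ L := by
  by_contra! hcov
  obtain ⟨t, n, hc⟩ := exists_orderOf_palindromicElement_eq_sq_add_one F
  obtain ⟨r, k, hr, hk, hrk, h5⟩ := exists_prime_pow_dvd_add_one (even_card F) hF
  obtain ⟨t', n', hz⟩ := exists_orderOf_palindromicElement_eq_of_dvd F hrk h5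
  let v : Fin 2 ⊕ Fin 2 → F := Pi.single (Sum.inl 0) 1
  obtain ⟨φ, hv⟩ := hcov (transvection 1 v)
  obtain ⟨φc, hφc⟩ := hcov (palindromicElement t n)
  obtain ⟨φz, hφz⟩ := hcov (palindromicElement t' n')
  let ψ := φz.trans φ.symm
  have hcomm ⦃g h⦄ (hg : Commute (ψ (palindromicElement t' n')) g)
      (hh : Commute (ψ (palindromicElement t' n')) h) : Commute g h := by
    have := commute_of_commute_palindromicElement (by simpa using hg.map ψ.symm)
      (by simpa using hh.map ψ.symm)
    simpa using this.map ψ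
  refine hL (Subgroup.comap_injective (f := φ.toMonoidHom) φ.surjective ?_)
  refine eq_top_of_orderOf_eq_sq_add_one (c := (φc.trans φ.symm) (palindromicElement t n)) (v := v)
    ?_ ((MulEquiv.orderOf_eq _ _).trans hc) (by simp [v]) hv (z := ψ (palindromicElement t' n')) ?_
    hr ((dvd_pow_self r hk).trans hrk) (k := k) ?_ hcomm
  · simpa using hφc
  · simpa [ψ] using hφz
  · rw [← map_pow, ← hz, pow_orderOf_eq_one, map_one]

end Covering

end SymplecticCovering

/-- **Both the normal covering number and the weak normal covering number of `Sp₄(2^f)`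
(`f ≥ 2`) equal 2**: there are two proper subgroups `H`, `K` such that every element is
conjugate to an element of `H` or of `K`, and no single proper subgroup `L` has the
property that every element is mapped into `L` by some automorphism. -/
theorem gamma_Sp4_even_eq_two (f : ℕ) (hf : 2 ≤ f) (q : ℕ) (hq : q = 2 ^ f)
    (F : Type*) [Field F] [Fintype F] (hF : Fintype.card F = q) :
    (∃ H K : Subgroup (Sp 2 F), H ≠ ⊤ ∧ K ≠ ⊤ ∧
        ∀ g : Sp 2 F, ∃ x : Sp 2 F,
          x * g * x⁻¹ ∈ H ∨ x * g * x⁻¹ ∈ K) ∧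
      ¬ ∃ L : Subgroup (Sp 2 F), L ≠ ⊤ ∧
          ∀ g : Sp 2 F, ∃ φ : Sp 2 F ≃* Sp 2 F, φ g ∈ L := by
  have : Fact (Nat.Prime 2) := ⟨Nat.prime_two⟩
  have : CharP F 2 := charP_of_card_eq_prime_pow (hF.trans hq)
  have h4 : 4 ≤ Fintype.card F := (hF.trans hq).symm ▸ Nat.pow_le_pow_right two_pos hf
  refine ⟨SymplecticCovering.exists_two_subgroups_conj_cover (by lia), ?_⟩
  rintro ⟨L, hL, hcover⟩
  obtain ⟨g, hg⟩ := SymplecticCovering.exists_forall_mulEquiv_notMem h4 hL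
  obtain ⟨φ, hφ⟩ := hcover g
  exact hg φ hφ
end

section
/- Let G be a finite perfect group (that is, G equals its own commutator subgroup), let Z be the center of G, and let k be a positive integer. Then there exist k proper subgroups H_1, ..., H_k of G with G equal to the union of all conjugates of H_1, ..., H_k if and only if there exist k proper subgroups of the quotient G/Z whose conjugates cover G/Z. -/
/-!
Normal coverings always pull back along a surjection `f : G →* Q`. Pushing them forward could only
fail by turning a proper subgroup `H` into all of `Q`, that is, if `H` and `ker f` generate `G`.
When `ker f` is central, `H` is then normal with abelian quotient, so `H` contains the
commutator subgroup; in a perfect group this forces `H = G`.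
-/

section

open Subgroup

variable {G Q : Type*} [Group G] [Group Q] {ι : Sort*} {f : G →* Q}

theorem commutator_le_of_sup_center_eq_top {H : Subgroup G} (h : H ⊔ center G = ⊤) :
    commutator G ≤ H := by
  have : H.Normal := normalizer_eq_top_iff.mp <| top_le_iff.mp <|
    h ▸ sup_le le_normalizer (center_le_normalizer _)
  exact Normal.commutator_le_of_self_sup_commutative_eq_top h inferInstance

theorem map_ne_top_of_ker_le_center [Group.IsPerfect G] (hker : f.ker ≤ center G)
    {H : Subgroup G} (hH : H ≠ ⊤) : H.map f ≠ ⊤ := by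
  contrapose! hH
  have hsup_ker : H ⊔ f.ker = ⊤ := by rw [← comap_map_eq, hH, comap_top]
  have hsup_center : H ⊔ center G = ⊤ := top_le_iff.mp (hsup_ker ▸ sup_le_sup_left hker H)
  exact top_le_iff.mp <|
    Group.IsPerfect.commutator_eq_top (G := G) ▸ commutator_le_of_sup_center_eq_top hsup_center

/-- A normal covering of `G`: a family of proper subgroups such that every element of `G` has a
conjugate in one of them. A normal `k`-covering is the case `ι = Fin k`; repetitions in the family
are allowed. -/
def IsNormalCovering (H : ι → Subgroup G) : Prop :=
  (∀ i, H i ≠ ⊤) ∧ ∀ g : G, ∃ i, ∃ x : G, x * g * x⁻¹ ∈ H i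

namespace IsNormalCovering

theorem map [Group.IsPerfect G] {H : ι → Subgroup G} (hH : IsNormalCovering H)
    (hf : Function.Surjective f) (hker : f.ker ≤ center G) :
    IsNormalCovering fun i ↦ (H i).map f := by
  refine ⟨fun i ↦ map_ne_top_of_ker_le_center hker (hH.1 i), hf.forall.mpr fun g ↦ ?_⟩
  obtain ⟨i, x, hx⟩ := hH.2 g
  exact ⟨i, f x, by simpa only [map_mul, map_inv] using mem_map_of_mem f hx⟩

theorem comap {K : ι → Subgroup Q} (hK : IsNormalCovering K) (hf : Function.Surjective f) :
    IsNormalCovering fun i ↦ (K i).comap f := by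
  refine ⟨fun i h ↦ hK.1 i (comap_injective hf (h.trans (comap_top f).symm)), fun g ↦ ?_⟩
  obtain ⟨i, y, hy⟩ := hK.2 (f g)
  obtain ⟨x, rfl⟩ := hf y
  exact ⟨i, x, by simpa only [mem_comap, map_mul, map_inv] using hy⟩

end IsNormalCovering

theorem normal_covering_iff_central_quotient_general [Group.IsPerfect G]
    (hf : Function.Surjective f) (hker : f.ker ≤ center G) :
    (∃ H : ι → Subgroup G, IsNormalCovering H) ↔ ∃ K : ι → Subgroup Q, IsNormalCovering K :=
  ⟨fun ⟨_, hH⟩ ↦ ⟨_, hH.map hf hker⟩, fun ⟨_, hK⟩ ↦ ⟨_, hK.comap hf⟩⟩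

end

/-- **Normal `k`-coverings of a finite perfect group correspond to normal `k`-coverings
of its central quotient.** A finite perfect group `G` admits `k` proper subgroups whose
conjugates cover `G` if and only if `G / Z(G)` admits `k` proper subgroups whose
conjugates cover `G / Z(G)`. -/
theorem normal_covering_iff_central_quotient
    (G : Type*) [Group G] [Finite G] (hperf : commutator G = ⊤)
    (k : ℕ) (hk : 0 < k) :
    (∃ H : Fin k → Subgroup G, (∀ i, H i ≠ ⊤) ∧
        ∀ g : G, ∃ i, ∃ x : G, x * g * x⁻¹ ∈ H i) ↔
      (∃ K : Fin k → Subgroup (G ⧸ Subgroup.center G), (∀ i, K i ≠ ⊤) ∧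
        ∀ g : G ⧸ Subgroup.center G, ∃ i, ∃ x : G ⧸ Subgroup.center G,
          x * g * x⁻¹ ∈ K i) := by
  have : Group.IsPerfect G := ⟨hperf⟩
  exact normal_covering_iff_central_quotient_general
    (QuotientGroup.mk'_surjective (Subgroup.center G)) (QuotientGroup.ker_mk' _).le
end

section
/- A finite nilpotent group is never the union of the conjugates of two proper subgroups: if X is a finite nilpotent group and V, W are proper subgroups of X, then the union over all x in X of x V x^{-1} and x W x^{-1} is a proper subset of X. -/
/-!
Every subgroup `H` of a nilpotent group `G` is subnormal, by induction on the nilpotency class: `H`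
is normal in `Z(G) ⊔ H`, the preimage of the image of `H` in `G ⧸ Z(G)`. The last proper term of a
subnormal chain is a normal subgroup of `G`, so a proper subgroup lies, together with all its
conjugates, in a proper normal subgroup; and a group is not the union of two proper subgroups.
-/

open Subgroup

section

variable {G : Type*} [Group G]

theorem isSubnormal_of_isSubnormal_map_mk'_center {H : Subgroup G}
    (hH : (H.map (QuotientGroup.mk' (center G))).IsSubnormal) : H.IsSubnormal := by
  have hsup : (center G ⊔ H).IsSubnormal := by
    simpa only [comap_map_eq, QuotientGroup.ker_mk', sup_comm]
      using hH.comap (QuotientGroup.mk' (center G))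
  have hnormal : (H.subgroupOf (center G ⊔ H)).Normal :=
    normal_subgroupOf_sup_of_le_normalizer (center_le_normalizer (H : Set G))
  exact .step H (center G ⊔ H) le_sup_right hsup hnormal

theorem isSubnormal_of_isNilpotent [Group.IsNilpotent G] (H : Subgroup G) : H.IsSubnormal := by
  revert H
  refine Group.nilpotent_center_quotient_ind (P := fun G _ _ => ∀ H : Subgroup G, H.IsSubnormal) G
    (fun G _ _ H => .of_subsingleton) fun G _ _ ih H => ?_
  exact isSubnormal_of_isSubnormal_map_mk'_center (ih _)

theorem iUnion_conj_image_subset {s : Set G} {N : Subgroup G} [hN : N.Normal] (hs : s ⊆ N) :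
    ⋃ x : G, (fun g => x * g * x⁻¹) '' s ⊆ N :=
  Set.iUnion_subset fun x => Set.image_subset_iff.2 fun g hg => hN.conj_mem g (hs hg) x

theorem coe_union_coe_ne_univ {H K : Subgroup G} (hH : H ≠ ⊤) (hK : K ≠ ⊤) :
    (H ∪ K : Set G) ≠ Set.univ := by
  intro h
  have hcover : ((⊤ : Subgroup G) : Set G) ⊆ H ∪ K := (coe_top.trans h.symm).subset
  rcases SubgroupClass.subset_union.1 hcover with hle | hle
  · exact hH (top_le_iff.1 hle)
  · exact hK (top_le_iff.1 hle)

theorem iUnion_conj_union_iUnion_conj_ne_univ_of_isSubnormal {H K : Subgroup G}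
    (hH : H.IsSubnormal) (hK : K.IsSubnormal) (hH_ne : H ≠ ⊤) (hK_ne : K ≠ ⊤) :
    ((⋃ x : G, (fun h => x * h * x⁻¹) '' (H : Set G)) ∪
        ⋃ x : G, (fun k => x * k * x⁻¹) '' (K : Set G)) ≠ Set.univ := by
  obtain ⟨M, _, hHM, hM⟩ := hH.lt_normal.resolve_left hH_ne
  obtain ⟨N, _, hKN, hN⟩ := hK.lt_normal.resolve_left hK_ne
  exact ne_top_of_le_ne_top (coe_union_coe_ne_univ hM.ne hN.ne)
    (Set.union_subset_union (iUnion_conj_image_subset hHM) (iUnion_conj_image_subset hKN))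

end

theorem nilpotent_no_normal_two_covering_general {X : Type*} [Group X] [Group.IsNilpotent X]
    {V W : Subgroup X} (hV : V ≠ ⊤) (hW : W ≠ ⊤) :
    ((⋃ x : X, (fun v => x * v * x⁻¹) '' (V : Set X)) ∪
        ⋃ x : X, (fun w => x * w * x⁻¹) '' (W : Set X)) ≠ Set.univ :=
  iUnion_conj_union_iUnion_conj_ne_univ_of_isSubnormal
    (isSubnormal_of_isNilpotent V) (isSubnormal_of_isNilpotent W) hV hW

/-- **A finite nilpotent group is never the union of the conjugates of two proper
subgroups**: if `V` and `W` are proper subgroups of a finite nilpotent group `X`,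
then `⋃ x, x V x⁻¹ ∪ ⋃ x, x W x⁻¹` is a proper subset of `X`. -/
theorem nilpotent_no_normal_two_covering
    (X : Type*) [Group X] [Finite X] (hX : Group.IsNilpotent X)
    (V W : Subgroup X) (hV : V ≠ ⊤) (hW : W ≠ ⊤) :
    ((⋃ x : X, (fun v => x * v * x⁻¹) '' (V : Set X)) ∪
        ⋃ x : X, (fun w => x * w * x⁻¹) '' (W : Set X)) ≠ Set.univ :=
  nilpotent_no_normal_two_covering_general hV hW
end

section
/- Let Y be a finite supersolvable group, and let V and Z be subgroups of Y with V a proper subgroup of Z and Z normal in Y. Then the union over all y in Y of the conjugates y V y^{-1} is a proper subset of Z. -/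
/-- A finite group `Y` is supersolvable if there is a chain of subgroups
`⊥ = Y₀ ≤ Y₁ ≤ ⋯ ≤ Y_l = Y`, each normal in `Y`, with all successive quotients
cyclic (the quotient `Y_{i+1}/Y_i` being cyclic is expressed by the existence of
`y ∈ Y_{i+1}` such that every `z ∈ Y_{i+1}` agrees with a power of `y` modulo `Y_i`). -/
def IsSupersolvable (Y : Type*) [Group Y] : Prop :=
  ∃ (l : ℕ) (c : Fin (l + 1) → Subgroup Y),
    c 0 = ⊥ ∧ c (Fin.last l) = ⊤ ∧
    (∀ i, (c i).Normal) ∧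
    (∀ i : Fin l, c i.castSucc ≤ c i.succ) ∧
    ∀ i : Fin l, ∃ y ∈ c i.succ, ∀ z ∈ c i.succ, ∃ n : ℤ, z * (y ^ n)⁻¹ ∈ c i.castSucc

/-!
Suppose the conjugates of `V` cover the normal subgroup `Z`. Intersecting the given chain with `Z`
yields a chain of normal subgroups of `Y` from `⊥` to `Z` with cyclic quotients, and `V` contains
each of its terms: if `N ≤ M` are consecutive terms with `N ≤ V` and `g` generates `M` modulo `N`,
then `g` is conjugate to some `v ∈ V`. As `M` and `N` are normal, `v` also generates `M` modulo `N`,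
so `M ≤ V`. At the top of the chain this gives `Z ≤ V`.
-/

open Subgroup Group

section Subgroup

variable {G : Type*} [Group G] {N M V H : Subgroup G} {g v x : G}

lemma mem_sup_zpowers_iff [N.Normal] :
    x ∈ N ⊔ zpowers g ↔ ∃ n : ℤ, x * (g ^ n)⁻¹ ∈ N := by
  rw [mem_sup_of_normal_left]
  constructor
  · rintro ⟨y, hy, _, ⟨n, rfl⟩, rfl⟩
    exact ⟨n, by simpa using hy⟩
  · rintro ⟨n, hn⟩
    exact ⟨_, hn, _, zpow_mem_zpowers g n, inv_mul_cancel_right x _⟩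

lemma exists_mem_le_inf_sup_zpowers [N.Normal] (hH : H ≤ N ⊔ zpowers g) :
    ∃ h ∈ H, H ≤ N ⊓ H ⊔ zpowers h := by
  let q := QuotientGroup.mk' N
  have map_le : H.map q ≤ zpowers (q g) := by
    simpa [q, Subgroup.map_sup, MonoidHom.map_zpowers] using map_mono (f := q) hH
  obtain ⟨k, map_eq⟩ := (le_zpowers_iff _ _).1 map_le
  obtain ⟨h, hh, hq⟩ := map_eq.ge (mem_zpowers _)
  refine ⟨h, hh, fun x hx => ?_⟩
  obtain ⟨n, hn⟩ := mem_zpowers_iff.1 (map_eq.le (mem_map_of_mem q hx))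
  have mem_N : x * (h ^ n)⁻¹ ∈ N := by
    rw [← QuotientGroup.ker_mk' N, MonoidHom.mem_ker, map_mul, map_inv, map_zpow, hq, hn,
      mul_inv_cancel]
  have mem_H : x * (h ^ n)⁻¹ ∈ H := mul_mem hx (inv_mem (zpow_mem hh n))
  simpa using mul_mem_sup (S := N ⊓ H) ⟨mem_N, mem_H⟩ (zpow_mem_zpowers h n)

lemma le_sup_zpowers_of_isConj [N.Normal] [M.Normal] (hvg : IsConj v g)
    (hM : M ≤ N ⊔ zpowers g) : M ≤ N ⊔ zpowers v := by
  obtain ⟨c, rfl⟩ := isConj_iff.1 hvg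
  rw [← Normal.map_conj_eq M c, ← Normal.map_conj_eq N c] at hM
  rw [← map_le_map_iff_of_injective (f := (MulAut.conj c).toMonoidHom)
    (MulAut.conj c).injective]
  simpa [Subgroup.map_sup, MonoidHom.map_zpowers] using hM

lemma le_of_le_sup_zpowers_of_subset_conjugatesOfSet [N.Normal] [H.Normal]
    (hcov : (H : Set G) ⊆ conjugatesOfSet V) (hH : H ≤ N ⊔ zpowers g) (hN : N ⊓ H ≤ V) :
    H ≤ V := by
  obtain ⟨h, hh, hle⟩ := exists_mem_le_inf_sup_zpowers hH
  obtain ⟨v, hv, hvh⟩ := mem_conjugatesOfSet_iff.1 (hcov hh)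
  exact (le_sup_zpowers_of_isConj hvh hle).trans (sup_le hN (zpowers_le_of_mem hv))

lemma iUnion_image_conj_eq_conjugatesOfSet (s : Set G) :
    (⋃ y : G, (fun a => y * a * y⁻¹) '' s) = conjugatesOfSet s := by
  ext x
  simp only [Set.mem_iUnion, Set.mem_image, mem_conjugatesOfSet_iff, isConj_iff]
  exact ⟨fun ⟨y, a, ha, h⟩ => ⟨a, ha, y, h⟩, fun ⟨a, ha, y, h⟩ => ⟨y, a, ha, h⟩⟩

end Subgroup

lemma IsSupersolvable.le_of_subset_conjugatesOfSet {G : Type*} [Group G] (hG : IsSupersolvable G)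
    {V Z : Subgroup G} [Z.Normal] (hcov : (Z : Set G) ⊆ conjugatesOfSet V) : Z ≤ V := by
  obtain ⟨l, c, c_zero, c_last, c_normal, -, c_cyclic⟩ := hG
  have inf_le (i : Fin (l + 1)) : c i ⊓ Z ≤ V := by
    induction i using Fin.induction with
    | zero => simp [c_zero]
    | succ i ih =>
      obtain ⟨g, -, hg⟩ := c_cyclic i
      have le_sup : c i.succ ≤ c i.castSucc ⊔ zpowers g :=
        fun z hz => mem_sup_zpowers_iff.2 (hg z hz)
      exact le_of_le_sup_zpowers_of_subset_conjugatesOfSet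
        ((SetLike.coe_subset_coe.2 inf_le_right).trans hcov) (inf_le_left.trans le_sup)
        ((inf_le_inf_left _ inf_le_right).trans ih)
  simpa [c_last] using inf_le (Fin.last l)

theorem supersolvable_conjugates_proper_general
    (Y : Type*) [Group Y] (hY : IsSupersolvable Y)
    (V Z : Subgroup Y) (hVZ : V < Z) (hZ : Z.Normal) :
    (⋃ y : Y, (fun v => y * v * y⁻¹) '' (V : Set Y)) ⊂ (Z : Set Y) := by
  rw [iUnion_image_conj_eq_conjugatesOfSet]
  exact ⟨conjugatesOfSet_subset hVZ.le,
    fun hcov => hVZ.not_ge (hY.le_of_subset_conjugatesOfSet hcov)⟩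

/-- **In a finite supersolvable group, a normal subgroup is never covered by the
conjugates of a proper subgroup**: if `V < Z`, `Z` normal in `Y`, then
`⋃ y, y V y⁻¹` is a proper subset of `Z`. -/
theorem supersolvable_conjugates_proper
    (Y : Type*) [Group Y] [Finite Y] (hY : IsSupersolvable Y)
    (V Z : Subgroup Y) (hVZ : V < Z) (hZ : Z.Normal) :
    (⋃ y : Y, (fun v => y * v * y⁻¹) '' (V : Set Y)) ⊂ (Z : Set Y) :=
  supersolvable_conjugates_proper_general Y hY V Z hVZ hZ
end

section
/- Let U = B x C be a finite group with B isomorphic to the symmetric group S_4 and C cyclic. Let V, Z, Y be subgroups of U with V a proper subgroup of Z, Z normal in Y, Y <= U, and suppose Z equals the union over all y in Y of the conjugates y V y^{-1}. Then, denoting by K the Klein four-subgroup of B (the unique normal subgroup of S_4 of order 4), there exist a subgroup C_1 of C and a subgroup K_0 of K of order 2 such that Z = K x C_1 and V = K_0 x C_1. -/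
/-!
By Cauchy's theorem, the order of a group and the order of a subgroup whose conjugates cover it
have the same prime divisors. In the alternating group on four letters, which has no subgroup of
order `6`, a proper such pair can only be a subgroup of order `2` inside the Klein four-group `K`.

For `V < Z` in `S₄ × C`, the even elements of `Z ∩ (S₄ × 1)` are covered by those of `V`, and
properly so: if `z ∈ Z` is outside `V` and `v ∈ V` is conjugate to `z`, then `z v⁻¹` is a
commutator outside `V`. Hence these even parts are `K × 1` and `⟨k⟩ × 1` with `k` an involution,
and the projection `W` of `Y` to `S₄` moves `k` to every involution of `K`. The projection of `V`
normalizes `⟨k⟩`, so it centralizes `k`. Conjugating an element of that projection by `w ∈ W`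
changes it only by a commutator in the abelian group `K`, so it centralizes every `w k w⁻¹`, hence
all of `K`. As `K` is its own centralizer, `V` and then `Z` project into `K`, which forces both to
be direct products.
-/

open scoped commutatorElement

section GroupTheory

variable {G H : Type*} [Group G] [Group H]

theorem normalizer_le_centralizer_of_card_eq_two {P : Subgroup G} (hP : Nat.card P = 2) :
    Subgroup.normalizer (P : Set G) ≤ Subgroup.centralizer (P : Set G) := by
  obtain ⟨k, -, hk⟩ := (Nat.card_eq_two_iff' (1 : P)).1 hP
  intro x hx p hp
  rcases eq_or_ne p 1 with rfl | hp1
  · simp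
  have hconj : x * p * x⁻¹ ∈ P := (Subgroup.mem_normalizer_iff.1 hx p).1 hp
  have hp_eq : (⟨p, hp⟩ : P) = k := hk _ (by simpa [Subtype.ext_iff] using hp1)
  have hconj_eq : (⟨x * p * x⁻¹, hconj⟩ : P) = k := hk _ (by simpa [Subtype.ext_iff] using hp1)
  have hfix : x * p * x⁻¹ = p := congrArg Subtype.val (hconj_eq.trans hp_eq.symm)
  exact (mul_inv_eq_iff_eq_mul.1 hfix).symm

theorem mul_inv_mem_goursatFst {I : Subgroup (G × H)} {x y : G} {h : H} (hx : (x, h) ∈ I)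
    (hy : (y, h) ∈ I) : x * y⁻¹ ∈ I.goursatFst := by
  simpa using mul_mem hx (inv_mem hy)

theorem goursatFst_le_map_fst (I : Subgroup (G × H)) :
    I.goursatFst ≤ I.map (MonoidHom.fst G H) :=
  fun x hx => ⟨(x, 1), Subgroup.mem_goursatFst.1 hx, rfl⟩

theorem eq_goursatFst_prod_goursatSnd {I : Subgroup (G × H)}
    (hI : I.map (MonoidHom.fst G H) ≤ I.goursatFst) : I = I.goursatFst.prod I.goursatSnd := by
  refine le_antisymm (fun ⟨x, h⟩ hxh => ?_) I.goursatFst_prod_goursatSnd_le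
  have hx : x ∈ I.goursatFst := hI ⟨(x, h), hxh, rfl⟩
  refine ⟨hx, Subgroup.mem_goursatSnd.2 ?_⟩
  simpa using mul_mem (inv_mem (Subgroup.mem_goursatFst.1 hx)) hxh

theorem map_fst_le_normalizer_goursatFst (I : Subgroup (G × H)) :
    I.map (MonoidHom.fst G H) ≤ Subgroup.normalizer (I.goursatFst : Set G) := by
  rintro _ ⟨⟨v, h⟩, hv, rfl⟩
  refine Subgroup.mem_normalizer_iff.2 fun x => ?_
  have hconj : (v * x * v⁻¹, (1 : H)) = (v, h) * (x, 1) * (v, h)⁻¹ := by simp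
  rw [Subgroup.mem_goursatFst, Subgroup.mem_goursatFst, MonoidHom.coe_fst, hconj,
    Subgroup.mul_mem_cancel_right I (inv_mem hv), Subgroup.mul_mem_cancel_left I hv]

end GroupTheory

/-- The conjugates of the subgroup `V` by the elements of `Y` cover the subgroup `Z` exactly: their
union is `Z`. -/
def IsConjCover {G : Type*} [Group G] (Y V Z : Subgroup G) : Prop :=
  (Z : Set G) = ⋃ y ∈ (Y : Set G), (fun v => y * v * y⁻¹) '' (V : Set G)

theorem isConjCover_iff {G : Type*} [Group G] {Y V Z : Subgroup G} :
    IsConjCover Y V Z ↔ ∀ z, z ∈ Z ↔ ∃ y ∈ Y, y * z * y⁻¹ ∈ V := by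
  refine Set.ext_iff.trans (forall_congr' fun z => iff_congr Iff.rfl ?_)
  simp only [Set.mem_iUnion, Set.mem_image, SetLike.mem_coe, exists_prop]
  constructor
  · rintro ⟨y, hy, v, hv, rfl⟩
    exact ⟨y⁻¹, inv_mem hy, by simpa [mul_assoc] using hv⟩
  · rintro ⟨y, hy, hz⟩
    exact ⟨y⁻¹, inv_mem hy, _, hz, by simp [mul_assoc]⟩

namespace IsConjCover

section Group

variable {G H : Type*} [Group G] [Group H] {Y V Z : Subgroup G}

theorem exists_conj_mem (h : IsConjCover Y V Z) {z : G} (hz : z ∈ Z) :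
    ∃ y ∈ Y, y * z * y⁻¹ ∈ V :=
  (isConjCover_iff.1 h z).1 hz

theorem conj_mem (h : IsConjCover Y V Z) {y z : G} (hy : y ∈ Y) (hz : z ∈ Z) :
    y * z * y⁻¹ ∈ Z := by
  obtain ⟨w, hw, hwz⟩ := h.exists_conj_mem hz
  exact (isConjCover_iff.1 h _).2 ⟨w * y⁻¹, mul_mem hw (inv_mem hy), by simpa [mul_assoc] using hwz⟩

protected theorem le (h : IsConjCover Y V Z) : V ≤ Z :=
  fun v hv => (isConjCover_iff.1 h v).2 ⟨1, one_mem Y, by simpa using hv⟩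

protected theorem map (h : IsConjCover Y V Z) (f : G →* H) :
    IsConjCover (Y.map f) (V.map f) (Z.map f) := by
  unfold IsConjCover at h ⊢
  simp only [Subgroup.coe_map, h, Set.image_iUnion, Set.biUnion_image, Set.image_image, map_mul,
    map_inv]

protected theorem inf (h : IsConjCover Y V Z) (N : Subgroup G) [hN : N.Normal] :
    IsConjCover Y (V ⊓ N) (Z ⊓ N) := by
  refine isConjCover_iff.2 fun z => ?_
  have hconj (y : G) : y * z * y⁻¹ ∈ N ↔ z ∈ N := hN.mem_comm_iff.trans (by simp)
  simp [Subgroup.mem_inf, isConjCover_iff.1 h z, hconj, ← and_assoc]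

theorem prime_dvd_card (h : IsConjCover Y V Z) [Finite Z] {p : ℕ} (hp : p.Prime)
    (hZ : p ∣ Nat.card Z) : p ∣ Nat.card V := by
  have := Fact.mk hp
  obtain ⟨z, hz⟩ := exists_prime_orderOf_dvd_card' p hZ
  obtain ⟨y, -, hv⟩ := h.exists_conj_mem z.2
  have horder : orderOf (y * z * y⁻¹) = orderOf (z : G) :=
    (SemiconjBy.orderOf_eq y (SemiconjBy.conj_mk y (z : G))).symm
  rw [← hz, ← Subgroup.orderOf_coe, ← horder]
  exact Subgroup.orderOf_dvd_natCard V hv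

end Group

section Prod

variable {G C : Type*} [Group G]

theorem goursatFst [Group C] {Y V Z : Subgroup (G × C)} (h : IsConjCover Y V Z) :
    IsConjCover (Y.map (MonoidHom.fst G C)) V.goursatFst Z.goursatFst := by
  refine isConjCover_iff.2 fun x => ?_
  have hconj (y : G × C) : y * (x, 1) * y⁻¹ = (y.1 * x * y.1⁻¹, 1) := by ext <;> simp
  simp [Subgroup.mem_map, isConjCover_iff.1 h (x, 1), hconj]

variable [CommGroup C] {Y V Z : Subgroup (G × C)}

theorem exists_conj_fst_mem (h : IsConjCover Y V Z) {x : G} {c : C} (hx : (x, c) ∈ Z) :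
    ∃ w ∈ Y.map (MonoidHom.fst G C), (w * x * w⁻¹, c) ∈ V := by
  obtain ⟨y, hy, hv⟩ := h.exists_conj_mem hx
  exact ⟨y.1, ⟨y, hy, rfl⟩, by simpa [Prod.mul_def] using hv⟩

theorem conj_fst_mem (h : IsConjCover Y V Z) {w x : G} {c : C}
    (hw : w ∈ Y.map (MonoidHom.fst G C)) (hx : (x, c) ∈ Z) : (w * x * w⁻¹, c) ∈ Z := by
  obtain ⟨y, hy, rfl⟩ := hw
  simpa [Prod.mul_def] using h.conj_mem hy hx

theorem goursatSnd_eq (h : IsConjCover Y V Z) : V.goursatSnd = Z.goursatSnd := by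
  refine le_antisymm (fun c hc => ?_) fun c hc => ?_
  · exact Subgroup.mem_goursatSnd.2 (h.le (Subgroup.mem_goursatSnd.1 hc))
  · obtain ⟨w, -, hv⟩ := h.exists_conj_fst_mem (Subgroup.mem_goursatSnd.1 hc)
    simpa using hv

theorem goursatFst_inf_lt (h : IsConjCover Y V Z) (hVZ : V < Z) {N : Subgroup G}
    (hN : commutator G ≤ N) : V.goursatFst ⊓ N < Z.goursatFst ⊓ N := by
  obtain ⟨hle, ⟨x, c⟩, hxZ, hxV⟩ := SetLike.lt_iff_le_and_exists.1 hVZ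
  obtain ⟨w, -, hw⟩ := h.exists_conj_fst_mem hxZ
  have hcomm : x * (w * x * w⁻¹)⁻¹ = ⁅x, w⁆ := by simp [commutatorElement_def, mul_assoc]
  have hmem : ⁅x, w⁆ ∈ Z.goursatFst ⊓ N :=
    ⟨hcomm ▸ mul_inv_mem_goursatFst hxZ (hle hw),
      hN (Subgroup.commutator_mem_commutator (Subgroup.mem_top x) (Subgroup.mem_top w))⟩
  refine (inf_le_inf_right N h.goursatFst.le).lt_of_not_ge fun hge => hxV ?_
  have hV : (x * (w * x * w⁻¹)⁻¹, 1) ∈ V := Subgroup.mem_goursatFst.1 (hcomm ▸ (hge hmem).1)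
  simpa [mul_assoc] using mul_mem hV hw

theorem map_fst_le_centralizer (h : IsConjCover Y V Z) {N : Subgroup G}
    (hcomm : commutator G ≤ N) [IsMulCommutative ↥(Z.goursatFst ⊓ N)]
    (hV : Nat.card ↥(V.goursatFst ⊓ N) = 2) :
    V.map (MonoidHom.fst G C) ≤ Subgroup.centralizer (Z.goursatFst ⊓ N : Subgroup G) := by
  have hN := Subgroup.Normal.of_commutator_le G hcomm
  rintro _ ⟨⟨x, c⟩, hx, rfl⟩ k hk
  change k * x = x * k
  obtain ⟨w, hw, hwk⟩ := (h.goursatFst.inf N).exists_conj_mem hk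
  have hxk : Commute x (w * k * w⁻¹) := by
    refine (normalizer_le_centralizer_of_card_eq_two hV ?_ _ hwk).symm
    have hxV := map_fst_le_normalizer_goursatFst V ⟨(x, c), hx, rfl⟩
    exact Subgroup.inf_normalizer_le_normalizer_inf
      ⟨hxV, Subgroup.normalizer_eq_top_iff.2 hN ▸ Subgroup.mem_top x⟩
  have hcommk : Commute ⁅w, x⁆ (w * k * w⁻¹) := by
    refine setLike_mul_comm (s := Z.goursatFst ⊓ N) ⟨?_, ?_⟩ ((h.goursatFst.inf N).le hwk)
    · exact mul_inv_mem_goursatFst (h.conj_fst_mem hw (h.le hx)) (h.le hx)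
    · exact hcomm (Subgroup.commutator_mem_commutator (Subgroup.mem_top w) (Subgroup.mem_top x))
  have hconj : Commute (w * x * w⁻¹) (w * k * w⁻¹) := by
    simpa [commutatorElement_def] using hcommk.mul_left hxk
  exact ((Commute.conj_iff w).1 hconj).symm

theorem map_fst_le (h : IsConjCover Y V Z) {N : Subgroup G} (hcomm : commutator G ≤ N)
    [IsMulCommutative ↥(Z.goursatFst ⊓ N)] (hV : Nat.card ↥(V.goursatFst ⊓ N) = 2)
    (hself : Subgroup.centralizer (Z.goursatFst ⊓ N : Subgroup G) ≤ Z.goursatFst ⊓ N) :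
    Z.map (MonoidHom.fst G C) ≤ Z.goursatFst ⊓ N := by
  have := Subgroup.Normal.of_commutator_le G hcomm
  rintro _ ⟨⟨x, c⟩, hx, rfl⟩
  obtain ⟨w, hw, hv⟩ := h.exists_conj_fst_mem hx
  have hwx := hself (h.map_fst_le_centralizer hcomm hV ⟨_, hv, rfl⟩)
  simpa [mul_assoc] using (h.goursatFst.inf N).conj_mem (inv_mem hw) hwx

theorem exists_eq_prod (h : IsConjCover Y V Z) {N : Subgroup G}
    (hcomm : commutator G ≤ N) [IsMulCommutative ↥(Z.goursatFst ⊓ N)]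
    (hV : Nat.card ↥(V.goursatFst ⊓ N) = 2)
    (hself : Subgroup.centralizer (Z.goursatFst ⊓ N : Subgroup G) ≤ Z.goursatFst ⊓ N) :
    ∃ D : Subgroup C,
      Z = (Z.goursatFst ⊓ N).prod D ∧ V = (V.goursatFst ⊓ N).prod D := by
  have hZN := h.map_fst_le hcomm hV hself
  have hVN : V.map (MonoidHom.fst G C) ≤ N :=
    (Subgroup.map_mono h.le).trans (hZN.trans inf_le_right)
  have hZ := eq_goursatFst_prod_goursatSnd (hZN.trans inf_le_left)
  have hZ_inf : Z.goursatFst ⊓ N = Z.goursatFst :=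
    inf_eq_left.2 ((goursatFst_le_map_fst Z).trans (hZN.trans inf_le_right))
  have hV_inf : V.goursatFst ⊓ N = V.goursatFst :=
    inf_eq_left.2 ((goursatFst_le_map_fst V).trans hVN)
  refine ⟨Z.goursatSnd, by rwa [hZ_inf], ?_⟩
  rw [hV_inf, ← h.goursatSnd_eq]
  refine eq_goursatFst_prod_goursatSnd ?_
  rintro _ ⟨⟨x, c⟩, hx, rfl⟩
  have hc : c ∈ V.goursatSnd := h.goursatSnd_eq ▸ (hZ.le (h.le hx)).2
  simpa using mul_inv_mem_goursatFst hx (Subgroup.mem_goursatSnd.1 hc)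

end Prod

end IsConjCover

section Perm

variable {α : Type*}

theorem centralizer_le_of_isPretransitive (A : Subgroup (Equiv.Perm α)) [IsMulCommutative A]
    [MulAction.IsPretransitive A α] :
    Subgroup.centralizer (A : Set (Equiv.Perm α)) ≤ A := by
  intro g hg
  cases isEmpty_or_nonempty α with
  | inl _ => exact Subsingleton.elim 1 g ▸ one_mem A
  | inr hα =>
    obtain ⟨a⟩ := hα
    obtain ⟨k, hk⟩ := MulAction.exists_smul_eq A a (g a)
    suffices g = k from this ▸ k.2
    ext b
    obtain ⟨l, rfl⟩ := MulAction.exists_smul_eq A a b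
    calc
      g (l.1 a) = l.1 (g a) := (Equiv.congr_fun (hg l l.2) a).symm
      _ = l.1 (k.1 a) := congrArg l.1 hk.symm
      _ = k.1 (l.1 a) := Equiv.congr_fun (setLike_mul_comm l.2 k.2) a

variable [Fintype α] [DecidableEq α]

variable (α) in
/-- The Klein four-group of permutations of `α`, namely `alternatingGroup.kleinFour α` seen in
`Equiv.Perm α`. It has order four only when `α` has four elements. -/
def permKleinFour : Subgroup (Equiv.Perm α) :=
  (alternatingGroup.kleinFour α).map (alternatingGroup α).subtype

theorem card_permKleinFour (hα : Nat.card α = 4) : Nat.card (permKleinFour α) = 4 :=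
  (Subgroup.card_map_of_injective (alternatingGroup α).subtype_injective).trans
    (alternatingGroup.kleinFour_card_of_card_eq_four hα)

theorem normal_permKleinFour (hα : Nat.card α = 4) : (permKleinFour α).Normal :=
  have := alternatingGroup.characteristic_kleinFour hα
  ConjAct.normal_of_characteristic_of_normal

theorem isMulCommutative_permKleinFour (hα : Nat.card α = 4) :
    IsMulCommutative (permKleinFour α) :=
  have := alternatingGroup.kleinFour_isKleinFour hα
  have := IsKleinFour.isMulCommutative (G := alternatingGroup.kleinFour α)
  Subgroup.map_isMulCommutative _ _

theorem isPretransitive_permKleinFour (hα : Nat.card α = 4) :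
    MulAction.IsPretransitive (permKleinFour α) α := by
  have := normal_permKleinFour hα
  refine MulAction.IsQuasiPreprimitive.isPretransitive_of_normal (G := Equiv.Perm α) fun hfix => ?_
  have hbot : permKleinFour α = ⊥ := (Subgroup.eq_bot_iff_forall _).2 fun g hg =>
    Equiv.ext fun a => (hfix ▸ Set.mem_univ a : a ∈ MulAction.fixedPoints _ α) ⟨g, hg⟩
  simpa [hbot] using card_permKleinFour hα

theorem centralizer_permKleinFour_le (hα : Nat.card α = 4) :
    Subgroup.centralizer (permKleinFour α : Set (Equiv.Perm α)) ≤ permKleinFour α :=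
  have := isMulCommutative_permKleinFour hα
  have := isPretransitive_permKleinFour hα
  centralizer_le_of_isPretransitive _

theorem eq_permKleinFour_of_card_eq_four (hα : Nat.card α = 4) {Z : Subgroup (Equiv.Perm α)}
    (hZ : Z ≤ alternatingGroup α) (hcard : Nat.card Z = 4) : Z = permKleinFour α := by
  refine Subgroup.eq_of_le_of_card_ge (fun z hz => ?_) (by rw [card_permKleinFour hα, hcard])
  have horder : orderOf z ∣ 2 ^ 2 := (Subgroup.orderOf_dvd_natCard Z hz).trans hcard.dvd
  have hmem : (⟨z, hZ hz⟩ : alternatingGroup α) ∈ alternatingGroup.kleinFour α := by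
    rw [← SetLike.mem_coe, alternatingGroup.coe_kleinFour_of_card_eq_four hα]
    simpa [Subtype.ext_iff] using
      alternatingGroup.mem_kleinFour_of_order_two_pow hα (hZ hz) horder
  exact ⟨_, hmem, rfl⟩

-- A subgroup of order `6` would have index `2`, hence contain the commutator subgroup, whose order
-- is `4`.
theorem card_ne_six_of_le_alternatingGroup (hα : Nat.card α = 4) {V : Subgroup (Equiv.Perm α)}
    (hV : V ≤ alternatingGroup α) : Nat.card V ≠ 6 := by
  intro hcard
  set W := V.subgroupOf (alternatingGroup α)
  have hW : Nat.card W = 6 := (Nat.card_congr (Subgroup.subgroupOfEquivOfLe hV).toEquiv).trans hcard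
  have hindex : W.index = 2 := by
    have := W.card_mul_index
    rw [hW, alternatingGroup.card_of_card_eq_four hα] at this
    omega
  have := Subgroup.normal_of_index_eq_two hindex
  have := isCyclic_of_prime_card (α := alternatingGroup α ⧸ W) hindex
  have hK : alternatingGroup.kleinFour α ≤ W := by
    rw [alternatingGroup.kleinFour_eq_commutator hα,
      ← Subgroup.Normal.quotient_commutative_iff_commutator_le]
    exact IsCyclic.isMulCommutative
  have hdvd := Subgroup.card_dvd_of_le hK
  rw [hW, alternatingGroup.kleinFour_card_of_card_eq_four hα] at hdvd
  omega

theorem IsConjCover.card_eq_two_and_eq_permKleinFour (hα : Nat.card α = 4)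
    {Y V Z : Subgroup (Equiv.Perm α)} (h : IsConjCover Y V Z) (hVZ : V < Z)
    (hZ : Z ≤ alternatingGroup α) : Nat.card V = 2 ∧ Z = permKleinFour α := by
  have hZ_dvd : Nat.card Z ∣ 12 :=
    alternatingGroup.card_of_card_eq_four hα ▸ Subgroup.card_dvd_of_le hZ
  have hV_dvd : Nat.card V ∣ Nat.card Z := Subgroup.card_dvd_of_le h.le
  have hne : Nat.card V ≠ Nat.card Z := fun heq =>
    hVZ.ne (Subgroup.eq_of_le_of_card_ge h.le heq.ge)
  have hV_six : Nat.card V ≠ 6 := card_ne_six_of_le_alternatingGroup hα (h.le.trans hZ)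
  have h_two := h.prime_dvd_card Nat.prime_two
  have h_three := h.prime_dvd_card Nat.prime_three
  have hcard : Nat.card V = 2 ∧ Nat.card Z = 4 := by
    generalize Nat.card V = v at *
    generalize Nat.card Z = z at *
    have hz : z ≤ 12 := Nat.le_of_dvd (by norm_num) hZ_dvd
    have hv : v ≤ z := Nat.le_of_dvd (Nat.pos_of_dvd_of_pos hZ_dvd (by norm_num)) hV_dvd
    interval_cases z <;> interval_cases v <;> omega
  exact ⟨hcard.1, eq_permKleinFour_of_card_eq_four hα hZ hcard.2⟩

theorem IsConjCover.exists_eq_permKleinFour_prod {C : Type*} [CommGroup C] (hα : Nat.card α = 4)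
    {Y V Z : Subgroup (Equiv.Perm α × C)} (h : IsConjCover Y V Z) (hVZ : V < Z) :
    ∃ (D : Subgroup C) (P : Subgroup (Equiv.Perm α)),
      P ≤ permKleinFour α ∧ Nat.card P = 2 ∧ Z = (permKleinFour α).prod D ∧ V = P.prod D := by
  have hcomm := alternatingGroup.commutator_perm_le (α := α)
  have hcover := h.goursatFst.inf (alternatingGroup α)
  obtain ⟨hV, hZ⟩ :=
    hcover.card_eq_two_and_eq_permKleinFour hα (h.goursatFst_inf_lt hVZ hcomm) inf_le_right
  have : IsMulCommutative ↥(Z.goursatFst ⊓ alternatingGroup α) :=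
    hZ ▸ isMulCommutative_permKleinFour hα
  obtain ⟨D, hZD, hVD⟩ := h.exists_eq_prod hcomm hV (hZ ▸ centralizer_permKleinFour_le hα)
  exact ⟨D, _, hZ ▸ hcover.le, hV, hZ ▸ hZD, hVD⟩

end Perm

theorem klein_structure_of_covered_subgroup_general
    (B : Type*) [Group B] (e : B ≃* Equiv.Perm (Fin 4)) (C : Type*) [CommGroup C]
    (V Z Y : Subgroup (B × C)) (hVZ : V < Z) (hcov : IsConjCover Y V Z) :
    ∃ K : Subgroup B, K.Normal ∧ Nat.card K = 4 ∧
      ∃ (C₁ : Subgroup C) (K₀ : Subgroup B),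
        K₀ ≤ K ∧ Nat.card K₀ = 2 ∧ Z = K.prod C₁ ∧ V = K₀.prod C₁ := by
  let f : B × C →* Equiv.Perm (Fin 4) × C := e.toMonoidHom.prodMap (MonoidHom.id C)
  have hf : Function.Injective f := e.injective.prodMap Function.injective_id
  have hcomap {I : Subgroup (B × C)} {P : Subgroup (Equiv.Perm (Fin 4))} {D : Subgroup C}
      (hI : I.map f = P.prod D) : I = (P.comap e.toMonoidHom).prod D := by
    rw [← Subgroup.comap_map_eq_self_of_injective hf I, hI, MonoidHom.prodMap_comap_prod,
      Subgroup.comap_id]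
  have hcard (P : Subgroup (Equiv.Perm (Fin 4))) :
      Nat.card (P.comap e.toMonoidHom) = Nat.card P :=
    Nat.card_congr (e.toEquiv.subtypeEquiv fun _ => Iff.rfl)
  have hα : Nat.card (Fin 4) = 4 := Nat.card_fin 4
  obtain ⟨D, P, hPK, hP, hZ, hV⟩ := (hcov.map f).exists_eq_permKleinFour_prod hα
    (Subgroup.map_lt_map_iff_of_injective hf |>.2 hVZ)
  exact ⟨_, (normal_permKleinFour hα).comap _, (hcard _).trans (card_permKleinFour hα), D, _,
    Subgroup.comap_mono hPK, (hcard P).trans hP, hcomap hZ, hcomap hV⟩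

/-- **Structure of subgroups of `S₄ × C` covered by conjugates in the product.**
Let `U = B × C` with `B ≅ S₄` and `C` cyclic and finite. Let `V < Z ⊴ Y ≤ U` with
`Z` equal to the union over `y ∈ Y` of the conjugates `y V y⁻¹`. Then, with `K` the
Klein four-subgroup of `B` (i.e. a normal subgroup of order 4), there are a subgroup
`C₁` of `C` and a subgroup `K₀ ≤ K` of order 2 with `Z = K × C₁` and `V = K₀ × C₁`. -/
theorem klein_structure_of_covered_subgroup
    (B : Type*) [Group B] (e : B ≃* Equiv.Perm (Fin 4))
    (C : Type*) [Group C] [Finite C] (hC : IsCyclic C)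
    (V Z Y : Subgroup (B × C))
    (hVZ : V < Z) (hZY : Z ≤ Y)
    (hZnorm : ∀ y ∈ Y, ∀ z ∈ Z, y * z * y⁻¹ ∈ Z)
    (hcov : (Z : Set (B × C)) =
      ⋃ y ∈ (Y : Set (B × C)), (fun v => y * v * y⁻¹) '' (V : Set (B × C))) :
    ∃ K : Subgroup B, K.Normal ∧ Nat.card K = 4 ∧
      ∃ (C₁ : Subgroup C) (K₀ : Subgroup B),
        K₀ ≤ K ∧ Nat.card K₀ = 2 ∧ Z = K.prod C₁ ∧ V = K₀.prod C₁ := by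
  let _ : CommGroup C := hC.commGroup
  exact klein_structure_of_covered_subgroup_general B e C V Z Y hVZ hcov
end

section
/- Let q >= 2 be an integer and let a and b be positive integers. Then gcd(q^a + 1, q^b + 1) equals q^{gcd(a,b)} + 1 if both a/gcd(a,b) and b/gcd(a,b) are odd, and equals gcd(2, q - 1) otherwise. -/
/-!
Put `g = gcd a b` and `x = q ^ g`, so that the two numbers are `x ^ m + 1` and `x ^ n + 1` with `m`
and `n` coprime. Modulo a common divisor, `x ^ 2` has both its `m`-th and its `n`-th power equal to
`1`, hence `x ^ 2 = 1`; since `m` or `n` is odd, `x = -1`. So the common divisors are those of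
`x + 1`, `(-1) ^ m + 1` and `(-1) ^ n + 1`, and the last two are `0` or `2` according to parity.
Modulo `2`, finally, `x + 1` is congruent to `q - 1`.
-/

lemma pow_eq_self_of_odd_of_sq_eq_one {M : Type*} [Monoid M] {x : M} {m : ℕ} (hm : Odd m)
    (hx : x ^ 2 = 1) : x ^ m = x := by
  obtain ⟨k, rfl⟩ := hm
  rw [pow_succ, pow_mul, hx, one_pow, one_mul]

section NegOne

variable {M : Type*} [Monoid M] [HasDistribNeg M] {x : M} {m n : ℕ}

lemma eq_neg_one_of_coprime_of_pow_eq_neg_one (hmn : m.Coprime n) (hm : x ^ m = -1)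
    (hn : x ^ n = -1) : x = -1 := by
  have sq_eq_one : x ^ 2 = 1 := by
    have hm' : (x ^ 2) ^ m = 1 := by rw [pow_right_comm, hm, neg_one_sq]
    have hn' : (x ^ 2) ^ n = 1 := by rw [pow_right_comm, hn, neg_one_sq]
    exact (pow_eq_one_iff_of_coprime hmn).mp ⟨hm', hn'⟩
  rcases m.even_or_odd with hm_even | hm_odd
  · have hn_odd : Odd n :=
      Nat.coprime_two_left.mp (hmn.coprime_dvd_left hm_even.two_dvd)
    rwa [pow_eq_self_of_odd_of_sq_eq_one hn_odd sq_eq_one] at hn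
  · rwa [pow_eq_self_of_odd_of_sq_eq_one hm_odd sq_eq_one] at hm

lemma pow_eq_neg_one_and_pow_eq_neg_one_iff (hmn : m.Coprime n) :
    x ^ m = -1 ∧ x ^ n = -1 ↔ x = -1 ∧ (-1 : M) ^ m = -1 ∧ (-1 : M) ^ n = -1 := by
  constructor
  · rintro ⟨hm, hn⟩
    obtain rfl := eq_neg_one_of_coprime_of_pow_eq_neg_one hmn hm hn
    exact ⟨rfl, hm, hn⟩
  · rintro ⟨rfl, hm, hn⟩
    exact ⟨hm, hn⟩

end NegOne

section Ideal

variable {R : Type*} [CommRing R] {m n : ℕ}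

lemma span_pow_add_one_pow_add_one (x : R) (hmn : m.Coprime n) :
    Ideal.span {x ^ m + 1, x ^ n + 1} = Ideal.span {x + 1, (-1) ^ m + 1, (-1) ^ n + 1} := by
  refine eq_of_forall_ge_iff fun I => ?_
  simpa [Ideal.span_le, Set.insert_subset_iff, ← Ideal.Quotient.eq_zero_iff_mem,
    eq_neg_iff_add_eq_zero] using
    pow_eq_neg_one_and_pow_eq_neg_one_iff (x := Ideal.Quotient.mk I x) hmn

lemma span_pow_add_one_pow_add_one_of_odd (x : R) (hmn : m.Coprime n) (hm : Odd m) (hn : Odd n) :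
    Ideal.span {x ^ m + 1, x ^ n + 1} = Ideal.span {x + 1} := by
  rw [span_pow_add_one_pow_add_one x hmn, hm.neg_one_pow, hn.neg_one_pow]
  simp [Ideal.span_insert]

lemma span_pow_add_one_pow_add_one_of_not_odd (x : R) (hmn : m.Coprime n)
    (h : ¬(Odd m ∧ Odd n)) :
    Ideal.span {x ^ m + 1, x ^ n + 1} = Ideal.span {2, x + 1} := by
  rw [span_pow_add_one_pow_add_one x hmn]
  rcases m.even_or_odd with hm | hm <;> rcases n.even_or_odd with hn | hn
  · simp [hm.neg_one_pow, hn.neg_one_pow, one_add_one_eq_two, Set.pair_comm]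
  · simp [hm.neg_one_pow, hn.neg_one_pow, one_add_one_eq_two, Ideal.span_insert, sup_comm]
  · simp [hm.neg_one_pow, hn.neg_one_pow, one_add_one_eq_two, Ideal.span_insert, sup_comm]
  · exact absurd ⟨hm, hn⟩ h

end Ideal

lemma int_gcd_eq_natAbs_of_span_pair_eq {a b c : ℤ} (h : Ideal.span {a, b} = Ideal.span {c}) :
    Int.gcd a b = c.natAbs := by
  rw [← span_gcd, Ideal.span_singleton_eq_span_singleton] at h
  simpa [← Int.coe_gcd] using Int.natAbs_eq_iff_associated.mpr h

lemma int_gcd_eq_gcd_of_span_pair_eq {a b c d : ℤ}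
    (h : Ideal.span {a, b} = Ideal.span {c, d}) : Int.gcd a b = Int.gcd c d := by
  rw [← span_gcd c d, ← Int.coe_gcd] at h
  simpa using int_gcd_eq_natAbs_of_span_pair_eq h

lemma int_gcd_two_pow_add_one (q : ℤ) {k : ℕ} (hk : k ≠ 0) :
    Int.gcd 2 (q ^ k + 1) = Int.gcd 2 (q - 1) := by
  have parity : q ^ k + 1 ≡ q - 1 [ZMOD 2] := by
    rw [Int.modEq_iff_dvd, ← even_iff_two_dvd]
    simp [hk, parity_simps]
  rw [Int.gcd_comm, ← Int.gcd_emod, parity.eq, Int.gcd_emod, Int.gcd_comm]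

theorem gcd_pow_add_one_pow_add_one_general (q : ℤ) (a b : ℕ) (hab : 0 < Nat.gcd a b) :
    Int.gcd (q ^ a + 1) (q ^ b + 1) =
      if Odd (a / Nat.gcd a b) ∧ Odd (b / Nat.gcd a b) then (q ^ Nat.gcd a b + 1).natAbs
      else Int.gcd 2 (q - 1) := by
  have coprime := Nat.coprime_div_gcd_div_gcd hab
  have pow_a : q ^ a = (q ^ Nat.gcd a b) ^ (a / Nat.gcd a b) := by
    rw [← pow_mul, Nat.mul_div_cancel' (Nat.gcd_dvd_left a b)]
  have pow_b : q ^ b = (q ^ Nat.gcd a b) ^ (b / Nat.gcd a b) := by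
    rw [← pow_mul, Nat.mul_div_cancel' (Nat.gcd_dvd_right a b)]
  rw [pow_a, pow_b]
  split_ifs with h
  · exact int_gcd_eq_natAbs_of_span_pair_eq
      (span_pow_add_one_pow_add_one_of_odd _ coprime h.1 h.2)
  · rw [← int_gcd_two_pow_add_one q hab.ne']
    exact int_gcd_eq_gcd_of_span_pair_eq (span_pow_add_one_pow_add_one_of_not_odd _ coprime h)

/-- **gcd of `q^a + 1` and `q^b + 1`.** For `q ≥ 2` and positive `a`, `b`:
`gcd (q^a + 1) (q^b + 1) = q^(gcd a b) + 1` when both `a / gcd a b` and `b / gcd a b`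
are odd, and `gcd (q^a + 1) (q^b + 1) = gcd 2 (q - 1)` otherwise. -/
theorem gcd_pow_add_one_pow_add_one (q a b : ℕ) (hq : 2 ≤ q) (ha : 0 < a) (hb : 0 < b) :
    Nat.gcd (q ^ a + 1) (q ^ b + 1) =
      if Odd (a / Nat.gcd a b) ∧ Odd (b / Nat.gcd a b) then q ^ Nat.gcd a b + 1
      else Nat.gcd 2 (q - 1) := by
  have h := gcd_pow_add_one_pow_add_one_general q a b (Nat.gcd_pos_of_pos_left b ha)
  rw [← Nat.cast_pred (Nat.zero_lt_of_lt hq)] at h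
  exact_mod_cast h
end

section
/- Let q >= 2 be an integer and let a and b be positive integers. Then gcd(q^a + 1, q^b - 1) equals q^{gcd(a,b)} + 1 if b/gcd(a,b) is even, and equals gcd(2, q - 1) otherwise. -/
/-!
An integer `d` divides both `q ^ a + 1` and `q ^ b - 1` iff `q ^ a = -1` and `q ^ b = 1` modulo `d`.
Put `x = q ^ gcd a b`, `m = a / gcd a b` and `n = b / gcd a b`: this says `x ^ m = -1`, `x ^ n = 1`.
If `n` is even, then `m` is odd and the condition is `(-x) ^ m = (-x) ^ n = 1`, that is, `-x = 1`.
If `n` is odd, then `-1 = (x ^ m) ^ n = (x ^ n) ^ m = 1`, so the condition becomes `2 = 0` and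
`x ^ m = x ^ n = 1`, that is, `2 = 0` and `x = 1`; finally `x - 1` has the same parity as `q - 1`.
-/

section HasDistribNeg

variable {M : Type*} [Monoid M] [HasDistribNeg M] {x : M} {m n : ℕ}

theorem pow_eq_neg_one_and_pow_eq_one_iff_of_odd_of_even (hm : Odd m) (hn : Even n) :
    x ^ m = -1 ∧ x ^ n = 1 ↔ x ^ m.gcd n = -1 := by
  have hgcd : Odd (m.gcd n) := hm.of_dvd_nat (Nat.gcd_dvd_left m n)
  calc x ^ m = -1 ∧ x ^ n = 1
      ↔ (-x) ^ m = 1 ∧ (-x) ^ n = 1 := by rw [hm.neg_pow, hn.neg_pow, neg_eq_iff_eq_neg]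
    _ ↔ (-x) ^ m.gcd n = 1 := pow_gcd_eq_one.symm
    _ ↔ x ^ m.gcd n = -1 := by rw [hgcd.neg_pow, neg_eq_iff_eq_neg]

theorem neg_one_eq_one_of_pow_eq_neg_one_of_pow_eq_one (hn : Odd n)
    (hxm : x ^ m = -1) (hxn : x ^ n = 1) : (-1 : M) = 1 :=
  calc (-1 : M) = (x ^ m) ^ n := by rw [hxm, hn.neg_one_pow]
    _ = (x ^ n) ^ m := pow_right_comm x m n
    _ = 1 := by rw [hxn, one_pow]

theorem pow_eq_neg_one_and_pow_eq_one_iff_of_odd (hn : Odd n) :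
    x ^ m = -1 ∧ x ^ n = 1 ↔ (-1 : M) = 1 ∧ x ^ m.gcd n = 1 := by
  rw [pow_gcd_eq_one]
  constructor
  · rintro ⟨hxm, hxn⟩
    have hneg := neg_one_eq_one_of_pow_eq_neg_one_of_pow_eq_one hn hxm hxn
    exact ⟨hneg, hxm.trans hneg, hxn⟩
  · rintro ⟨hneg, hxm, hxn⟩
    exact ⟨hxm.trans hneg.symm, hxn⟩

end HasDistribNeg

theorem dvd_int_gcd_iff_intCast_zmod_eq_zero {d : ℕ} {x y : ℤ} :
    d ∣ Int.gcd x y ↔ (x : ZMod d) = 0 ∧ (y : ZMod d) = 0 := by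
  rw [Int.dvd_gcd_iff, ZMod.intCast_zmod_eq_zero_iff_dvd, ZMod.intCast_zmod_eq_zero_iff_dvd]

theorem dvd_int_gcd_pow_add_one_pow_sub_one_iff {d : ℕ} {x : ℤ} {m n : ℕ} :
    d ∣ Int.gcd (x ^ m + 1) (x ^ n - 1) ↔ (x : ZMod d) ^ m = -1 ∧ (x : ZMod d) ^ n = 1 := by
  rw [dvd_int_gcd_iff_intCast_zmod_eq_zero]
  push_cast
  rw [add_eq_zero_iff_eq_neg, sub_eq_zero]

theorem int_gcd_pow_add_one_pow_sub_one_of_odd_of_even (x : ℤ) {m n : ℕ}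
    (hm : Odd m) (hn : Even n) :
    Int.gcd (x ^ m + 1) (x ^ n - 1) = (x ^ m.gcd n + 1).natAbs := by
  refine Nat.dvd_left_iff_eq.mp fun d => ?_
  rw [dvd_int_gcd_pow_add_one_pow_sub_one_iff,
    pow_eq_neg_one_and_pow_eq_one_iff_of_odd_of_even hm hn, ← Int.natCast_dvd,
    ← ZMod.intCast_zmod_eq_zero_iff_dvd]
  push_cast
  rw [add_eq_zero_iff_eq_neg]

theorem int_gcd_pow_add_one_pow_sub_one_of_odd (x : ℤ) (m : ℕ) {n : ℕ} (hn : Odd n) :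
    Int.gcd (x ^ m + 1) (x ^ n - 1) = Int.gcd 2 (x ^ m.gcd n - 1) := by
  refine Nat.dvd_left_iff_eq.mp fun d => ?_
  rw [dvd_int_gcd_pow_add_one_pow_sub_one_iff, pow_eq_neg_one_and_pow_eq_one_iff_of_odd hn,
    dvd_int_gcd_iff_intCast_zmod_eq_zero]
  push_cast
  rw [sub_eq_zero, neg_eq_iff_add_eq_zero, one_add_one_eq_two]

theorem int_gcd_two_pow_sub_one (q : ℤ) {k : ℕ} (hk : k ≠ 0) :
    Int.gcd 2 (q ^ k - 1) = Int.gcd 2 (q - 1) := by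
  have hdvd : 2 ∣ q ^ k - q := (Int.even_sub.mpr (Int.even_pow' hk)).two_dvd
  rw [← Int.gcd_sub_right_right_of_dvd _ hdvd, sub_sub_sub_cancel_left]

theorem gcd_pow_add_one_pow_sub_one_general (q : ℤ) {a b : ℕ} (hab : Nat.gcd a b ≠ 0) :
    Int.gcd (q ^ a + 1) (q ^ b - 1) =
      if Even (b / Nat.gcd a b) then (q ^ Nat.gcd a b + 1).natAbs
      else Int.gcd 2 (q - 1) := by
  obtain ⟨g, m, n, hg, hmn, rfl, rfl⟩ := Nat.exists_coprime' (Nat.pos_of_ne_zero hab)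
  have hgcd : Nat.gcd (m * g) (n * g) = g := by rw [Nat.gcd_mul_right, hmn.gcd_eq_one, one_mul]
  rw [hgcd, Nat.mul_div_cancel n hg, pow_mul', pow_mul']
  split_ifs with hn
  · have hm : Odd m := (hmn.symm.of_dvd_left hn.two_dvd).odd_of_left
    rw [int_gcd_pow_add_one_pow_sub_one_of_odd_of_even _ hm hn, hmn.gcd_eq_one, pow_one]
  · rw [int_gcd_pow_add_one_pow_sub_one_of_odd _ m (Nat.not_even_iff_odd.mp hn), hmn.gcd_eq_one,
      pow_one, int_gcd_two_pow_sub_one q hg.ne']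

/-- **gcd of `q^a + 1` and `q^b - 1`.** For `q ≥ 2` and positive `a`, `b`:
`gcd (q^a + 1) (q^b - 1) = q^(gcd a b) + 1` when `b / gcd a b` is even, and
`gcd (q^a + 1) (q^b - 1) = gcd 2 (q - 1)` otherwise. -/
theorem gcd_pow_add_one_pow_sub_one (q a b : ℕ) (hq : 2 ≤ q) (ha : 0 < a) (hb : 0 < b) :
    Nat.gcd (q ^ a + 1) (q ^ b - 1) =
      if Even (b / Nat.gcd a b) then q ^ Nat.gcd a b + 1
      else Nat.gcd 2 (q - 1) := by
  have h := gcd_pow_add_one_pow_sub_one_general q (Nat.gcd_ne_zero_left (n := b) ha.ne')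
  have hq_pos : 0 < q := zero_lt_two.trans_le hq
  rw [← Nat.cast_pow q b, ← Nat.cast_pred (Nat.pow_pos hq_pos), ← Nat.cast_pred hq_pos] at h
  exact_mod_cast h
end

section
/- Let n >= 2, let q be a prime power and F_q a finite field with q elements. If x is an element of SL_n(F_q) whose order equals (q^n - 1)/(q - 1), then x acts irreducibly on F_q^n; that is, the only F_q-subspaces of F_q^n invariant under x are 0 and F_q^n. -/
/-!
Let `T` act on `V = F ^ n`, `|F| = q`, with order prime to the characteristic, so that `V` is a
semisimple `F[T]`-module. On a simple summand with `a` elements, `F[T]` acts through a field with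
`a` elements, so `T ^ (a - 1)` is trivial there; moreover `a - 1` is a multiple of `q - 1`. By
induction, `T ^ (c * (q - 1))` is trivial on `V` for some `c > 0` with `c * (q - 1) ≤ |V| - 1`: if
`c` works for `W` and `d` for `W'`, then `c * d` works for `W ⊕ W'`, as the factor `q - 1` is only
paid for once. When `V = W ⊕ W'` is reducible this even gives
`(q - 1) * orderOf T ≤ (c * (q - 1)) * (d * (q - 1)) ≤ (|W| - 1) * (|W'| - 1) < |V| - 1`.
-/

open Module Polynomial

section MulAction

variable {R M : Type*} [Monoid R] [MulAction R M] {r : R}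

theorem pow_smul_eq_self_of_dvd {m : M} {a b : ℕ} (hab : a ∣ b) (h : r ^ a • m = m) :
    r ^ b • m = m := by
  obtain ⟨c, rfl⟩ := hab
  rw [pow_mul]
  exact pow_mem (S := MulAction.stabilizerSubmonoid R m) h c

theorem isSMulRegular_of_pow_smul_eq_self {k : ℕ} (hk : 0 < k) (h : ∀ m : M, r ^ k • m = m) :
    IsSMulRegular M r :=
  (IsSMulRegular.pow_iff hk).mp fun x y hxy ↦ by simpa only [h] using hxy

end MulAction

section Semiring

variable {R M : Type*} [Semiring R] [AddCommMonoid M] [Module R M] {r : R}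

theorem notMem_annihilator_of_isSMulRegular [Nontrivial M] (hr : IsSMulRegular M r) :
    r ∉ annihilator R M := fun h ↦ by
  obtain ⟨m, hm⟩ := exists_ne (0 : M)
  exact hm (hr ((mem_annihilator.mp h m).trans (smul_zero r).symm))

theorem smul_eq_self_of_codisjoint {N N' : Submodule R M} (h : Codisjoint N N')
    (hN : ∀ x : N, r • x = x) (hN' : ∀ x : N', r • x = x) (m : M) : r • m = m := by
  obtain ⟨x, y, hx, hy, rfl⟩ := Submodule.codisjoint_iff_exists_add_eq.mp h m
  have hrx : r • x = x := congrArg Subtype.val (hN ⟨x, hx⟩)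
  have hry : r • y = y := congrArg Subtype.val (hN' ⟨y, hy⟩)
  rw [smul_add, hrx, hry]

end Semiring

section Ring

variable {R M : Type*} [Ring R] [AddCommGroup M] [Module R M]

theorem exists_isCompl_nontrivial_of_not_isSimpleModule [Nontrivial M] [IsSemisimpleModule R M]
    (h : ¬IsSimpleModule R M) :
    ∃ N N' : Submodule R M, IsCompl N N' ∧ Nontrivial N ∧ Nontrivial N' := by
  simp only [Submodule.nontrivial_iff_ne_bot]
  obtain ⟨N, hbot, htop⟩ : ∃ N : Submodule R M, N ≠ ⊥ ∧ N ≠ ⊤ := by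
    by_contra! hall
    exact h ((isSimpleModule_iff R M).mpr ⟨fun N ↦ or_iff_not_imp_left.mpr (hall N)⟩)
  obtain ⟨N', hc⟩ := exists_isCompl N
  exact ⟨N, N', hc, hbot, fun h ↦ htop (eq_top_of_isCompl_bot (h ▸ hc))⟩

theorem card_mul_card_of_isCompl {N N' : Submodule R M} (h : IsCompl N N') :
    Nat.card N * Nat.card N' = Nat.card M := by
  rw [← Nat.card_prod, Nat.card_congr (N.prodEquivOfIsCompl N' h).toEquiv]

theorem card_lt_card_of_isCompl [Finite M] {N N' : Submodule R M} [Nontrivial N']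
    (h : IsCompl N N') : Nat.card N < Nat.card M :=
  card_mul_card_of_isCompl h ▸ lt_mul_of_one_lt_right Nat.card_pos Finite.one_lt_card

theorem exists_pow_smul_eq_self_of_isCompl {N N' : Submodule R M} (h : IsCompl N N') {r : R}
    {d : ℕ} (hd : 0 < d)
    (hN : ∃ c > 0, c * d < Nat.card N ∧ ∀ x : N, r ^ (c * d) • x = x)
    (hN' : ∃ c > 0, c * d < Nat.card N' ∧ ∀ x : N', r ^ (c * d) • x = x) :
    ∃ c > 0, c * d * d + 1 < Nat.card M ∧ ∀ m : M, r ^ (c * d) • m = m := by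
  obtain ⟨a, ha, haN, hra⟩ := hN
  obtain ⟨b, hb, hbN', hrb⟩ := hN'
  refine ⟨a * b, Nat.mul_pos ha hb, ?_, smul_eq_self_of_codisjoint h.codisjoint
    (fun x ↦ pow_smul_eq_self_of_dvd ⟨b, by ring⟩ (hra x))
    (fun x ↦ pow_smul_eq_self_of_dvd ⟨a, by ring⟩ (hrb x))⟩
  have had : 0 < a * d := Nat.mul_pos ha hd
  calc a * b * d * d + 1 < (a * d + 1) * (b * d + 1) := by linarith [Nat.zero_le (b * d)]
    _ ≤ Nat.card N * Nat.card N' := Nat.mul_le_mul haN hbN'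
    _ = Nat.card M := card_mul_card_of_isCompl h

end Ring

theorem pow_card_sub_one_smul {R M : Type*} [CommRing R] [AddCommGroup M] [Module R M]
    [IsSimpleModule R M] [Finite M] {r : R} (hr : r ∉ annihilator R M) (m : M) :
    r ^ (Nat.card M - 1) • m = m := by
  obtain ⟨I, _, ⟨e⟩⟩ := isSimpleModule_iff_quot_maximal.mp ‹IsSimpleModule R M›
  let _ : Field (R ⧸ I) := Ideal.Quotient.field I
  have : Finite (R ⧸ I) := .of_equiv M e.toEquiv
  have := Fintype.ofFinite (R ⧸ I)
  have hmk : Ideal.Quotient.mk I r ≠ 0 := fun h ↦ hr <| by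
    rwa [e.annihilator_eq, Ideal.annihilator_quotient, ← Ideal.Quotient.eq_zero_iff_mem]
  have hpow : Ideal.Quotient.mk I (r ^ (Nat.card M - 1)) = 1 := by
    rw [Nat.card_congr e.toEquiv, Nat.card_eq_fintype_card, map_pow,
      FiniteField.pow_card_sub_one_eq_one _ hmk]
  apply e.injective
  rw [map_smul, Algebra.smul_def, Ideal.Quotient.algebraMap_eq, hpow, one_mul]

theorem card_sub_one_dvd_card_sub_one (K V : Type*) [DivisionRing K] [AddCommGroup V] [Module K V]
    [Module.Finite K V] : Nat.card K - 1 ∣ Nat.card V - 1 := by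
  rw [natCard_eq_pow_finrank (K := K) (V := V)]
  exact Nat.sub_one_dvd_pow_sub_one _ _

section Algebra

variable (F : Type*) {R M : Type*} [Field F] [Finite F] [CommRing R] [Algebra F R]
  [AddCommGroup M] [Module R M] [Module F M] [IsScalarTower F R M]
  [Finite M] [Nontrivial M] [IsSemisimpleModule R M]

theorem exists_pow_smul_eq_self {r : R} (hr : IsSMulRegular M r) :
    ∃ c > 0, c * (Nat.card F - 1) < Nat.card M ∧ ∀ m : M, r ^ (c * (Nat.card F - 1)) • m = m := by
  induction hn : Nat.card M using Nat.strong_induction_on generalizing M with | _ n ih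
  subst hn
  by_cases hsimple : IsSimpleModule R M
  · obtain ⟨c, hc⟩ := card_sub_one_dvd_card_sub_one F M
    have hM : 1 < Nat.card M := Finite.one_lt_card
    have hc0 : c ≠ 0 := by rintro rfl; omega
    rw [mul_comm] at hc
    refine ⟨c, hc0.pos, by omega, fun m ↦ ?_⟩
    rw [← hc, pow_card_sub_one_smul (notMem_annihilator_of_isSMulRegular hr)]
  · obtain ⟨N, N', hc, _, _⟩ := exists_isCompl_nontrivial_of_not_isSimpleModule hsimple
    have hF : 0 < Nat.card F - 1 := Nat.sub_pos_of_lt Finite.one_lt_card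
    obtain ⟨c, hc0, hlt, hfix⟩ := exists_pow_smul_eq_self_of_isCompl hc hF
      (ih _ (card_lt_card_of_isCompl hc) (hr.submodule N r) rfl)
      (ih _ (card_lt_card_of_isCompl hc.symm) (hr.submodule N' r) rfl)
    have hle := Nat.le_mul_of_pos_right (c * (Nat.card F - 1)) hF
    exact ⟨c, hc0, by omega, hfix⟩

theorem isSimpleModule_of_card_le_of_pow_smul_eq_self {r : R} (hr : IsSMulRegular M r)
    (h : ∀ k > 0, (∀ m : M, r ^ k • m = m) → Nat.card M ≤ k * (Nat.card F - 1) + 1) :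
    IsSimpleModule R M := by
  by_contra hsimple
  obtain ⟨N, N', hc, _, _⟩ := exists_isCompl_nontrivial_of_not_isSimpleModule hsimple
  have hF : 0 < Nat.card F - 1 := Nat.sub_pos_of_lt Finite.one_lt_card
  obtain ⟨c, hc0, hlt, hfix⟩ := exists_pow_smul_eq_self_of_isCompl hc hF
    (exists_pow_smul_eq_self F (hr.submodule N r)) (exists_pow_smul_eq_self F (hr.submodule N' r))
  exact (h _ (Nat.mul_pos hc0 hF) hfix).not_gt hlt

end Algebra

section End

variable {R V : Type*} [CommRing R] [AddCommGroup V] [Module R V] {T : End R V}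

theorem forall_X_pow_smul_aeval'_eq_self_iff {k : ℕ} :
    (∀ m : AEval' T, (X : R[X]) ^ k • m = m) ↔ T ^ k = 1 := by
  simp only [(AEval'.of T).surjective.forall, AEval'.X_pow_smul_of, EmbeddingLike.apply_eq_iff_eq,
    LinearMap.ext_iff, End.smul_def, End.one_apply]

theorem eq_bot_or_eq_top_of_isSimpleModule_aeval' [IsSimpleModule R[X] (AEval' T)]
    {W : Submodule R V} (hW : W ∈ T.invtSubmodule) : W = ⊥ ∨ W = ⊤ := by
  have : IsSimpleOrder T.invtSubmodule := (AEval.mapSubmodule R V T).isSimpleOrder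
  exact (eq_bot_or_eq_top (⟨W, hW⟩ : T.invtSubmodule)).imp (congrArg Subtype.val)
    (congrArg Subtype.val)

end End

section FiniteField

variable {F V : Type*} [Field F] [AddCommGroup V] [Module F V] {T : End F V}

theorem isSemisimple_of_orderOf_cast_ne_zero (hT : (orderOf T : F) ≠ 0) : T.IsSemisimple :=
  End.isSemisimple_of_squarefree_aeval_eq_zero (X_pow_sub_one_separable_iff.mpr hT).squarefree
    (by simp only [map_sub, map_pow, aeval_X, map_one, pow_orderOf_eq_one, sub_self])

theorem SL_singer_order_irreducible_general [Finite F] [FiniteDimensional F V]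
    (hT : (orderOf T : F) ≠ 0)
    (hcard : Nat.card F ^ finrank F V - 1 ≤ orderOf T * (Nat.card F - 1))
    {W : Submodule F V} (hW : W ∈ T.invtSubmodule) : W = ⊥ ∨ W = ⊤ := by
  cases subsingleton_or_nontrivial V
  · exact .inl (Subsingleton.elim _ _)
  have : Finite V := finite_of_finite F
  have : Finite (AEval' T) := .of_equiv V (AEval'.of T).toEquiv
  have : Nontrivial (AEval' T) := (AEval'.of T).symm.toEquiv.nontrivial
  have : IsSemisimpleModule F[X] (AEval' T) := isSemisimple_of_orderOf_cast_ne_zero hT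
  have hpos : 0 < orderOf T := Nat.pos_of_ne_zero fun h ↦ hT (by rw [h, Nat.cast_zero])
  have hreg : IsSMulRegular (AEval' T) (X : F[X]) := isSMulRegular_of_pow_smul_eq_self hpos
    (forall_X_pow_smul_aeval'_eq_self_iff.mpr (pow_orderOf_eq_one T))
  have : IsSimpleModule F[X] (AEval' T) :=
    isSimpleModule_of_card_le_of_pow_smul_eq_self F hreg fun k hk hfix ↦ by
      have hle := orderOf_le_of_pow_eq_one hk (forall_X_pow_smul_aeval'_eq_self_iff.mp hfix)
      rw [Nat.card_congr (AEval'.of T).symm.toEquiv, natCard_eq_pow_finrank (K := F) (V := V)]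
      exact Nat.sub_le_iff_le_add.mp (hcard.trans (Nat.mul_le_mul_right _ hle))
  exact eq_bot_or_eq_top_of_isSimpleModule_aeval' hW

end FiniteField

theorem orderOf_toLin'_coe {n R : Type*} [DecidableEq n] [Fintype n] [CommRing R]
    (x : Matrix.SpecialLinearGroup n R) :
    orderOf (Matrix.toLin' (x : Matrix n n R)) = orderOf x := by
  rw [← Matrix.SpecialLinearGroup.toLin'_to_linearMap]
  exact orderOf_injective
    (LinearEquiv.automorphismGroup.toLinearMapMonoidHom.comp Matrix.SpecialLinearGroup.toLin')
    (LinearEquiv.toLinearMap_injective.comp Matrix.SpecialLinearGroup.toLin'_injective) x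

theorem card_pow_sub_one_div_cast_ne_zero (F : Type*) [Field F] [Fintype F] {n : ℕ} (hn : n ≠ 0) :
    (((Fintype.card F ^ n - 1) / (Fintype.card F - 1) : ℕ) : F) ≠ 0 := by
  rw [← Nat.geomSum_eq Fintype.one_lt_card, Nat.cast_sum]
  simp only [Nat.cast_pow, FiniteField.cast_card_eq_zero, zero_geom_sum, hn, if_false]
  exact one_ne_zero

/-- **Elements of `SL_n(q)` of Singer order act irreducibly.** If `x ∈ SL_n(F_q)`
(`n ≥ 2`) has order `(q^n - 1)/(q - 1)`, then the only subspaces of `F_q^n` invariant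
under `x` are `0` and the whole space. -/
theorem SL_singer_order_irreducible (n : ℕ) (hn : 2 ≤ n) (q : ℕ) (hq : IsPrimePow q)
    (F : Type*) [Field F] [Fintype F] (hF : Fintype.card F = q)
    (x : Matrix.SpecialLinearGroup (Fin n) F)
    (hx : orderOf x = (q ^ n - 1) / (q - 1)) :
    ∀ W : Submodule F (Fin n → F),
      (∀ v ∈ W, (x : Matrix (Fin n) (Fin n) F).mulVec v ∈ W) → W = ⊥ ∨ W = ⊤ := by
  subst hF
  rw [← orderOf_toLin'_coe] at hx
  refine fun W hW ↦ SL_singer_order_irreducible_general (T := Matrix.toLin' x.1)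
    (hx ▸ card_pow_sub_one_div_cast_ne_zero F (by omega)) ?_ hW
  rw [hx, finrank_fin_fun, Nat.card_eq_fintype_card,
    Nat.div_mul_cancel (Nat.sub_one_dvd_pow_sub_one _ n)]
end

section
/- Let m >= 1, let q be a prime power and F_q a finite field with q elements. Then the symplectic group Sp_{2m}(F_q) contains an element of order q^m + 1, and every element of Sp_{2m}(F_q) of order q^m + 1 acts irreducibly on F_q^{2m}; that is, the only F_q-subspaces of F_q^{2m} invariant under such an element are 0 and F_q^{2m}. -/
/-!
Existence: `SL₂(F_Q)` contains an element of order `Q + 1`, namely multiplication by an element of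
norm `1` on `F_{Q²}`. For `Q = q ^ m` the plane `F_Q²` with the form `Tr (x₁ y₀ - x₀ y₁)` is a
symplectic `F_q`-space of dimension `2 m` on which `SL₂(F_Q)` acts faithfully by isometries.

Irreducibility: let `T` be an endomorphism of order `q ^ m + 1` of a space of dimension at most
`2 m`. Its minimal polynomial `f` is squarefree, and its order is the least common multiple of the
orders `n` of the roots of the irreducible factors of `f`. If such a factor has degree `d`, then
`n` divides `q ^ m + 1` and `q ^ d - 1`, which forces `n ∣ 2` or `n ∣ q ^ h + 1` for some
`h ≤ d / 2` such that `m / h` is an odd integer. All these `q ^ h + 1` share a factor greater than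
`1`: the factor `2` for odd `q`, and `q ^ (2 ^ k) + 1` with `2 ^ k` the exact power of `2` dividing
`m` for even `q`. So if `f` had several factors, of total degree at most `2 m`, the least common
multiple would fall short of `q ^ m + 1`. Hence `f` is irreducible of degree `2 m`.
-/

open Polynomial Module

lemma sq_lt_mul_of_two_mul_succ_le {x y z A B : ℕ} (hz : 2 * (z + 1) ≤ (x + 1) * (y + 1))
    (hx : x ≠ 0) (hy : y ≠ 0) (hxA : x ^ 2 ≤ A) (hyB : y ^ 2 ≤ B) (hA : 1 < A) (hB : 1 < B) :
    z ^ 2 < A * B := by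
  obtain rfl | hx2 : x = 1 ∨ 2 ≤ x := by omega
  · have hzy : z ^ 2 ≤ y ^ 2 := Nat.pow_le_pow_left (by omega) 2
    nlinarith only [hzy, hyB, hA, hB]
  obtain rfl | hy2 : y = 1 ∨ 2 ≤ y := by omega
  · have hzx : z ^ 2 ≤ x ^ 2 := Nat.pow_le_pow_left (by omega) 2
    nlinarith only [hzx, hxA, hA, hB]
  · -- `2 * x * y - (x + 1) * (y + 1) = (x - 1) * (y - 1) - 2 ≥ -1`
    have hzxy : z < x * y := by nlinarith
    calc z ^ 2 < (x * y) ^ 2 := Nat.pow_lt_pow_left hzxy two_ne_zero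
      _ = x ^ 2 * y ^ 2 := mul_pow x y 2
      _ ≤ A * B := Nat.mul_le_mul hxA hyB

/-- The natural number `n` has a multiple `l + 1` with `l ^ 2 < A` which is either `1` or divisible
by `c`. It bounds the multiplicative order `n` of a polynomial of degree `d` over `F_q`, with `A`
close to `q ^ d`; a common factor `c > 1` of the multiples is what makes such bounds combine well
under least common multiples. -/
def HasSmallMultiple (c A n : ℕ) : Prop :=
  ∃ l, n ∣ l + 1 ∧ l ^ 2 < A ∧ (l = 0 ∨ c ∣ l + 1)

namespace HasSmallMultiple

variable {c A B n k : ℕ}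

lemma mono (hAB : A ≤ B) : HasSmallMultiple c A n → HasSmallMultiple c B n :=
  fun ⟨l, hn, hl, hc⟩ ↦ ⟨l, hn, hl.trans_le hAB, hc⟩

lemma sq_lt (h : HasSmallMultiple c A (n + 1)) : n ^ 2 < A := by
  obtain ⟨l, hn, hl, -⟩ := h
  have hnl : n ≤ l := Nat.le_of_succ_le_succ (Nat.le_of_dvd l.succ_pos hn)
  exact (Nat.pow_le_pow_left hnl 2).trans_lt hl

lemma lcm (hc : 1 < c) (hA : 1 < A) (hB : 1 < B)
    (hn : HasSmallMultiple c (A + 1) n) (hk : HasSmallMultiple c (B + 1) k) :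
    HasSmallMultiple c (A * B) (n.lcm k) := by
  obtain ⟨x, hnx, hxA, hcx⟩ := hn
  obtain ⟨y, hky, hyB, hcy⟩ := hk
  rcases hcx with rfl | hcx
  · exact ⟨y, Nat.lcm_dvd (hnx.trans (one_dvd _)) hky, by nlinarith, hcy⟩
  rcases hcy with rfl | hcy
  · exact ⟨x, Nat.lcm_dvd hnx (hky.trans (one_dvd _)), by nlinarith, .inr hcx⟩
  obtain ⟨z, hz⟩ : ∃ z, (x + 1).lcm (y + 1) = z + 1 :=
    Nat.exists_eq_succ_of_ne_zero (Nat.lcm_ne_zero x.succ_ne_zero y.succ_ne_zero)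
  have hz_dvd : n.lcm k ∣ z + 1 :=
    hz ▸ Nat.lcm_dvd (hnx.trans (Nat.dvd_lcm_left _ _)) (hky.trans (Nat.dvd_lcm_right _ _))
  have hgcd : 2 ≤ (x + 1).gcd (y + 1) :=
    hc.trans_le (Nat.le_of_dvd (Nat.gcd_pos_of_pos_left _ x.succ_pos) (Nat.dvd_gcd hcx hcy))
  have hz_le : 2 * (z + 1) ≤ (x + 1) * (y + 1) := by
    rw [← Nat.gcd_mul_lcm (x + 1) (y + 1), hz]
    exact Nat.mul_le_mul_right _ hgcd
  have hx : x ≠ 0 := by rintro rfl; exact hc.not_ge (Nat.le_of_dvd one_pos hcx)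
  have hy : y ≠ 0 := by rintro rfl; exact hc.not_ge (Nat.le_of_dvd one_pos hcy)
  exact ⟨z, hz_dvd, sq_lt_mul_of_two_mul_succ_le hz_le hx hy (Nat.le_of_lt_succ hxA)
    (Nat.le_of_lt_succ hyB) hA hB, .inr (hz ▸ hcx.trans (Nat.dvd_lcm_left _ _))⟩

end HasSmallMultiple

lemma neg_one_eq_one_or_exists_pow_eq_neg_one {R : Type*} [Ring R] {u : R} {m d : ℕ}
    (hm : u ^ m = -1) (hd : u ^ d = 1) :
    (-1 : R) = 1 ∨ ∃ h j, Odd j ∧ h * j = m ∧ 2 * h ∣ d ∧ u ^ h = -1 := by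
  obtain ⟨j, hj⟩ : orderOf u ∣ 2 * m :=
    orderOf_dvd_of_pow_eq_one (by rw [mul_comm, pow_mul, hm, neg_one_sq])
  rcases Nat.even_or_odd' j with ⟨i, rfl | rfl⟩
  · have hmi : m = orderOf u * i := by linarith
    exact .inl (by rw [← hm, hmi, pow_mul, pow_orderOf_eq_one, one_pow])
  · obtain ⟨h, hh⟩ : 2 ∣ orderOf u :=
      Nat.Coprime.dvd_of_dvd_mul_right (by simp) (Dvd.intro m hj)
    have hhm : h * (2 * i + 1) = m := by rw [hh] at hj; linarith
    refine .inr ⟨h, 2 * i + 1, odd_two_mul_add_one i, hhm, hh ▸ orderOf_dvd_of_pow_eq_one hd, ?_⟩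
    calc u ^ h = u ^ h * (u ^ orderOf u) ^ i := by rw [pow_orderOf_eq_one, one_pow, mul_one]
      _ = u ^ m := by rw [hh, ← pow_mul, ← pow_add, ← hhm]; congr 1; ring
      _ = -1 := hm

lemma pow_two_pow_add_one_dvd_pow_add_one {q k b h j : ℕ} (hb : Odd b) (hj : Odd j)
    (hhj : h * j = 2 ^ k * b) : q ^ 2 ^ k + 1 ∣ q ^ h + 1 := by
  obtain ⟨i, rfl⟩ : 2 ^ k ∣ h :=
    (hj.coprime_two_left.pow_left k).dvd_of_dvd_mul_right (hhj ▸ dvd_mul_right _ _)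
  have hi : i * j = b := Nat.eq_of_mul_eq_mul_left (Nat.two_pow_pos k) (by rw [← mul_assoc, hhj])
  have hi_odd : Odd i := (Nat.odd_mul.mp (hi ▸ hb)).1
  simpa only [one_pow, pow_mul] using hi_odd.nat_add_dvd_pow_add_pow (q ^ 2 ^ k) 1

lemma exists_common_dvd_pow_add_one {q m : ℕ} (hq : q ≠ 0) (hm : m ≠ 0) :
    ∃ c, 1 < c ∧ (∀ n, n ∣ 2 → n ∣ q ^ m + 1 → n = 1 ∨ c ∣ n) ∧
      ∀ h j, Odd j → h * j = m → c ∣ q ^ h + 1 := by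
  rcases Nat.even_or_odd q with hq_even | hq_odd
  · obtain ⟨k, b, hb, hkb⟩ := Nat.exists_eq_two_pow_mul_odd hm
    refine ⟨q ^ 2 ^ k + 1, ?_, fun n hn2 hnm ↦ .inl ?_, fun h j hj hhj ↦
      pow_two_pow_add_one_dvd_pow_add_one hb hj (hhj.trans hkb)⟩
    · have := Nat.pow_pos (n := 2 ^ k) (Nat.pos_of_ne_zero hq)
      omega
    · have hqm : Odd (q ^ m + 1) := (hq_even.pow_of_ne_zero hm).add_one
      exact Nat.eq_one_of_dvd_coprimes hqm.coprime_two_left hn2 hnm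
  · refine ⟨2, one_lt_two, fun n hn2 _ ↦ ?_, fun h _ _ _ ↦ hq_odd.pow.add_one.two_dvd⟩
    exact ((Nat.dvd_prime Nat.prime_two).mp hn2).imp_right (·.symm.dvd)

lemma exists_hasSmallMultiple_of_dvd_pow_add_one {q m : ℕ} (hq : q ≠ 0) (hm : m ≠ 0) :
    ∃ c, 1 < c ∧ ∀ n d, d ≠ 0 → n ∣ q ^ m + 1 → q ^ d ≡ 1 [MOD n] →
      HasSmallMultiple c (q ^ d + 1) n := by
  obtain ⟨c, hc, hc_two, hc_dvd⟩ := exists_common_dvd_pow_add_one hq hm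
  refine ⟨c, hc, fun n d hd hnm hnd ↦ ?_⟩
  have hqm : (q : ZMod n) ^ m = -1 := by
    rw [eq_neg_iff_add_eq_zero]
    exact_mod_cast (ZMod.natCast_eq_zero_iff _ _).mpr hnm
  have hqd : (q : ZMod n) ^ d = 1 := by exact_mod_cast (ZMod.natCast_eq_natCast_iff _ _ _).mpr hnd
  rcases neg_one_eq_one_or_exists_pow_eq_neg_one hqm hqd with hneg | ⟨h, j, hj, hhj, hhd, hqh⟩
  · have hn2 : n ∣ 2 := by
      rw [neg_eq_iff_add_eq_zero, one_add_one_eq_two] at hneg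
      rw [← ZMod.natCast_eq_zero_iff]
      exact_mod_cast hneg
    rcases hc_two n hn2 hnm with rfl | hcn
    · exact ⟨0, by simp, by simp, .inl rfl⟩
    · exact ⟨1, hn2, by simpa using Nat.pow_pos (Nat.pos_of_ne_zero hq), .inr (hcn.trans hn2)⟩
  · have hn_dvd : n ∣ q ^ h + 1 := by
      rw [← ZMod.natCast_eq_zero_iff]
      push_cast
      rw [hqh, neg_add_cancel]
    have hle : (q ^ h) ^ 2 ≤ q ^ d := by
      rw [← pow_mul, mul_comm]
      exact Nat.pow_le_pow_right (Nat.pos_of_ne_zero hq) (Nat.le_of_dvd (Nat.pos_of_ne_zero hd) hhd)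
    exact ⟨q ^ h, hn_dvd, Nat.lt_succ_of_le hle, .inr (hc_dvd h j hj hhj)⟩

lemma orderOf_root_dvd_iff {R : Type*} [CommRing R] {f : R[X]} {n : ℕ} :
    orderOf (AdjoinRoot.root f) ∣ n ↔ f ∣ X ^ n - 1 := by
  rw [orderOf_dvd_iff_pow_eq_one, ← AdjoinRoot.mk_eq_zero, map_sub, map_pow, map_one,
    AdjoinRoot.mk_X, sub_eq_zero]

lemma orderOf_root_mul {R : Type*} [CommRing R] {f g : R[X]} (hfg : IsCoprime f g) :
    orderOf (AdjoinRoot.root (f * g)) =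
      (orderOf (AdjoinRoot.root f)).lcm (orderOf (AdjoinRoot.root g)) := by
  refine Nat.dvd_right_iff_eq.mp fun n ↦ ?_
  rw [Nat.lcm_dvd_iff, orderOf_root_dvd_iff, orderOf_root_dvd_iff, orderOf_root_dvd_iff]
  exact ⟨fun h ↦ ⟨dvd_of_mul_right_dvd h, dvd_of_mul_left_dvd h⟩, fun h ↦ hfg.mul_dvd h.1 h.2⟩

lemma orderOf_root_minpoly {F A : Type*} [Field F] [Ring A] [Algebra F A] (a : A) :
    orderOf (AdjoinRoot.root (minpoly F a)) = orderOf a := by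
  refine Nat.dvd_right_iff_eq.mp fun n ↦ ?_
  rw [orderOf_root_dvd_iff, minpoly.dvd_iff, orderOf_dvd_iff_pow_eq_one, map_sub, map_pow, aeval_X,
    map_one, sub_eq_zero]

lemma card_pow_natDegree_modEq_one {F : Type*} [Field F] [Finite F] {f : F[X]}
    (hf : Irreducible f) {N : ℕ} (hN : N ≠ 0) (hfN : f ∣ X ^ N - 1) :
    Nat.card F ^ f.natDegree ≡ 1 [MOD orderOf (AdjoinRoot.root f)] := by
  have hroot : IsOfFinOrder (AdjoinRoot.root f) :=
    orderOf_ne_zero_iff.mp (ne_zero_of_dvd_ne_zero hN (orderOf_root_dvd_iff.mpr hfN))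
  rw [← hroot.pow_eq_pow_iff_modEq, pow_one, ← sub_eq_zero, ← AdjoinRoot.mk_X, ← map_pow, ← map_sub,
    AdjoinRoot.mk_eq_zero]
  exact hf.natDegree_dvd_iff_dvd_X_pow_card_pow_sub_X.mp dvd_rfl

lemma exists_hasSmallMultiple_orderOf_root (F : Type*) [Field F] [Finite F] {m : ℕ} (hm : m ≠ 0) :
    ∃ c, 1 < c ∧ ∀ p : F[X], Irreducible p → p ∣ X ^ (Nat.card F ^ m + 1) - 1 →
      HasSmallMultiple c (Nat.card F ^ p.natDegree + 1) (orderOf (AdjoinRoot.root p)) := by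
  have hF : Nat.card F ≠ 0 := Finite.card_pos.ne'
  obtain ⟨c, hc, hcn⟩ := exists_hasSmallMultiple_of_dvd_pow_add_one hF hm
  exact ⟨c, hc, fun p hp hpN ↦ hcn _ _ hp.natDegree_pos.ne' (orderOf_root_dvd_iff.mpr hpN)
    (card_pow_natDegree_modEq_one hp (Nat.succ_ne_zero _) hpN)⟩

lemma hasSmallMultiple_orderOf_root_of_not_irreducible {F : Type*} [Field F] {c Q : ℕ} (hc : 1 < c)
    (hQ : 1 < Q) {f : F[X]} (hf : Squarefree f)
    (hprime : ∀ p, Irreducible p → p ∣ f →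
      HasSmallMultiple c (Q ^ p.natDegree + 1) (orderOf (AdjoinRoot.root p)))
    (hred : ¬Irreducible f) :
    HasSmallMultiple c (Q ^ f.natDegree) (orderOf (AdjoinRoot.root f)) := by
  induction f using WfDvdMonoid.induction_on_irreducible with
  | zero => exact absurd hf not_squarefree_zero
  | unit u hu => exact ⟨0, orderOf_root_dvd_iff.mpr hu.dvd, by positivity, .inl rfl⟩
  | mul a p ha hp ih =>
    obtain ⟨hcop, -, hasq⟩ := squarefree_mul_iff.mp hf
    have ha_unit : ¬IsUnit a := fun h ↦ hred ((irreducible_mul_isUnit h).mpr hp)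
    have ha_deg : a.natDegree ≠ 0 := fun h ↦
      ha_unit (isUnit_iff_degree_eq_zero.mpr ((degree_eq_iff_natDegree_eq ha).mpr h))
    have ha_small : HasSmallMultiple c (Q ^ a.natDegree + 1) (orderOf (AdjoinRoot.root a)) := by
      by_cases hirr : Irreducible a
      · exact hprime a hirr (dvd_mul_left a p)
      · exact (ih hasq (fun r hr hra ↦ hprime r hr (hra.mul_left p)) hirr).mono (Nat.le_succ _)
    rw [orderOf_root_mul hcop.isCoprime, natDegree_mul hp.ne_zero ha, pow_add]
    exact (hprime p hp (dvd_mul_right p a)).lcm hc (Nat.one_lt_pow hp.natDegree_pos.ne' hQ)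
      (Nat.one_lt_pow ha_deg hQ) ha_small

theorem irreducible_minpoly_of_orderOf_eq_card_pow_add_one {F A : Type*} [Field F] [Finite F]
    [Ring A] [Algebra F A] {m : ℕ} (hm : m ≠ 0) {a : A} (ha : orderOf a = Nat.card F ^ m + 1)
    (hdeg : (minpoly F a).natDegree ≤ 2 * m) :
    Irreducible (minpoly F a) ∧ 2 * m ≤ (minpoly F a).natDegree := by
  have hF : 1 < Nat.card F := Finite.one_lt_card
  have hdvd : minpoly F a ∣ X ^ (Nat.card F ^ m + 1) - 1 := by
    rw [← orderOf_root_dvd_iff, orderOf_root_minpoly, ha]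
  have hsqf : Squarefree (minpoly F a) := by
    refine (X_pow_sub_one_separable_iff.mpr ?_).squarefree.squarefree_of_dvd hdvd
    have : (Nat.card F : F) = 0 := by
      have := Fintype.ofFinite F
      rw [Nat.card_eq_fintype_card, FiniteField.cast_card_eq_zero]
    simp [this, hm]
  obtain ⟨c, hc, hprime⟩ := exists_hasSmallMultiple_orderOf_root F hm
  have hirr : Irreducible (minpoly F a) := by
    by_contra hred
    have hsmall := hasSmallMultiple_orderOf_root_of_not_irreducible hc hF hsqf
      (fun p hp hpf ↦ hprime p hp (hpf.trans hdvd)) hred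
    rw [orderOf_root_minpoly, ha] at hsmall
    have hlt := hsmall.sq_lt
    rw [← pow_mul, mul_comm, Nat.pow_lt_pow_iff_right hF] at hlt
    exact hdeg.not_gt hlt
  have hsmall := hprime _ hirr hdvd
  rw [orderOf_root_minpoly, ha] at hsmall
  have hle := Nat.le_of_lt_succ hsmall.sq_lt
  rw [← pow_mul, mul_comm, Nat.pow_le_pow_iff_right hF] at hle
  exact ⟨hirr, hle⟩

section InvariantSubspace

lemma aeval_restrict_apply {R M : Type*} [CommSemiring R] [AddCommMonoid M] [Module R M]
    {T : End R M} {W : Submodule R M} (hW : ∀ v ∈ W, T v ∈ W) (p : R[X]) (w : W) :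
    (aeval (T.restrict hW) p w : M) = aeval T p w := by
  induction p using Polynomial.induction_on' with
  | add p r hp hr => simp only [map_add, LinearMap.add_apply, Submodule.coe_add, hp, hr]
  | monomial n a =>
    rw [aeval_monomial, aeval_monomial, Module.End.mul_apply, Module.End.mul_apply,
      Module.algebraMap_end_apply, Module.algebraMap_end_apply, Submodule.coe_smul,
      Module.End.pow_restrict, LinearMap.restrict_apply]

variable {K V : Type*} [Field K] [AddCommGroup V] [Module K V] {T : End K V} {W : Submodule K V}

lemma minpoly_restrict_dvd (hW : ∀ v ∈ W, T v ∈ W) : minpoly K (T.restrict hW) ∣ minpoly K T := by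
  refine minpoly.dvd K _ (LinearMap.ext fun w ↦ Subtype.ext ?_)
  rw [aeval_restrict_apply, minpoly.aeval]
  rfl

variable [FiniteDimensional K V]

variable (T) in
lemma natDegree_minpoly_le_finrank : (minpoly K T).natDegree ≤ finrank K V :=
  T.charpoly_natDegree ▸
    natDegree_le_of_dvd (LinearMap.minpoly_dvd_charpoly T) T.charpoly_monic.ne_zero

lemma eq_bot_or_eq_top_of_irreducible_minpoly (hT : Irreducible (minpoly K T))
    (hdim : finrank K V ≤ (minpoly K T).natDegree) (hW : ∀ v ∈ W, T v ∈ W) :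
    W = ⊥ ∨ W = ⊤ := by
  refine or_iff_not_imp_left.mpr fun hbot ↦ ?_
  have : Nontrivial W := Submodule.nontrivial_iff_ne_bot.mpr hbot
  have hassoc : Associated (minpoly K T) (minpoly K (T.restrict hW)) :=
    (hT.dvd_iff.mp (minpoly_restrict_dvd hW)).resolve_left (minpoly.not_isUnit K _)
  have hdeg := natDegree_eq_of_degree_eq (degree_eq_degree_of_associated hassoc)
  exact Submodule.eq_top_of_finrank_eq <| W.finrank_le.antisymm <|
    hdim.trans (hdeg ▸ natDegree_minpoly_le_finrank _)

theorem eq_bot_or_eq_top_of_orderOf_eq_card_pow_add_one [Finite K] {m : ℕ} (hm : m ≠ 0)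
    (hV : finrank K V ≤ 2 * m) (hT : orderOf T = Nat.card K ^ m + 1) (hW : ∀ v ∈ W, T v ∈ W) :
    W = ⊥ ∨ W = ⊤ := by
  obtain ⟨hirr, hdeg⟩ := irreducible_minpoly_of_orderOf_eq_card_pow_add_one hm hT
    ((natDegree_minpoly_le_finrank T).trans hV)
  exact eq_bot_or_eq_top_of_irreducible_minpoly hirr (hV.trans hdeg) hW

end InvariantSubspace

lemma orderOf_restrictScalars (R : Type*) {S M : Type*} [Semiring R] [Semiring S]
    [AddCommMonoid M] [Module R M] [Module S M] [LinearMap.CompatibleSMul M M R S] (T : End S M) :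
    orderOf (T.restrictScalars R : End R M) = orderOf T :=
  orderOf_injective (⟨⟨LinearMap.restrictScalars R, rfl⟩, fun _ _ ↦ rfl⟩ : End S M →* End R M)
    (LinearMap.restrictScalars_injective R) T

lemma orderOf_toMatrix {R M n : Type*} [CommSemiring R] [AddCommMonoid M] [Module R M] [Fintype n]
    [DecidableEq n] (b : Basis n R M) (T : End R M) :
    orderOf (LinearMap.toMatrix b b T) = orderOf T :=
  orderOf_injective (LinearMap.toMatrixAlgEquiv b : End R M →* Matrix n n R)
    (LinearMap.toMatrixAlgEquiv b).injective T

lemma orderOf_toLin' {R n : Type*} [CommSemiring R] [Fintype n] [DecidableEq n]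
    (M : Matrix n n R) : orderOf (Matrix.toLin' M) = orderOf M := by
  rw [← orderOf_toMatrix (Pi.basisFun R n), LinearMap.toMatrix_eq_toMatrix',
    LinearMap.toMatrix'_toLin']

lemma orderOf_leftMulMatrix {R S n : Type*} [CommRing R] [Ring S] [Algebra R S] [Fintype n]
    [DecidableEq n] (b : Basis n R S) (z : S) : orderOf (Algebra.leftMulMatrix b z) = orderOf z :=
  orderOf_injective (Algebra.leftMulMatrix b : S →* Matrix n n R)
    (Algebra.leftMulMatrix_injective b) z

section TraceForm

open Matrix
open LinearMap (BilinForm)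

lemma toMatrix_mem_symplecticGroup {R V ι : Type*} [CommRing R] [AddCommGroup V] [Module R V]
    [Fintype ι] [DecidableEq ι] {B : BilinForm R V} {b : Basis (ι ⊕ ι) R V}
    (hb : LinearMap.BilinForm.toMatrix b B = J ι R) {T : End R V} (hT : B.comp T T = B) :
    LinearMap.toMatrix b b T ∈ symplecticGroup ι R := by
  rw [SymplecticGroup.mem_iff', ← hb, ← LinearMap.BilinForm.toMatrix_comp, hT]

variable {F L ι : Type*} [Field F] [Field L] [Algebra F L]

variable (F L) in
/-- The alternating `F`-bilinear form `Tr_{L/F} (x₁ y₀ - x₀ y₁)` on the plane `L²`, for which the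
matrices of `SL₂(L)` are isometries. -/
noncomputable def traceDetForm : BilinForm F (Fin 2 → L) :=
  (Algebra.traceForm F L).comp (LinearMap.proj 1) (LinearMap.proj 0) -
    (Algebra.traceForm F L).comp (LinearMap.proj 0) (LinearMap.proj 1)

lemma traceDetForm_apply (x y : Fin 2 → L) :
    traceDetForm F L x y = Algebra.trace F L (x 1 * y 0 - x 0 * y 1) := by
  simp [traceDetForm]

lemma traceDetForm_mulVec {A : Matrix (Fin 2) (Fin 2) L} (hA : A.det = 1) (x y : Fin 2 → L) :
    traceDetForm F L (A *ᵥ x) (A *ᵥ y) = traceDetForm F L x y := by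
  rw [det_fin_two] at hA
  simp only [traceDetForm_apply, mulVec, dotProduct, Fin.sum_univ_two]
  congr 1
  linear_combination (x 1 * y 0 - x 0 * y 1) * hA

variable [FiniteDimensional F L] [Algebra.IsSeparable F L] [Fintype ι] [DecidableEq ι]

/-- The `F`-basis of `L²` formed by a basis of the first axis and its trace-dual basis of the second
axis; it is a symplectic basis for `traceDetForm`. -/
noncomputable def traceDualBasis (b : Basis ι F L) : Basis (ι ⊕ ι) F (Fin 2 → L) :=
  (b.prod ((Algebra.traceForm F L).dualBasis (traceForm_nondegenerate F L) b)).map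
    (LinearEquiv.finTwoArrow F L).symm

lemma toMatrix_traceDetForm (b : Basis ι F L) :
    LinearMap.BilinForm.toMatrix (traceDualBasis b) (traceDetForm F L) = J ι F := by
  have htr : ∀ i j, Algebra.trace F L (b i * (Algebra.traceForm F L).dualBasis
      (traceForm_nondegenerate F L) b j) = if i = j then 1 else 0 :=
    LinearMap.BilinForm.apply_dualBasis_right (traceForm_nondegenerate F L)
      (Algebra.traceForm_isSymm F) b
  ext (i | i) (j | j) <;>
    simp [traceDualBasis, traceDetForm_apply, J, htr, Matrix.one_apply, eq_comm,
      LinearMap.BilinForm.toMatrix_apply, mul_comm]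

lemma exists_symplecticGroup_orderOf_eq_of_det_eq_one (b : Basis ι F L)
    {A : Matrix (Fin 2) (Fin 2) L} (hA : A.det = 1) :
    ∃ x : symplecticGroup ι F, orderOf x = orderOf A := by
  let T : End F (Fin 2 → L) := A.toLin'.restrictScalars F
  have hT : (traceDetForm F L).comp T T = traceDetForm F L :=
    LinearMap.BilinForm.ext fun x y ↦ traceDetForm_mulVec hA x y
  refine ⟨⟨_, toMatrix_mem_symplecticGroup (toMatrix_traceDetForm b) hT⟩, ?_⟩
  rw [← orderOf_submonoid, orderOf_toMatrix, orderOf_restrictScalars, orderOf_toLin']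

end TraceForm

lemma exists_orderOf_eq_card_add_one {L K : Type*} [Field L] [Finite L] [Field K] [Algebra L K]
    (hK : finrank L K = 2) :
    ∃ z : K, orderOf z = Nat.card L + 1 ∧ Algebra.norm L z = 1 := by
  have : FiniteDimensional L K := FiniteDimensional.of_finrank_pos (by omega)
  have : Finite K := Module.finite_of_finite L
  have hL : 1 < Nat.card L := Finite.one_lt_card
  have hcard : Nat.card K - 1 = (Nat.card L + 1) * (Nat.card L - 1) := by
    rw [Module.natCard_eq_pow_finrank (K := L), hK, ← Nat.sq_sub_sq, one_pow]
  obtain ⟨g, hg⟩ := IsCyclic.exists_ofOrder_eq_natCard (α := Kˣ)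
  rw [Nat.card_units, hcard] at hg
  have hz : orderOf (g ^ (Nat.card L - 1) : K) = Nat.card L + 1 := by
    rw [← Units.val_pow_eq_pow_val, orderOf_units,
      orderOf_pow_of_dvd (by omega) (hg ▸ dvd_mul_left _ _), hg, Nat.mul_div_cancel _ (by omega)]
  refine ⟨g ^ (Nat.card L - 1), hz, (algebraMap L K).injective ?_⟩
  rw [FiniteField.algebraMap_norm_eq_pow, hcard, Nat.mul_div_cancel _ (by omega), ← hz,
    pow_orderOf_eq_one, map_one]

lemma exists_det_eq_one_orderOf_eq_card_add_one (L : Type*) [Field L] [Finite L] :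
    ∃ A : Matrix (Fin 2) (Fin 2) L, A.det = 1 ∧ orderOf A = Nat.card L + 1 := by
  obtain ⟨p, hp⟩ := CharP.exists L
  have : Fact p.Prime := ⟨CharP.char_is_prime L p⟩
  have hK : finrank L (FiniteField.Extension L p 2) = 2 := FiniteField.finrank_extension L p 2
  obtain ⟨z, hz, hnorm⟩ := exists_orderOf_eq_card_add_one hK
  let b := finBasisOfFinrankEq L (FiniteField.Extension L p 2) hK
  refine ⟨Algebra.leftMulMatrix b z, ?_, (orderOf_leftMulMatrix b z).trans hz⟩
  rw [← Algebra.norm_eq_matrix_det, hnorm]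

theorem exists_orderOf_symplecticGroup_eq_card_pow_add_one (F : Type*) [Field F] [Finite F] {m : ℕ}
    (hm : m ≠ 0) : ∃ x : Matrix.symplecticGroup (Fin m) F, orderOf x = Nat.card F ^ m + 1 := by
  obtain ⟨p, hp⟩ := CharP.exists F
  have : Fact p.Prime := ⟨CharP.char_is_prime F p⟩
  have : NeZero m := ⟨hm⟩
  let L := FiniteField.Extension F p m
  obtain ⟨A, hdet, hA⟩ := exists_det_eq_one_orderOf_eq_card_add_one L
  let b := finBasisOfFinrankEq F L (FiniteField.finrank_extension F p m)
  obtain ⟨x, hx⟩ := exists_symplecticGroup_orderOf_eq_of_det_eq_one b hdet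
  exact ⟨x, by rw [hx, hA, FiniteField.natCard_extension]⟩

theorem Sp_singer_exists_and_irreducible_general (F : Type*) [Field F] [Finite F] {m : ℕ}
    (hm : m ≠ 0) :
    (∃ x : Matrix.symplecticGroup (Fin m) F, orderOf x = Nat.card F ^ m + 1) ∧
      ∀ M : Matrix (Fin m ⊕ Fin m) (Fin m ⊕ Fin m) F, orderOf M = Nat.card F ^ m + 1 →
        ∀ W : Submodule F (Fin m ⊕ Fin m → F), (∀ v ∈ W, M.mulVec v ∈ W) → W = ⊥ ∨ W = ⊤ := by
  refine ⟨exists_orderOf_symplecticGroup_eq_card_pow_add_one F hm, fun M hM W hW ↦ ?_⟩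
  have hdim : finrank F (Fin m ⊕ Fin m → F) ≤ 2 * m := by simp [two_mul]
  exact eq_bot_or_eq_top_of_orderOf_eq_card_pow_add_one hm hdim ((orderOf_toLin' M).trans hM) hW

/-- **Singer cycles in symplectic groups.** For every `m ≥ 1` and finite field `F_q`,
`Sp_{2m}(F_q)` contains an element of order `q^m + 1`, and every element of
`Sp_{2m}(F_q)` of order `q^m + 1` acts irreducibly on `F_q^{2m}`. -/
theorem Sp_singer_exists_and_irreducible (m : ℕ) (hm : 1 ≤ m) (q : ℕ) (hq : IsPrimePow q)
    (F : Type*) [Field F] [Fintype F] (hF : Fintype.card F = q) :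
    (∃ x : Matrix.symplecticGroup (Fin m) F, orderOf x = q ^ m + 1) ∧
      ∀ x : Matrix.symplecticGroup (Fin m) F, orderOf x = q ^ m + 1 →
        ∀ W : Submodule F (Fin m ⊕ Fin m → F),
          (∀ v ∈ W,
            (x : Matrix (Fin m ⊕ Fin m) (Fin m ⊕ Fin m) F).mulVec v ∈ W) →
          W = ⊥ ∨ W = ⊤ := by
  rw [← hF, ← Nat.card_eq_fintype_card]
  exact (Sp_singer_exists_and_irreducible_general F (Nat.one_le_iff_ne_zero.mp hm)).imp_right
    fun hirr x hx ↦ hirr x ((orderOf_submonoid x).trans hx)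
end
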